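/- Every 3-connected nonbipartite graph of minimum degree at least 5 and order at least 7 contains 5 cycles of consecutive lengths. -/

import Mathlib

open SimpleGraph

/-- `G` is `k`-connected: more than `k` vertices, and deleting any set of fewer than
`k` vertices leaves a connected graph. -/
def KConnected {V : Type*} (G : SimpleGraph V) (k : ℕ) : Prop :=
  k < Nat.card V ∧ ∀ S : Set V, S.Finite → S.ncard < k → (G.induce Sᶜ).Connected

/-- `G + xy`: the graph `G` with the edge `xy` added (equal to `G` if already present). -/
def AddEdge {V : Type*} (G : SimpleGraph V) (x y : V) : SimpleGraph V :=
  G ⊔ SimpleGraph.fromEdgeSet {s(x, y)}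

/-- `G` has a cycle of length `n`. -/
def HasCycleLength {V : Type*} (G : SimpleGraph V) (n : ℕ) : Prop :=
  ∃ (v : V) (c : G.Walk v v), c.IsCycle ∧ c.length = n

/-- `G` contains `k` cycles of consecutive lengths. -/
def HasConsecCycles {V : Type*} (G : SimpleGraph V) (k : ℕ) : Prop :=
  ∃ m : ℕ, ∀ i < k, HasCycleLength G (m + i)

/-!
Call a set of integers of *span* `t` if it contains a sequence with gaps at most two that stretches
over at least `t`. If the orders of the paths through a set `D` between the neighbourhoods of `x`
and `y` have span `t`, and outside `D` there are paths from `x` to `y` of `j + 1` consecutive orders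
with `1 ≤ j`, then joining them gives `t + j + 1` cycles of consecutive lengths.

Spans are found in a connected set `D` with two sets `A` and `B` of roots. Count for each vertex its
degree in `D` plus one for each set of roots that contains it. If joining a new vertex to `A ∪ B`
leaves no cut vertex in `D`, then the `A`–`B` paths have span one when these counts are at least
three, up to one exceptional vertex, and span three when they are at least four and at least five
at the vertices of triangles. The second fact comes from a minimal counterexample, from which one
removes the roots in `A`, or a few vertices near the roots, to reach a smaller instance.

If `G` has a triangle, extend it to a clique or to a book, a clique with two further vertices
adjacent to all of it; these contain many paths of consecutive orders, and a component of the rest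
provides the span that is still needed. Otherwise choose an odd cycle `C` of length `2 s + 1` and a
connected set `D` disjoint from `C` with `D` as large as possible. Then `C` and `D` cover `G`, and
vertices at distance `s` on `C` are joined by arcs of two consecutive orders, so that a span of
three in `D`, or in an end block of `D`, suffices. A vertex `w` of `D` whose degree in `D` is too
small for this has two neighbours at distance two on `C`. They give paths of four consecutive
orders from `w` to the opposite vertex of `C`, and a span of one in `D` without `w` suffices.
-/

namespace ConsecCycles

/-! ### Paths, cuts and degrees in vertex sets -/

section

/-- `S` contains a sequence of integers with gaps at most two that stretches over at least `t`. -/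
def HasSpan (S : Set ℕ) (t : ℕ) : Prop :=
  ∃ a b, a + t ≤ b ∧ a ∈ S ∧ b ∈ S ∧ ∀ i, a ≤ i → i < b → i ∈ S ∨ i + 1 ∈ S

namespace HasSpan

variable {S R T : Set ℕ} {s t n : ℕ}

theorem mono (h : HasSpan S t) (hST : S ⊆ T) : HasSpan T t := by
  obtain ⟨a, b, hab, ha, hb, h⟩ := h
  exact ⟨a, b, hab, hST ha, hST hb, fun i h1 h2 => (h i h1 h2).imp (@hST _) (@hST _)⟩

theorem of_le (h : HasSpan S s) (hts : t ≤ s) : HasSpan S t := by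
  obtain ⟨a, b, hab, h⟩ := h
  exact ⟨a, b, by omega, h⟩

theorem add (hS : HasSpan S s) (hR : HasSpan R t) (h : ∀ n ∈ S, ∀ m ∈ R, n + m ∈ T) :
    HasSpan T (s + t) := by
  obtain ⟨a, b, hab, ha, hb, hS⟩ := hS
  obtain ⟨c, d, hcd, hc, hd, hR⟩ := hR
  refine ⟨a + c, b + d, by omega, h _ ha _ hc, h _ hb _ hd, fun i hi hi' => ?_⟩
  rcases Nat.lt_or_ge i (b + c) with hlt | hge
  · refine (hS (i - c) (by omega) (by omega)).imp (fun hi => ?_) fun hi => ?_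
    · convert h _ hi _ hc using 1; omega
    · convert h _ hi _ hc using 1; omega
  · refine (hR (i - b) (by omega) (by omega)).imp (fun hi => ?_) fun hi => ?_
    · convert h _ hb _ hi using 1; omega
    · convert h _ hb _ hi using 1; omega

theorem singleton (k : ℕ) : HasSpan {k} 0 := ⟨k, k, le_rfl, rfl, rfl, by omega⟩

theorem shift (k : ℕ) (hS : HasSpan S t) (h : ∀ n ∈ S, n + k ∈ T) : HasSpan T t :=
  hS.add (singleton k) (by rintro n hn _ rfl; exact h n hn)

theorem of_mem_of_succ_mem (h₀ : n ∈ S) (h₁ : n + 1 ∈ S) : HasSpan S 1 :=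
  ⟨n, n + 1, le_rfl, h₀, h₁, fun i _ _ => .inl (by obtain rfl : i = n := by omega
                                                   exact h₀)⟩

theorem of_mem_of_add_two_mem (h₀ : n ∈ S) (h₂ : n + 2 ∈ S) : HasSpan S 2 :=
  ⟨n, n + 2, le_rfl, h₀, h₂, fun i _ _ => by
    obtain rfl | rfl : i = n ∨ i = n + 1 := by omega
    exacts [.inl h₀, .inr h₂]⟩

end HasSpan

variable {V : Type*} {G : SimpleGraph V}

/-- `PathIn G D u v n`: there is a path of `G` from `u` to `v` all of whose vertices lie in `D`.
Here `n` counts vertices, not edges, so that orders add up when paths are concatenated along an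
edge, and the order of a path is the length of the cycle it closes up to. -/
def PathIn (G : SimpleGraph V) (D : Finset V) (u v : V) (n : ℕ) : Prop :=
  ∃ p : G.Walk u v, p.IsPath ∧ p.length + 1 = n ∧ ∀ x ∈ p.support, x ∈ D

namespace PathIn

variable {D E F : Finset V} {u v w x : V} {n m : ℕ}

theorem mono (h : PathIn G D u v n) (hDE : D ⊆ E) : PathIn G E u v n := by
  obtain ⟨p, hp, hn, hD⟩ := h
  exact ⟨p, hp, hn, fun x hx => hDE (hD x hx)⟩

theorem left_mem (h : PathIn G D u v n) : u ∈ D := by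
  obtain ⟨p, -, -, hD⟩ := h
  exact hD u p.start_mem_support

theorem pos (h : PathIn G D u v n) : 1 ≤ n := by
  obtain ⟨p, -, hn, -⟩ := h
  omega

theorem single (hu : u ∈ D) : PathIn G D u u 1 := ⟨.nil, .nil, rfl, by simpa using hu⟩

theorem symm (h : PathIn G D u v n) : PathIn G D v u n := by
  obtain ⟨p, hp, hn, hD⟩ := h
  exact ⟨p.reverse, hp.reverse, by simpa using hn, by simpa using hD⟩

theorem append (h : PathIn G D u v n) (h' : PathIn G E w x m) (hvw : G.Adj v w)
    (hDE : Disjoint D E) (hD : D ⊆ F) (hE : E ⊆ F) : PathIn G F u x (n + m) := by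
  obtain ⟨p, hp, rfl, hpD⟩ := h
  obtain ⟨q, hq, rfl, hqE⟩ := h'
  refine ⟨p.append (.cons hvw q), ?_, by simp only [Walk.length_append, Walk.length_cons]; omega,
    fun y hy => ?_⟩
  · rw [Walk.isPath_def, Walk.support_append, Walk.support_cons, List.tail_cons,
      List.nodup_append']
    exact ⟨hp.support_nodup, hq.support_nodup, fun y hyp hyq =>
      Finset.disjoint_left.1 hDE (hpD y hyp) (hqE y hyq)⟩
  · rw [Walk.support_append, Walk.support_cons, List.tail_cons, List.mem_append] at hy
    exact hy.elim (fun hy => hD (hpD y hy)) fun hy => hE (hqE y hy)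

theorem cons_of_notMem (h : PathIn G D w v n) (hu : u ∉ D) (hE : u ∈ E) (hDE : D ⊆ E)
    (huw : G.Adj u w) : PathIn G E u v (n + 1) := by
  rw [add_comm]
  exact (single (Finset.mem_singleton_self u)).append h huw
    (Finset.disjoint_singleton_left.2 hu) (Finset.singleton_subset_iff.2 hE) hDE

theorem cons [DecidableEq V] (hu : u ∈ D) (huw : G.Adj u w) (h : PathIn G (D.erase u) w v n) :
    PathIn G D u v (n + 1) :=
  h.cons_of_notMem (Finset.notMem_erase u D) hu (Finset.erase_subset u D) huw

theorem exists_last [DecidableEq V] {P : Finset V} (h : PathIn G D u v n) (hu : u ∈ P) :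
    ∃ p ∈ P, p ∈ D ∧ ∃ m, PathIn G (insert p (D \ P)) p v m := by
  obtain ⟨p, hp, -, hD⟩ := h
  have hP : ∃ x ∈ p.support, x ∈ P := ⟨u, p.start_mem_support, hu⟩
  clear hu
  induction p with
  | @nil u =>
    obtain ⟨x, hx, hxP⟩ := hP
    obtain rfl : x = u := by simpa using hx
    exact ⟨x, hxP, hD x hx, 1, single (Finset.mem_insert_self _ _)⟩
  | @cons u w v huw p ih =>
    by_cases hpP : ∃ x ∈ p.support, x ∈ P
    · exact ih ((Walk.cons_isPath_iff _ _).1 hp).1 (fun x hx => hD x (by simp [hx])) hpP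
    · have huD : u ∈ D := hD u (by simp)
      have huP : u ∈ P := by
        obtain ⟨x, hx, hxP⟩ := hP
        grind [Walk.support_cons]
      exact ⟨u, huP, huD, _, .cons huw p, hp, rfl, by grind [Walk.support_cons]⟩

theorem hasCycleLength (h : PathIn G D u v n) (hn : 3 ≤ n) (ha : G.Adj v u) :
    HasCycleLength G n := by
  obtain ⟨p, hp, hl, -⟩ := h
  refine ⟨v, .cons ha p, (Walk.cons_isCycle_iff _ _).2 ⟨hp, fun he => ?_⟩, by simpa using hl⟩
  have := hp.length_eq_one_of_mem_edges (by rwa [Sym2.eq_swap])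
  omega

end PathIn

end

section

variable {V : Type*} {G : SimpleGraph V}

/-- The finite set `D` of vertices induces a connected subgraph of `G`. -/
def ConnOn (G : SimpleGraph V) (D : Finset V) : Prop := (G.induce (D : Set V)).Connected

namespace ConnOn

variable {D E : Finset V} {u v x e : V}

theorem nonempty (hD : ConnOn G D) : D.Nonempty := by
  obtain ⟨x, hx⟩ := Connected.nonempty hD
  exact ⟨x, hx⟩

theorem exists_adj {S : Set V} (hD : ConnOn G D) (hu : u ∈ D) (hv : v ∈ D) (huS : u ∈ S)
    (hvS : v ∉ S) : ∃ x ∈ D, ∃ y ∈ D, x ∈ S ∧ y ∉ S ∧ G.Adj x y := by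
  obtain ⟨p⟩ := hD.preconnected ⟨u, hu⟩ ⟨v, hv⟩
  obtain ⟨d, -, hd, hd'⟩ := p.exists_boundary_dart (Subtype.val ⁻¹' S) huS hvS
  exact ⟨_, d.fst.2, _, d.snd.2, hd, hd', d.adj⟩

theorem of_forall_closed (he : e ∈ D)
    (h : ∀ S ⊆ D, e ∈ S → (∀ u ∈ S, ∀ v ∈ D, G.Adj u v → v ∈ S) → D ⊆ S) : ConnOn G D := by
  classical
  let S := D.filter fun x => ∃ hx : x ∈ D, (G.induce (D : Set V)).Reachable ⟨e, he⟩ ⟨x, hx⟩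
  have hS : D ⊆ S := h S (Finset.filter_subset _ _) (by simpa [S] using he) fun u hu v hv huv => by
    obtain ⟨-, _, hr⟩ := Finset.mem_filter.1 hu
    exact Finset.mem_filter.2 ⟨hv, hv, hr.trans (Adj.reachable huv)⟩
  refine (connected_iff_exists_forall_reachable _).2 ⟨⟨e, he⟩, fun ⟨x, hx⟩ => ?_⟩
  exact (Finset.mem_filter.1 (hS hx)).2.2

theorem singleton (u : V) : ConnOn G {u} :=
  of_forall_closed (Finset.mem_singleton_self u) fun _ _ hu _ => Finset.singleton_subset_iff.2 hu

theorem union [DecidableEq V] (hD : ConnOn G D) (hE : ConnOn G E) (hu : u ∈ D) (hv : v ∈ E)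
    (huv : G.Adj u v) : ConnOn G (D ∪ E) := by
  rw [ConnOn, Finset.coe_union]
  exact connected_induce_union hD.preconnected hE.preconnected hu hv huv

theorem insert [DecidableEq V] (hD : ConnOn G D) (hv : v ∈ D) (hxv : G.Adj x v) :
    ConnOn G (insert x D) :=
  (singleton x).union hD (Finset.mem_singleton_self x) hv hxv

theorem exists_pathIn (hD : ConnOn G D) (hu : u ∈ D) (hv : v ∈ D) : ∃ n, PathIn G D u v n := by
  obtain ⟨p, hp⟩ := (hD.preconnected ⟨u, hu⟩ ⟨v, hv⟩).exists_isPath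
  let f := Embedding.induce (G := G) (D : Set V)
  have hfD : ∀ x ∈ (p.map f.toHom).support, x ∈ D := fun x hx => by
    rw [Walk.support_map, List.mem_map] at hx
    obtain ⟨y, -, rfl⟩ := hx
    exact y.2
  exact ⟨_, p.map f.toHom, hp.map f.injective, rfl, hfD⟩

theorem exists_pathIn_of_meets [DecidableEq V] {P : Finset V} {B : Set V} (hD : ConnOn G D)
    (hP : ∃ p ∈ P, p ∈ D) (hB : ∃ b ∈ B, b ∈ D) :
    ∃ p ∈ P, p ∈ D ∧ ∃ b ∈ B, ∃ m, PathIn G (Insert.insert p (D \ P)) p b m := by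
  obtain ⟨p, hp, hpD⟩ := hP
  obtain ⟨b, hb, hbD⟩ := hB
  obtain ⟨n, hn⟩ := hD.exists_pathIn hpD hbD
  obtain ⟨q, hq, hqD, hm⟩ := hn.exists_last hp
  exact ⟨q, hq, hqD, b, hb, hm⟩

end ConnOn

/-- `Q` cuts `F` off in `D`: the set `F` is a nonempty union of components of the subgraph of `G`
induced by `D \ Q`. -/
def CutsOff (G : SimpleGraph V) (D : Finset V) (Q : Set V) (F : Finset V) : Prop :=
  F.Nonempty ∧ ∀ u ∈ F, u ∈ D ∧ u ∉ Q ∧ ∀ v ∈ D, G.Adj u v → v ∈ F ∨ v ∈ Q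

namespace CutsOff

variable {D F : Finset V} {Q : Set V} {e u v x : V}

theorem nonempty (h : CutsOff G D Q F) : F.Nonempty := h.1

theorem subset (h : CutsOff G D Q F) : F ⊆ D := fun _ hx => (h.2 _ hx).1

theorem notMem (h : CutsOff G D Q F) (hx : x ∈ Q) : x ∉ F := fun hF => (h.2 _ hF).2.1 hx

theorem adj (h : CutsOff G D Q F) (hu : u ∈ F) (hv : v ∈ D) (ha : G.Adj u v) :
    v ∈ F ∨ v ∈ Q := (h.2 _ hu).2.2 _ hv ha

theorem trans {K : Finset V} {R : Set V} (hK : CutsOff G D Q K) (hF : CutsOff G K R F)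
    (h : ∀ u ∈ F, ∀ v ∈ D, v ∈ Q → ¬ G.Adj u v) : CutsOff G D R F :=
  ⟨hF.nonempty, fun _ hu => ⟨hK.subset (hF.subset hu), fun huR => hF.notMem huR hu,
    fun _ hv ha => hF.adj hu
      ((hK.adj (hF.subset hu) hv ha).resolve_right fun hvQ => h _ hu _ hv hvQ ha) ha⟩⟩

theorem exists_connOn_subset (hF : CutsOff G D Q F) (hu : u ∈ F) :
    ∃ K ⊆ F, CutsOff G D Q K ∧ ConnOn G K ∧ u ∈ K := by
  classical
  obtain ⟨K, hK⟩ := (F.powerset.filter fun K => u ∈ K ∧ CutsOff G D Q K).exists_minimal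
    ⟨F, by simp [hu, hF]⟩
  obtain ⟨hKF, huK, hKcut⟩ : K ⊆ F ∧ u ∈ K ∧ CutsOff G D Q K := by simpa using hK.1
  refine ⟨K, hKF, hKcut, .of_forall_closed huK fun S hS huS hcl => ?_, huK⟩
  have hScut : CutsOff G D Q S := ⟨⟨u, huS⟩, fun x hx => by
    have := hKcut.2 x (hS hx)
    grind⟩
  exact hK.2 (by simp [hS.trans hKF, huS, hScut]) hS

theorem exists_connOn_of_mem (hu : u ∈ D) (hQ : u ∉ Q) :
    ∃ K, CutsOff G D Q K ∧ ConnOn G K ∧ u ∈ K := by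
  classical
  obtain ⟨K, -, hK⟩ := exists_connOn_subset (G := G) (D := D) (Q := Q) (F := D.filter (· ∉ Q))
    ⟨⟨u, by simp [hu, hQ]⟩, fun x hx => by grind⟩ (by simp [hu, hQ] : u ∈ D.filter (· ∉ Q))
  exact ⟨K, hK⟩

theorem exists_adj (h : CutsOff G D Q F) (hD : ConnOn G D) (hxD : x ∈ D) (hx : x ∉ F) :
    ∃ u ∈ F, ∃ v ∈ D, v ∈ Q ∧ G.Adj u v := by
  obtain ⟨z, hz⟩ := h.nonempty
  obtain ⟨u, -, v, hv, huF, hvF, ha⟩ := hD.exists_adj (S := F) (h.subset hz) hxD hz hx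
  exact ⟨u, huF, v, hv, (h.adj huF hv ha).resolve_left hvF, ha⟩

theorem exists_adj_cutVertex (h : CutsOff G D {e} F) (hD : ConnOn G D) (hxD : x ∈ D)
    (hx : x ∉ F) : e ∈ D ∧ ∃ u ∈ F, G.Adj u e := by
  obtain ⟨u, hu, v, hv, rfl, ha⟩ := h.exists_adj hD hxD hx
  exact ⟨hv, u, hu, ha⟩

theorem connOn_sdiff [DecidableEq V] (h : CutsOff G D {e} F) (hD : ConnOn G D) (he : e ∈ D) :
    ConnOn G (D \ F) := by
  refine .of_forall_closed (Finset.mem_sdiff.2 ⟨he, h.notMem rfl⟩) fun S _ heS hcl x hx => ?_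
  by_contra hxS
  obtain ⟨u, _, v, hvD, hu, hv, ha⟩ :=
    hD.exists_adj (S := S ∪ F) he (Finset.mem_sdiff.1 hx).1 (by grind) (by grind)
  have := h.adj (u := u) (v := v)
  grind

theorem card_lt (h : CutsOff G D Q F) (hQ : ∃ q ∈ Q, q ∈ D) : F.card < D.card := by
  obtain ⟨q, hq, hqD⟩ := hQ
  exact Finset.card_lt_card ⟨h.subset, fun hDF => h.notMem hq (hDF hqD)⟩

theorem card_sdiff_lt [DecidableEq V] (h : CutsOff G D Q F) : (D \ F).card < D.card := by
  obtain ⟨z, hz⟩ := h.nonempty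
  exact Finset.card_lt_card ⟨Finset.sdiff_subset, fun hDF =>
    (Finset.mem_sdiff.1 (hDF (h.subset hz))).2 hz⟩

end CutsOff

open Classical in
/-- The number of neighbours of `v` in `D`. -/
noncomputable def degOn (G : SimpleGraph V) (D : Finset V) (v : V) : ℕ :=
  (D.filter (G.Adj v)).card

/-- The vertices with a neighbour in `P`. -/
def nbrs (G : SimpleGraph V) (P : Set V) : Set V := {v | ∃ p ∈ P, G.Adj v p}

section degOn

variable {D E Q : Finset V} {e p v : V} {P : Set V}

@[simp] theorem mem_nbrs : v ∈ nbrs G P ↔ ∃ p ∈ P, G.Adj v p := Iff.rfl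

theorem mem_nbrs_singleton : v ∈ nbrs G {p} ↔ G.Adj v p := by simp

theorem degOn_le_add (h : ∀ w ∈ D, G.Adj v w → w ∈ E ∨ w ∈ Q) :
    degOn G D v ≤ degOn G E v + degOn G Q v := by
  classical
  refine le_trans (Finset.card_le_card fun w => ?_) (Finset.card_union_le _ _)
  grind

theorem degOn_mono (h : ∀ w ∈ D, G.Adj v w → w ∈ E) : degOn G D v ≤ degOn G E v :=
  Finset.card_le_card fun w => by grind

theorem degOn_le_card (h : ∀ w ∈ D, G.Adj v w → w ∈ E) : degOn G D v ≤ E.card := by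
  classical exact (degOn_mono h).trans (Finset.card_filter_le _ _)

theorem degOn_lt_card (hv : v ∈ D) : degOn G D v < D.card := by
  classical exact Finset.card_lt_card ⟨Finset.filter_subset _ _, fun h => by simpa using h hv⟩

theorem degOn_eq_zero (h : ∀ w ∈ D, ¬ G.Adj v w) : degOn G D v = 0 := by
  simpa [degOn] using h

theorem exists_adj_of_one_le_degOn (h : 1 ≤ degOn G D v) : ∃ w ∈ D, G.Adj v w := by
  obtain ⟨w, hw⟩ := Finset.card_pos.1 h
  exact ⟨w, by simpa using hw⟩

theorem exists_adj_ne_of_two_le_degOn (h : 2 ≤ degOn G D v) (x : V) :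
    ∃ w ∈ D, G.Adj v w ∧ w ≠ x := by
  classical
  obtain ⟨w, hw, hx⟩ := Finset.exists_mem_ne (s := D.filter (G.Adj v)) h x
  exact ⟨w, by grind⟩

theorem degOn_le_one (h : ∀ x ∈ D, ∀ y ∈ D, G.Adj v x → G.Adj v y → x = y) : degOn G D v ≤ 1 :=
  Finset.card_le_one.2 fun x hx y hy => by
    simp only [Finset.mem_filter] at hx hy
    exact h x hx.1 y hy.1 hx.2 hy.2

open Classical in
theorem degOn_le_ite (h : ∀ x ∈ D, ∀ y ∈ D, G.Adj v x → G.Adj v y → x = y) :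
    degOn G D v ≤ if v ∈ nbrs G D then 1 else 0 := by
  split_ifs with hv
  · exact degOn_le_one h
  · exact (degOn_eq_zero fun w hw ha => hv ⟨w, hw, ha⟩).le

open Classical in
theorem CutsOff.degOn_le (h : CutsOff G D {e} E) (hv : v ∈ E) :
    degOn G D v ≤ degOn G E v + if v ∈ nbrs G {e} then 1 else 0 := by
  rw [← Finset.coe_singleton]
  exact (degOn_le_add (Q := {e}) fun w hw ha => by simpa using h.adj hv hw ha).trans
    (Nat.add_le_add_left (degOn_le_ite (by simp)) _)

end degOn

open Classical in
/-- The degree of `v` in `D` after adding one vertex joined to `A` and another joined to `B`. -/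
noncomputable def rootedDeg (G : SimpleGraph V) (D : Finset V) (A B : Set V) (v : V) : ℕ :=
  degOn G D v + (if v ∈ A then 1 else 0) + if v ∈ B then 1 else 0

theorem rootedDeg_comm {D : Finset V} {A B : Set V} {v : V} :
    rootedDeg G D A B v = rootedDeg G D B A v := by
  unfold rootedDeg; omega

theorem rootedDeg_le {D : Finset V} {A B : Set V} {v : V} :
    rootedDeg G D A B v ≤ degOn G D v + 2 := by
  unfold rootedDeg; split_ifs <;> omega

theorem rootedDeg_le_of_notMem_left {D : Finset V} {A B : Set V} {v : V} (hv : v ∉ A) :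
    rootedDeg G D A B v ≤ degOn G D v + 1 := by
  simp only [rootedDeg, hv, if_false]; split_ifs <;> omega

theorem rootedDeg_le_of_notMem_right {D : Finset V} {A B : Set V} {v : V} (hv : v ∉ B) :
    rootedDeg G D A B v ≤ degOn G D v + 1 := by
  rw [rootedDeg_comm]
  exact rootedDeg_le_of_notMem_left hv

theorem rootedDeg_of_notMem {D : Finset V} {A B : Set V} {v : V} (hA : v ∉ A) (hB : v ∉ B) :
    rootedDeg G D A B v = degOn G D v := by
  simp [rootedDeg, hA, hB]

/-- The numbers of vertices of the paths of `G` inside `D` from a vertex of `A` to one of `B`. -/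
def pathOrders (G : SimpleGraph V) (D : Finset V) (A B : Set V) : Set ℕ :=
  {n | ∃ u ∈ A, ∃ v ∈ B, PathIn G D u v n}

section pathOrders

variable {D E K : Finset V} {A B P : Set V} {n t : ℕ}

theorem pathOrders_comm : pathOrders G D A B = pathOrders G D B A := by
  ext n
  exact ⟨fun ⟨u, hu, v, hv, h⟩ => ⟨v, hv, u, hu, h.symm⟩,
    fun ⟨u, hu, v, hv, h⟩ => ⟨v, hv, u, hu, h.symm⟩⟩

theorem pathOrders_mono (hDE : D ⊆ E) : pathOrders G D A B ⊆ pathOrders G E A B :=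
  fun _ ⟨u, hu, v, hv, h⟩ => ⟨u, hu, v, hv, h.mono hDE⟩

theorem add_one_mem_pathOrders_left (h : n ∈ pathOrders G K (nbrs G P) B)
    (hP : ∀ p ∈ P, p ∈ A ∧ p ∈ D ∧ p ∉ K) (hK : K ⊆ D) : n + 1 ∈ pathOrders G D A B := by
  obtain ⟨u, ⟨p, hpP, hup⟩, v, hv, h⟩ := h
  obtain ⟨hpA, hpD, hpK⟩ := hP p hpP
  exact ⟨p, hpA, v, hv, h.cons_of_notMem hpK hpD hK hup.symm⟩

theorem add_one_mem_pathOrders_right (h : n ∈ pathOrders G K A (nbrs G P))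
    (hP : ∀ p ∈ P, p ∈ B ∧ p ∈ D ∧ p ∉ K) (hK : K ⊆ D) : n + 1 ∈ pathOrders G D A B := by
  rw [pathOrders_comm] at h ⊢
  exact add_one_mem_pathOrders_left h hP hK

theorem hasSpan_pathOrders_of_connOn {e : V} (h : HasSpan (pathOrders G K A (nbrs G {e})) t)
    (hE : ConnOn G E) (he : e ∈ E) (hB : ∃ b ∈ B, b ∈ E) (hKE : Disjoint K E) (hKD : K ⊆ D)
    (hED : E ⊆ D) : HasSpan (pathOrders G D A B) t := by
  obtain ⟨b, hb, hbE⟩ := hB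
  obtain ⟨m, hm⟩ := hE.exists_pathIn he hbE
  exact h.shift m fun n ⟨u, hu, v, hv, hp⟩ =>
    ⟨u, hu, b, hb, hp.append hm (mem_nbrs_singleton.1 hv) hKE hKD hED⟩

theorem hasSpan_one_of_adj {u v : V} (hD : ConnOn G D) (hu : u ∈ D) (hv : v ∈ D) (huA : u ∈ A)
    (hvA : v ∈ A) (huv : G.Adj u v) (hB : ∃ b ∈ B, b ∈ D) :
    HasSpan (pathOrders G D A B) 1 := by
  classical
  obtain ⟨p, hp, hpD, b, hb, m, hm⟩ :=
    hD.exists_pathIn_of_meets (P := {u, v}) ⟨u, by simp, hu⟩ hB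
  obtain ⟨q, hq, hqp, hne⟩ : ∃ q ∈ ({u, v} : Finset V), G.Adj q p ∧ q ≠ p := by
    grind [huv.symm, huv.ne]
  exact .of_mem_of_succ_mem (n := m) ⟨p, by grind, b, hb, hm.mono (by grind)⟩
    ⟨q, by grind, b, hb, hm.cons_of_notMem (by grind) (by grind) (by grind) hqp⟩

theorem hasSpan_two_of_adj_of_adj {p q r : V} (hK : ConnOn G K) (hKD : K ⊆ D) (hq : q ∈ D)
    (hqK : q ∉ K) (hp : p ∈ K) (hr : r ∈ D) (hpA : p ∈ A) (hrA : r ∈ A) (hpr : p ≠ r)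
    (hqp : G.Adj q p) (hqr : G.Adj q r) (hB : ∃ b ∈ B, b ∈ K) :
    HasSpan (pathOrders G D A B) 2 := by
  classical
  obtain ⟨x, hx, hxK, b, hb, m, hm⟩ :=
    hK.exists_pathIn_of_meets (P := {p, r}) ⟨p, by simp, hp⟩ hB
  obtain ⟨y, hy, hyq, hyx, hqx⟩ : ∃ y ∈ ({p, r} : Finset V), G.Adj y q ∧ y ≠ x ∧ G.Adj q x := by
    grind [hqp.symm, hqr.symm]
  have hxq : PathIn G (insert q (insert x (K \ {p, r}))) q b (m + 1) :=
    hm.cons_of_notMem (by grind) (by grind) (by grind) hqx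
  refine .of_mem_of_add_two_mem (n := m) ⟨x, by grind, b, hb, hm.mono (by grind)⟩
    ⟨y, by grind, b, hb, hxq.cons_of_notMem ?_ (by grind) (by grind) hyq⟩
  grind [hyq.ne]

end pathOrders

end

section

variable {V : Type*} {G : SimpleGraph V} {D K : Finset V} {A B : Set V} {a e v : V} {t : ℕ}

/-- No vertex of `D` has two neighbours in `D` that lie in `A`. -/
def UniqueRootNbr (G : SimpleGraph V) (D : Finset V) (A : Set V) : Prop :=
  ∀ v ∈ D, ∀ x ∈ D, ∀ y ∈ D, x ∈ A → y ∈ A → G.Adj v x → G.Adj v y → x = y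

/-- Every set cut off in `D` by a single vertex meets `A`. In other words, joining a new vertex to
all of `A` leaves no cut vertex in `D`. -/
def MeetsCutOffs (G : SimpleGraph V) (D : Finset V) (A : Set V) : Prop :=
  ∀ e F, CutsOff G D {e} F → ∃ u ∈ F, u ∈ A

theorem nbrs_subset_union (P : Set V) (a : V) : nbrs G P ⊆ nbrs G (P \ {a}) ∪ nbrs G {a} := by
  rintro v ⟨p, hp, hvp⟩
  rcases eq_or_ne p a with rfl | hpa
  · exact .inr ⟨p, rfl, hvp⟩
  · exact .inl ⟨p, ⟨hp, hpa⟩, hvp⟩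

theorem MeetsCutOffs.mono (h : MeetsCutOffs G D A) (hAB : A ⊆ B) : MeetsCutOffs G D B :=
  fun e F hF => (h e F hF).imp fun _ hu => ⟨hu.1, hAB hu.2⟩

theorem MeetsCutOffs.exists_ne (h : MeetsCutOffs G D A) (hv : v ∈ D) (hve : v ≠ e) :
    ∃ a ∈ A, a ∈ D ∧ a ≠ e := by
  obtain ⟨K, hK, -, -⟩ := CutsOff.exists_connOn_of_mem (G := G) (Q := {e}) hv hve
  obtain ⟨a, ha, haA⟩ := h e K hK
  exact ⟨a, haA, hK.subset ha, fun hae => hK.notMem hae ha⟩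

theorem MeetsCutOffs.exists_ne_of_ne_singleton (h : MeetsCutOffs G D A) (hv : v ∈ D)
    (hD : D ≠ {v}) : ∃ a ∈ A, a ∈ D ∧ a ≠ v := by
  obtain ⟨x, hx, hxv⟩ := (Finset.nontrivial_iff_ne_singleton hv).2 hD |>.exists_ne v
  exact h.exists_ne hx hxv

theorem MeetsCutOffs.uniqueRootNbr (hB : MeetsCutOffs G D B)
    (hn : ¬ HasSpan (pathOrders G D A B) 2) : UniqueRootNbr G D A := by
  intro v hv x hx y hy hxA hyA hvx hvy
  by_contra hxy
  obtain ⟨K, hK, hKc, hxK⟩ := CutsOff.exists_connOn_of_mem (G := G) (Q := {v}) hx hvx.ne'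
  obtain ⟨b, hb, hbB⟩ := hB v K hK
  exact hn (hasSpan_two_of_adj_of_adj hKc hK.subset hv (hK.notMem rfl) hxK hy hxA hyA hxy hvx hvy
    ⟨b, hbB, hb⟩)

namespace CutsOff

theorem degOn_le_of_uniqueRootNbr [DecidablePred (· ∈ nbrs G (A ∩ D))] (hK : CutsOff G D A K)
    (h1 : UniqueRootNbr G D A) (hv : v ∈ K) :
    degOn G D v ≤ degOn G K v + if v ∈ nbrs G (A ∩ D) then 1 else 0 := by
  classical
  have hcoe : ((D.filter (· ∈ A) : Finset V) : Set V) = A ∩ D := by ext; simp [and_comm]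
  refine (degOn_le_add (Q := D.filter (· ∈ A)) fun w hw ha => ?_).trans
    (Nat.add_le_add_left ((degOn_le_ite fun x hx y hy => ?_).trans_eq ?_) _)
  · have := hK.adj hv hw ha
    grind
  · exact h1 v (hK.subset hv) x (by grind) y (by grind) (by grind) (by grind)
  · simp only [hcoe]

theorem rootedDeg_le_nbrs (hK : CutsOff G D A K) (h1 : UniqueRootNbr G D A) (hv : v ∈ K) :
    rootedDeg G D A B v ≤ rootedDeg G K (nbrs G (A ∩ D)) B v := by
  classical
  have hdeg := hK.degOn_le_of_uniqueRootNbr h1 hv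
  have hvA : v ∉ A := fun h => hK.notMem h hv
  simp only [rootedDeg, hvA, if_false]
  grind

theorem exists_mem_nbrs (hK : CutsOff G D A K) (hD : ConnOn G D) (hA : ∃ a ∈ A, a ∈ D) :
    ∃ u ∈ nbrs G (A ∩ D), u ∈ K := by
  obtain ⟨a, ha, haD⟩ := hA
  obtain ⟨u, hu, v, hv, hvA, hav⟩ := hK.exists_adj hD haD (hK.notMem ha)
  exact ⟨u, ⟨v, ⟨hvA, hv⟩, hav⟩, hu⟩

theorem meetsCutOffs_nbrs (hK : CutsOff G D A K) (hA : MeetsCutOffs G D A) :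
    MeetsCutOffs G K (nbrs G (A ∩ D)) := by
  intro e F hF
  by_contra! h
  obtain ⟨u, hu, huA⟩ :=
    hA e F (hK.trans hF fun u hu v hv hvA ha => h u hu ⟨v, ⟨hvA, hv⟩, ha⟩)
  exact hK.notMem huA (hF.subset hu)

theorem ne_singleton (hK : CutsOff G D A K) (hD : ConnOn G D) (hA : MeetsCutOffs G D A)
    (h1 : UniqueRootNbr G D A) (hAD : ∃ a ∈ A, a ∈ D) (v : V) : K ≠ {v} := by
  rintro rfl
  have hv := Finset.mem_singleton_self v
  obtain ⟨a, haA, haD⟩ := hAD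
  obtain ⟨u, hu, p, hp, hpA, hup⟩ := hK.exists_adj hD haD (hK.notMem haA)
  obtain rfl := Finset.mem_singleton.1 hu
  have hcut : CutsOff G D {p} {u} := by
    refine ⟨⟨u, hu⟩, fun w hw => ?_⟩
    obtain rfl := Finset.mem_singleton.1 hw
    refine ⟨hK.subset hv, hup.ne, fun x hx hwx => (hK.adj hv hx hwx).imp_right fun hxA => ?_⟩
    exact h1 w (hK.subset hv) x hx p hp hxA hpA hwx hup
  obtain ⟨w, hw, hwA⟩ := hA p {u} hcut
  exact hK.notMem hwA hw

theorem hasSpan_of_nbrs (hK : CutsOff G D A K)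
    (h : HasSpan (pathOrders G K (nbrs G (A ∩ D)) B) t) : HasSpan (pathOrders G D A B) t :=
  h.shift 1 fun _ hn => add_one_mem_pathOrders_left hn
    (fun _ hp => ⟨hp.1, hp.2, hK.notMem hp.1⟩) hK.subset

theorem rootedDeg_le_nbrs_diff (hK : CutsOff G D A K) (h1 : UniqueRootNbr G D A)
    (hBA : ∀ b ∈ B, b ∈ D → b ∈ A) (a : V) (hv : v ∈ K) :
    rootedDeg G D A B v ≤ rootedDeg G K (nbrs G ((A ∩ D) \ {a})) (nbrs G {a}) v := by
  classical
  have hdeg := hK.degOn_le_of_uniqueRootNbr h1 hv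
  have hvA : v ∉ A := fun h => hK.notMem h hv
  have hvB : v ∉ B := fun h => hvA (hBA v h (hK.subset hv))
  have hnbrs := @nbrs_subset_union V G (A ∩ D) a v
  simp only [rootedDeg, hvA, hvB, if_false]
  grind

theorem exists_mem_nbrs_diff (hK : CutsOff G D A K) (hA : MeetsCutOffs G D A) (ha : a ∈ A) :
    ∃ u ∈ nbrs G ((A ∩ D) \ {a}), u ∈ K := by
  by_contra! h
  have hcut : CutsOff G D {a} K := by
    refine ⟨hK.nonempty, fun u hu => ⟨hK.subset hu, ?_, fun v hv huv => ?_⟩⟩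
    · rintro rfl
      exact hK.notMem ha hu
    · refine (hK.adj hu hv huv).imp_right fun hvA => ?_
      by_contra hva
      exact h u ⟨v, ⟨⟨hvA, hv⟩, hva⟩, huv⟩ hu
  obtain ⟨u, hu, huA⟩ := hA a K hcut
  exact hK.notMem huA hu

theorem hasSpan_of_nbrs_diff (hK : CutsOff G D A K) (haA : a ∈ A) (haB : a ∈ B) (haD : a ∈ D)
    (h : HasSpan (pathOrders G K (nbrs G ((A ∩ D) \ {a})) (nbrs G {a})) t) :
    HasSpan (pathOrders G D A B) t := by
  classical
  refine h.shift 2 fun n hn => ?_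
  have hn' : n + 1 ∈ pathOrders G (insert a K) (nbrs G ((A ∩ D) \ {a})) B :=
    add_one_mem_pathOrders_right hn (by rintro p rfl; exact ⟨haB, by simp, hK.notMem haA⟩)
      (Finset.subset_insert _ _)
  exact add_one_mem_pathOrders_left hn'
    (fun p ⟨⟨hpA, hpD⟩, hpa⟩ => ⟨hpA, hpD, by simp_all [hK.notMem hpA]⟩)
    (Finset.insert_subset haD hK.subset)

theorem hasSpan_of_nbrs_singleton (hK : CutsOff G D {e} K) (hD : ConnOn G D)
    (hB : ∃ b ∈ B, b ∈ D) (hBK : ∀ b ∈ B, b ∉ K)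
    (h : HasSpan (pathOrders G K A (nbrs G {e})) t) : HasSpan (pathOrders G D A B) t := by
  classical
  obtain ⟨b, hb, hbD⟩ := hB
  have heD := (hK.exists_adj_cutVertex hD hbD (hBK b hb)).1
  exact hasSpan_pathOrders_of_connOn h (hK.connOn_sdiff hD heD)
    (Finset.mem_sdiff.2 ⟨heD, hK.notMem rfl⟩) ⟨b, hb, Finset.mem_sdiff.2 ⟨hbD, hBK b hb⟩⟩
    Finset.disjoint_sdiff hK.subset Finset.sdiff_subset

theorem meetsCutOffs_union_nbrs (hK : CutsOff G D {e} K) (hB : ∀ b ∈ B, b ∉ K)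
    (h : MeetsCutOffs G D (A ∪ B)) : MeetsCutOffs G K (A ∪ nbrs G {e}) := by
  intro f F hF
  by_contra! hFA
  obtain ⟨u, hu, huA | huB⟩ :=
    h f F (hK.trans hF fun u hu v _ hve ha => hFA u hu (.inr ⟨v, hve, ha⟩))
  · exact hFA u hu (.inl huA)
  · exact hB u huB (hF.subset hu)

theorem rootedDeg_le_nbrs_singleton (hK : CutsOff G D {e} K) (hB : ∀ b ∈ B, b ∉ K) (hv : v ∈ K) :
    rootedDeg G D A B v ≤ rootedDeg G K A (nbrs G {e}) v := by
  classical
  have hdeg := hK.degOn_le hv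
  have hvB : v ∉ B := fun h => hB v h hv
  simp only [rootedDeg, hvB, if_false]
  grind

end CutsOff

end

/-! ### Rooted sets with counts at least three -/

section

variable {V : Type*} {G : SimpleGraph V} {D F K : Finset V} {A B : Set V} {a b e s v : V}

/-- A connected set `D` with two sets of roots for which the degree and separation conditions hold
away from one exceptional vertex `s`. -/
structure RootedExcept (G : SimpleGraph V) (D : Finset V) (A B : Set V) (s : V) : Prop where
  conn : ConnOn G D
  left : ∃ a ∈ A, a ∈ D
  right : ∃ b ∈ B, b ∈ D
  two : ∃ x ∈ D, ∃ y ∈ D, x ≠ y ∧ x ∈ A ∪ B ∧ y ∈ A ∪ B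
  deg : ∀ v ∈ D, v ≠ s → 3 ≤ rootedDeg G D A B v
  meets : ∀ e F, CutsOff G D {e} F → s ∉ F → ∃ u ∈ F, u ∈ A ∪ B

namespace RootedExcept

/-- The induction hypothesis in the proof of `RootedExcept.hasSpan_one`. -/
def SpanBelow (G : SimpleGraph V) (D : Finset V) : Prop :=
  ∀ (D' : Finset V) (A' B' : Set V) (s' : V), D'.card < D.card → RootedExcept G D' A' B' s' →
    HasSpan (pathOrders G D' A' B') 1

theorem symm (h : RootedExcept G D A B s) : RootedExcept G D B A s where
  conn := h.conn
  left := h.right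
  right := h.left
  two := by simpa only [Set.union_comm B A] using h.two
  deg v hv hvs := by rw [rootedDeg_comm]; exact h.deg v hv hvs
  meets := by simpa only [Set.union_comm B A] using h.meets

theorem sdiff [DecidableEq V] (h : RootedExcept G D A B s) (hF : CutsOff G D {e} F) (hs : s ∈ F)
    (heD : e ∈ D) (hA : ∃ a ∈ A, a ∈ D \ F) (hB : ∃ b ∈ B, b ∈ D \ F)
    (htwo : ∃ x ∈ D \ F, ∃ y ∈ D \ F, x ≠ y ∧ x ∈ A ∪ B ∧ y ∈ A ∪ B) :
    RootedExcept G (D \ F) A B e where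
  conn := hF.connOn_sdiff h.conn heD
  left := hA
  right := hB
  two := htwo
  deg v hv hve := by
    obtain ⟨hvD, hvF⟩ := Finset.mem_sdiff.1 hv
    have hdeg : degOn G D v ≤ degOn G (D \ F) v := degOn_mono fun w hw ha =>
      Finset.mem_sdiff.2 ⟨hw, fun hwF => (hF.adj hwF hvD ha.symm).elim hvF hve⟩
    have := h.deg v hvD (ne_of_mem_of_not_mem hs hvF).symm
    unfold rootedDeg at this ⊢
    omega
  meets f F' hF' he := by
    refine h.meets f F' ⟨hF'.nonempty, fun u hu => ?_⟩ fun hs' =>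
      (Finset.mem_sdiff.1 (hF'.subset hs')).2 hs
    obtain ⟨huD, huF⟩ := Finset.mem_sdiff.1 (hF'.subset hu)
    refine ⟨huD, fun huf => hF'.notMem huf hu, fun v hv ha =>
      hF'.adj hu (Finset.mem_sdiff.2 ⟨hv, fun hvF => ?_⟩) ha⟩
    rcases hF.adj hvF huD ha.symm with huF' | rfl
    · exact huF huF'
    · exact he hu

theorem hasSpan_of_sdiff [DecidableEq V] (ih : SpanBelow G D) (hF : CutsOff G D {e} F)
    (h : RootedExcept G (D \ F) A B e) : HasSpan (pathOrders G D A B) 1 :=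
  (ih _ A B e hF.card_sdiff_lt h).mono (pathOrders_mono Finset.sdiff_subset)

theorem hasSpan_or_meetsCutOffs_union (h : RootedExcept G D A B s) (ih : SpanBelow G D) :
    HasSpan (pathOrders G D A B) 1 ∨ MeetsCutOffs G D (A ∪ B) := by
  classical
  by_contra! ⟨hn, hcon⟩
  obtain ⟨e, F, hF, hm⟩ : ∃ e F, CutsOff G D {e} F ∧ ∀ u ∈ F, u ∉ A ∪ B := by
    simpa only [MeetsCutOffs, not_forall, not_exists, not_and, exists_prop] using hcon
  have hs : s ∈ F := by
    by_contra hs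
    obtain ⟨u, hu, hu'⟩ := h.meets e F hF hs
    exact hm u hu hu'
  have hmem : ∀ x ∈ A ∪ B, x ∈ D → x ∈ D \ F := fun x hx hxD =>
    Finset.mem_sdiff.2 ⟨hxD, fun hxF => hm x hxF hx⟩
  obtain ⟨a, ha, haD⟩ := h.left
  obtain ⟨b, hb, hbD⟩ := h.right
  obtain ⟨x, hx, y, hy, hxy, hxR, hyR⟩ := h.two
  have heD := (hF.exists_adj_cutVertex h.conn haD fun haF => hm a haF (.inl ha)).1
  exact hn (hasSpan_of_sdiff ih hF (h.sdiff hF hs heD ⟨a, ha, hmem a (.inl ha) haD⟩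
    ⟨b, hb, hmem b (.inr hb) hbD⟩ ⟨x, hmem x hxR hx, y, hmem y hyR hy, hxy, hxR, hyR⟩))

theorem hasSpan_of_cutsOff (h : RootedExcept G D A B s) (ih : SpanBelow G D)
    (hAB : MeetsCutOffs G D (A ∪ B)) (hK : CutsOff G D {e} K) (hKc : ConnOn G K)
    (hB : ∀ b ∈ B, b ∉ K) (hs : K ≠ {s}) : HasSpan (pathOrders G D A B) 1 := by
  obtain ⟨b, hb, hbD⟩ := h.right
  obtain ⟨heD, u, hu, hue⟩ := hK.exists_adj_cutVertex h.conn hbD (hB b hb)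
  obtain ⟨a, ha, haAB⟩ := hAB e K hK
  have haA : a ∈ A := haAB.resolve_right fun haB => hB a haB ha
  have hmeets := hK.meetsCutOffs_union_nbrs hB hAB
  have hdeg : ∀ v ∈ K, v ≠ s → 3 ≤ rootedDeg G K A (nbrs G {e}) v := fun v hv hvs =>
    (h.deg v (hK.subset hv) hvs).trans (hK.rootedDeg_le_nbrs_singleton hB hv)
  have hKa : K ≠ {a} := by
    rintro rfl
    have h3 := (hdeg a ha fun has => hs (by rw [has])).trans rootedDeg_le
    have h0 : degOn G {a} a = 0 := degOn_eq_zero (by simp)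
    omega
  obtain ⟨y, hy, hyK, hya⟩ := hmeets.exists_ne_of_ne_singleton ha hKa
  exact hK.hasSpan_of_nbrs_singleton h.conn h.right hB (ih K _ _ s (hK.card_lt ⟨e, rfl, heD⟩)
    ⟨hKc, ⟨a, haA, ha⟩, ⟨u, ⟨e, rfl, hue⟩, hu⟩, ⟨a, ha, y, hyK, hya.symm, .inl haA, hy⟩, hdeg,
      fun f F hF _ => hmeets f F hF⟩)

theorem hasSpan_of_forall_right_eq (h : RootedExcept G D A B s) (ih : SpanBelow G D)
    (hAB : MeetsCutOffs G D (A ∪ B)) (hB : ∀ x ∈ D, x ∈ B → x = b) (hv : v ∈ D) (hvb : v ≠ b)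
    (hvs : v ≠ s) : HasSpan (pathOrders G D A B) 1 := by
  obtain ⟨F, hF, hFc, hvF⟩ := CutsOff.exists_connOn_of_mem (G := G) (Q := {b}) hv hvb
  refine h.hasSpan_of_cutsOff ih hAB hF hFc (fun x hx hxF => ?_) ?_
  · exact hF.notMem (hB x (hF.subset hxF) hx) hxF
  · rintro rfl
    exact hvs (Finset.mem_singleton.1 hvF)

theorem hasSpan_of_cutsOff_singleton (h : RootedExcept G D A B s) (ih : SpanBelow G D)
    (hAB : MeetsCutOffs G D (A ∪ B)) (hs : CutsOff G D {e} {s}) (hsB : s ∉ B) :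
    HasSpan (pathOrders G D A B) 1 := by
  classical
  have hss := Finset.mem_singleton_self s
  have hsD : s ∈ D := hs.subset hss
  have hsA : s ∈ A := by
    obtain ⟨u, hu, huAB⟩ := hAB e _ hs
    obtain rfl := Finset.mem_singleton.1 hu
    exact huAB.resolve_right hsB
  obtain ⟨b, hb, hbD⟩ := h.right
  have hbs : b ≠ s := ne_of_mem_of_not_mem hb hsB
  obtain ⟨heD, u, hu, hse⟩ := hs.exists_adj_cutVertex h.conn hbD (by simpa using hbs)
  obtain rfl := Finset.mem_singleton.1 hu
  by_cases hA : ∃ a ∈ D, a ∈ A ∧ a ≠ u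
  swap
  · push Not at hA
    rw [pathOrders_comm]
    rw [Set.union_comm] at hAB
    exact h.symm.hasSpan_of_forall_right_eq ih hAB hA heD hse.ne' hse.ne'
  obtain ⟨a, haD, haA, hau⟩ := hA
  by_cases htwo : ∃ x ∈ D \ {u}, ∃ y ∈ D \ {u}, x ≠ y ∧ x ∈ A ∪ B ∧ y ∈ A ∪ B
  · exact hasSpan_of_sdiff ih hs (h.sdiff hs hss heD ⟨a, haA, by simp [haD, hau]⟩
      ⟨b, hb, by simp [hbD, hbs]⟩ htwo)
  have hroot : ∀ x ∈ D, x ≠ u → x ∈ A ∪ B → x = b := fun x hx hxu hxR => by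
    by_contra hxb
    exact htwo ⟨x, by simp [hx, hxu], b, by simp [hbD, hbs], hxb, hxR, .inr hb⟩
  obtain rfl := hroot a haD hau (.inl haA)
  by_cases hae : a = e
  · subst hae
    exact .of_mem_of_succ_mem (n := 1) ⟨a, haA, a, hb, .single haD⟩
      ⟨u, hsA, a, hb, .cons hsD hse (.single (by simp [haD, hau]))⟩
  · exact h.hasSpan_of_forall_right_eq ih hAB
      (fun x hx hxB => hroot x hx (ne_of_mem_of_not_mem hxB hsB) (.inr hxB)) heD (Ne.symm hae)
      hse.ne'

theorem meetsCutOffs_right (h : RootedExcept G D A B s) (ih : SpanBelow G D)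
    (hn : ¬ HasSpan (pathOrders G D A B) 1) : MeetsCutOffs G D B := by
  have hAB := (h.hasSpan_or_meetsCutOffs_union ih).resolve_left hn
  intro e F hF
  by_contra! hB
  obtain ⟨x, hx⟩ := hF.nonempty
  obtain ⟨K, hKF, hK, hKc, -⟩ := hF.exists_connOn_subset hx
  refine hn (h.hasSpan_of_cutsOff ih hAB hK hKc (fun b hb hbK => hB b (hKF hbK) hb) ?_)
  rintro rfl
  exact hn (h.hasSpan_of_cutsOff_singleton ih hAB hK (hB s (hKF (Finset.mem_singleton_self s))))

theorem hasSpan_of_right_notMem_left (h : RootedExcept G D A B s) (ih : SpanBelow G D)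
    (hA : MeetsCutOffs G D A) (h1 : UniqueRootNbr G D A) (hb : b ∈ B) (hbD : b ∈ D)
    (hbA : b ∉ A) : HasSpan (pathOrders G D A B) 1 := by
  obtain ⟨K, hK, hKc, hbK⟩ := CutsOff.exists_connOn_of_mem (G := G) hbD hbA
  have hmeets := hK.meetsCutOffs_nbrs hA
  obtain ⟨y, hy, hyK, hyb⟩ :=
    hmeets.exists_ne_of_ne_singleton hbK (hK.ne_singleton h.conn hA h1 h.left b)
  exact hK.hasSpan_of_nbrs (ih K _ _ s (hK.card_lt h.left)
    ⟨hKc, hK.exists_mem_nbrs h.conn h.left, ⟨b, hb, hbK⟩,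
      ⟨y, hyK, b, hbK, hyb, .inl hy, .inr hb⟩,
      fun v hv hvs => (h.deg v (hK.subset hv) hvs).trans (hK.rootedDeg_le_nbrs h1 hv),
      fun e F hF _ => hmeets.mono Set.subset_union_left e F hF⟩)

theorem hasSpan_of_right_subset_left (h : RootedExcept G D A B s) (ih : SpanBelow G D)
    (hA : MeetsCutOffs G D A) (h1 : UniqueRootNbr G D A) (hBA : ∀ b ∈ B, b ∈ D → b ∈ A)
    (haB : a ∈ B) (haD : a ∈ D) (hv : v ∈ D) (hvA : v ∉ A) (hav : G.Adj a v) :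
    HasSpan (pathOrders G D A B) 1 := by
  have haA := hBA a haB haD
  obtain ⟨K, hK, hKc, hvK⟩ := CutsOff.exists_connOn_of_mem (G := G) hv hvA
  have hva : v ∈ nbrs G {a} := ⟨a, rfl, hav.symm⟩
  obtain ⟨w, hw, hwK⟩ := hK.exists_mem_nbrs_diff hA haA
  have hwv : w ≠ v := by
    rintro rfl
    obtain ⟨p, ⟨⟨hpA, hpD⟩, hpa⟩, hwp⟩ := hw
    exact hpa (h1 w hv p hpD a haD hpA haA hwp hav.symm)
  exact hK.hasSpan_of_nbrs_diff haA haB haD (ih K _ _ s (hK.card_lt h.left)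
    ⟨hKc, ⟨w, hw, hwK⟩, ⟨v, hva, hvK⟩, ⟨w, hwK, v, hvK, hwv, .inl hw, .inr hva⟩,
      fun u hu hus => (h.deg u (hK.subset hu) hus).trans (hK.rootedDeg_le_nbrs_diff h1 hBA a hu),
      fun e F hF _ => (hK.meetsCutOffs_nbrs hA).mono (nbrs_subset_union _ a) e F hF⟩)

theorem hasSpan_one_of_spanBelow (h : RootedExcept G D A B s) (ih : SpanBelow G D) :
    HasSpan (pathOrders G D A B) 1 := by
  by_contra hn
  have hB := h.meetsCutOffs_right ih hn
  have hA := h.symm.meetsCutOffs_right ih (by rwa [pathOrders_comm])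
  have h1 : UniqueRootNbr G D A := hB.uniqueRootNbr fun h2 => hn (h2.of_le one_le_two)
  have hnadj : ∀ u ∈ D, ∀ v ∈ D, u ∈ A → v ∈ A → ¬ G.Adj u v := fun u hu v hv huA hvA huv =>
    hn (hasSpan_one_of_adj h.conn hu hv huA hvA huv h.right)
  by_cases hBA : ∃ b ∈ B, b ∈ D ∧ b ∉ A
  · obtain ⟨b, hb, hbD, hbA⟩ := hBA
    exact hn (h.hasSpan_of_right_notMem_left ih hA h1 hb hbD hbA)
  push Not at hBA
  obtain ⟨a, haB, haD, has⟩ : ∃ a ∈ B, a ∈ D ∧ a ≠ s := by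
    obtain ⟨x, hx, y, hy, hxy, -⟩ := h.two
    rcases eq_or_ne x s with rfl | hxs
    · exact hB.exists_ne hy hxy.symm
    · exact hB.exists_ne hx hxs
  have haA := hBA a haB haD
  obtain ⟨g, hg, hag⟩ : ∃ g ∈ D, G.Adj a g := exists_adj_of_one_le_degOn (by
    have := (h.deg a haD has).trans rootedDeg_le
    omega)
  exact hn (h.hasSpan_of_right_subset_left ih hA h1 hBA haB haD hg
    (fun hgA => hnadj a haD g hg haA hgA hag) hag)

theorem hasSpan_one (h : RootedExcept G D A B s) : HasSpan (pathOrders G D A B) 1 := by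
  induction hN : D.card using Nat.strong_induction_on generalizing D A B s with
  | _ N ih =>
    exact h.hasSpan_one_of_spanBelow fun D' A' B' s' hc h' => ih D'.card (hN ▸ hc) h' rfl

end RootedExcept

end

/-! ### Rooted sets with counts at least four -/

section

variable {V : Type*} {G : SimpleGraph V} {D E K : Finset V} {A B A' B' : Set V} {a e v : V}
  {t k : ℕ}

/-- `v` is adjacent to both ends of an edge of `G` inside `D`. -/
def InTriangle (G : SimpleGraph V) (D : Finset V) (v : V) : Prop :=
  ∃ x ∈ D, ∃ y ∈ D, G.Adj v x ∧ G.Adj v y ∧ G.Adj x y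

theorem InTriangle.mono (h : InTriangle G D v) (hDE : D ⊆ E) : InTriangle G E v := by
  obtain ⟨x, hx, y, hy, h⟩ := h
  exact ⟨x, hDE hx, y, hDE hy, h⟩

/-- All rooted degrees are at least `t`, and at least `t + 1` at the vertices of triangles. -/
def MinRootedDeg (G : SimpleGraph V) (D : Finset V) (A B : Set V) (t : ℕ) : Prop :=
  ∀ v ∈ D, t ≤ rootedDeg G D A B v ∧ (InTriangle G D v → t + 1 ≤ rootedDeg G D A B v)

theorem MinRootedDeg.of_le_add (h : MinRootedDeg G D A B (t + k)) (hED : E ⊆ D)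
    (hle : ∀ v ∈ E, rootedDeg G D A B v ≤ rootedDeg G E A' B' v + k) :
    MinRootedDeg G E A' B' t := by
  intro v hv
  have hv' := h v (hED hv)
  have hlev := hle v hv
  refine ⟨by omega, fun ht => ?_⟩
  have := hv'.2 (ht.mono hED)
  omega

theorem MinRootedDeg.of_cliqueFree (hG : G.CliqueFree 3)
    (h : ∀ v ∈ D, t ≤ rootedDeg G D A B v) : MinRootedDeg G D A B t := fun v hv => by
  classical
  exact ⟨h v hv, fun ⟨_, _, _, _, hvx, hvy, hxy⟩ =>
    (hG _ (is3Clique_triple_iff.2 ⟨hvx, hvy, hxy⟩)).elim⟩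

theorem MinRootedDeg.of_le (h : MinRootedDeg G D A B t) (hED : E ⊆ D)
    (hle : ∀ v ∈ E, rootedDeg G D A B v ≤ rootedDeg G E A' B' v) :
    MinRootedDeg G E A' B' t :=
  of_le_add (k := 0) h hED hle

-- A component with at most two vertices would be an edge whose ends are both joined to `e`, and
-- these two vertices lie in a triangle, so their degrees are too large.
theorem MinRootedDeg.three_le_card_of_cutsOff (hd : MinRootedDeg G D A B t)
    (hK : CutsOff G D {e} K) (heD : e ∈ D)
    (hle : ∀ u ∈ K, rootedDeg G D A B u + 2 ≤ degOn G D u + t) : 3 ≤ K.card := by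
  by_contra hlt
  have key : ∀ u ∈ K, G.Adj u e ∧ 1 ≤ degOn G K u ∧ rootedDeg G D A B u ≤ t := by
    intro u hu
    have hdu := (hd u (hK.subset hu)).1
    have hleu := hle u hu
    have hdeg := hK.degOn_le hu
    have hlt' := degOn_lt_card (G := G) hu
    by_cases hue : G.Adj u e
    · rw [if_pos (mem_nbrs_singleton.2 hue)] at hdeg
      exact ⟨hue, by omega, by omega⟩
    · rw [if_neg (by rwa [mem_nbrs_singleton])] at hdeg
      omega
  obtain ⟨u, hu⟩ := hK.nonempty
  obtain ⟨hue, hdu, hle⟩ := key u hu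
  obtain ⟨w, hw, huw⟩ := exists_adj_of_one_le_degOn hdu
  have := (hd u (hK.subset hu)).2 ⟨w, hK.subset hw, e, heD, huw, hue, (key w hw).1⟩
  omega

theorem CutsOff.three_le_card (hK : CutsOff G D A K) (h1 : UniqueRootNbr G D A) (hv : v ∈ K)
    (hdeg : 3 ≤ degOn G D v) : 3 ≤ K.card := by
  classical
  have hle := hK.degOn_le_of_uniqueRootNbr h1 hv
  have hlt := degOn_lt_card (G := G) hv
  split_ifs at hle <;> omega

/-- A connected set `D` with two sets of roots for which the degree and separation conditions
hold. -/
structure Rooted (G : SimpleGraph V) (D : Finset V) (A B : Set V) (t : ℕ) : Prop where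
  conn : ConnOn G D
  left : ∃ a ∈ A, a ∈ D
  right : ∃ b ∈ B, b ∈ D
  deg : MinRootedDeg G D A B t
  meets : MeetsCutOffs G D (A ∪ B)

namespace Rooted

/-- The induction hypothesis in the proofs that `Rooted G D A B (t + 1)` yields a span of `t`. -/
def SpanBelow (G : SimpleGraph V) (D : Finset V) (t : ℕ) : Prop :=
  ∀ (D' : Finset V) (A' B' : Set V), D'.card < D.card → 3 ≤ D'.card →
    Rooted G D' A' B' (t + 1) → HasSpan (pathOrders G D' A' B') t

theorem symm (h : Rooted G D A B t) : Rooted G D B A t where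
  conn := h.conn
  left := h.right
  right := h.left
  deg v hv := by rw [rootedDeg_comm]; exact h.deg v hv
  meets := by rw [Set.union_comm]; exact h.meets

theorem le_rootedDeg (h : Rooted G D A B t) (hv : v ∈ D) : t ≤ rootedDeg G D A B v :=
  (h.deg v hv).1

theorem le_degOn_add_two (h : Rooted G D A B t) (hv : v ∈ D) : t ≤ degOn G D v + 2 :=
  (h.le_rootedDeg hv).trans rootedDeg_le

theorem restrict (h : Rooted G D A B t) (hK : CutsOff G D {e} K) (hKc : ConnOn G K)
    (hB : ∀ b ∈ B, b ∉ K) : Rooted G K A (nbrs G {e}) t where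
  conn := hKc
  left := by
    obtain ⟨u, hu, huAB⟩ := h.meets e K hK
    exact ⟨u, huAB.resolve_right fun hb => hB u hb hu, hu⟩
  right := by
    obtain ⟨b, hb, hbD⟩ := h.right
    obtain ⟨-, u, hu, ha⟩ := hK.exists_adj_cutVertex h.conn hbD (hB b hb)
    exact ⟨u, ⟨e, rfl, ha⟩, hu⟩
  deg := h.deg.of_le hK.subset fun _ hv => hK.rootedDeg_le_nbrs_singleton hB hv
  meets := hK.meetsCutOffs_union_nbrs hB h.meets

theorem contract (h : Rooted G D A B t) (h1 : UniqueRootNbr G D A) (hA : MeetsCutOffs G D A)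
    (hK : CutsOff G D A K) (hKc : ConnOn G K) (hB : ∃ b ∈ B, b ∈ K) :
    Rooted G K (nbrs G (A ∩ D)) B t where
  conn := hKc
  left := hK.exists_mem_nbrs h.conn h.left
  right := hB
  deg := h.deg.of_le hK.subset fun _ hv => hK.rootedDeg_le_nbrs h1 hv
  meets := (hK.meetsCutOffs_nbrs hA).mono Set.subset_union_left

theorem contract_diff (h : Rooted G D A B t) (h1 : UniqueRootNbr G D A)
    (hA : MeetsCutOffs G D A) (hBA : ∀ b ∈ B, b ∈ D → b ∈ A) (hK : CutsOff G D A K)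
    (hKc : ConnOn G K) (haA : a ∈ A) (hv : v ∈ K) (hav : G.Adj a v) :
    Rooted G K (nbrs G ((A ∩ D) \ {a})) (nbrs G {a}) t where
  conn := hKc
  left := hK.exists_mem_nbrs_diff hA haA
  right := ⟨v, ⟨a, rfl, hav.symm⟩, hv⟩
  deg := h.deg.of_le hK.subset fun _ hv => hK.rootedDeg_le_nbrs_diff h1 hBA a hv
  meets := (hK.meetsCutOffs_nbrs hA).mono (nbrs_subset_union _ a)

theorem meetsCutOffs_right (h : Rooted G D A B (t + 1)) (ht : 2 ≤ t) (ih : SpanBelow G D t)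
    (hn : ¬ HasSpan (pathOrders G D A B) t) : MeetsCutOffs G D B := by
  intro e F hF
  by_contra! hBF
  obtain ⟨x, hx⟩ := hF.nonempty
  obtain ⟨K, hKF, hK, hKc, -⟩ := hF.exists_connOn_subset hx
  have hB : ∀ b ∈ B, b ∉ K := fun b hb hbK => hBF b (hKF hbK) hb
  obtain ⟨b, hb, hbD⟩ := h.right
  have heD := (hK.exists_adj_cutVertex h.conn hbD (hB b hb)).1
  have hK3 : 3 ≤ K.card := h.deg.three_le_card_of_cutsOff hK heD fun u hu => by
    have := rootedDeg_le_of_notMem_right (G := G) (D := D) (A := A) fun huB => hB u huB hu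
    omega
  exact hn (hK.hasSpan_of_nbrs_singleton h.conn h.right hB
    (ih K _ _ (hK.card_lt ⟨e, rfl, heD⟩) hK3 (h.restrict hK hKc hB)))

theorem hasSpan_of_contract (h : Rooted G D A B (t + 1)) (ih : SpanBelow G D t)
    (h1 : UniqueRootNbr G D A) (hA : MeetsCutOffs G D A) (hK : CutsOff G D A K)
    (hKc : ConnOn G K) (hB : ∃ b ∈ B, b ∈ K) (hK3 : 3 ≤ K.card) :
    HasSpan (pathOrders G D A B) t :=
  hK.hasSpan_of_nbrs (ih K _ _ (hK.card_lt h.left) hK3 (h.contract h1 hA hK hKc hB))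

theorem exists_hasSpan_of_subset_left (h : Rooted G D A B (t + 1)) (ht : 2 ≤ t)
    (ih : SpanBelow G D t) (h1 : UniqueRootNbr G D A) (hA : MeetsCutOffs G D A)
    (hBA : ∀ b ∈ B, b ∈ D → b ∈ A) (haA : a ∈ A) (hv : v ∈ D) (hvA : v ∉ A) (hav : G.Adj a v) :
    ∃ K, CutsOff G D A K ∧
      HasSpan (pathOrders G K (nbrs G ((A ∩ D) \ {a})) (nbrs G {a})) t := by
  obtain ⟨K, hK, hKc, hvK⟩ := CutsOff.exists_connOn_of_mem (G := G) hv hvA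
  have hdeg := rootedDeg_of_notMem (G := G) (D := D) hvA fun hvB => hvA (hBA v hvB hv)
  have hdv := h.le_rootedDeg hv
  exact ⟨K, hK, ih K _ _ (hK.card_lt h.left) (hK.three_le_card h1 hvK (by omega))
    (h.contract_diff h1 hA hBA hK hKc haA hvK hav)⟩

theorem hasSpan_of_subset_left (h : Rooted G D A B (t + 1)) (ht : 2 ≤ t) (ih : SpanBelow G D t)
    (h1 : UniqueRootNbr G D A) (hA : MeetsCutOffs G D A) (hBA : ∀ b ∈ B, b ∈ D → b ∈ A)
    (haB : a ∈ B) (haD : a ∈ D) (hv : v ∈ D) (hvA : v ∉ A) (hav : G.Adj a v) :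
    HasSpan (pathOrders G D A B) t := by
  have haA := hBA a haB haD
  obtain ⟨K, hK, hs⟩ := h.exists_hasSpan_of_subset_left ht ih h1 hA hBA haA hv hvA hav
  exact hK.hasSpan_of_nbrs_diff haA haB haD hs

end Rooted

end

section

variable {V : Type*} {G : SimpleGraph V} {D K : Finset V} {A B : Set V} {b v x : V}

namespace Rooted

theorem of_mem_of_card_lt_three (h : Rooted G D A B 3) (h1 : UniqueRootNbr G D A)
    (hK : CutsOff G D A K) (hlt : K.card < 3) (hx : x ∈ K) :
    x ∈ nbrs G (A ∩ D) ∧ x ∈ B ∧ 1 ≤ degOn G K x ∧ rootedDeg G D A B x ≤ 3 := by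
  classical
  have hdeg := h.le_rootedDeg (hK.subset hx)
  have hle := hK.degOn_le_of_uniqueRootNbr h1 hx
  have hcard := degOn_lt_card (G := G) hx
  have hxA : x ∉ A := fun hxA => hK.notMem hxA hx
  have hleB := rootedDeg_le_of_notMem_left (G := G) (D := D) (B := B) hxA
  split_ifs at hle with hxN
  · refine ⟨hxN, ?_, by omega, by omega⟩
    by_contra hxB
    rw [rootedDeg_of_notMem hxA hxB] at hdeg
    omega
  · omega

theorem exists_adj_adj_of_card_lt_three (h : Rooted G D A B 3) (hA : UniqueRootNbr G D A)
    (hB : UniqueRootNbr G D B) (hK : CutsOff G D A K) (hlt : K.card < 3) (hv : v ∈ K) :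
    ∃ a ∈ A, a ∈ D ∧ a ∉ B ∧ ∃ u ∈ K, u ∈ B ∧ G.Adj a v ∧ G.Adj v u ∧
      ∃ g ∈ D, g ∉ B ∧ G.Adj g a := by
  obtain ⟨⟨a, ⟨haA, haD⟩, hva⟩, hvB, hdv, -⟩ := h.of_mem_of_card_lt_three hA hK hlt hv
  obtain ⟨u, hu, hvu⟩ := exists_adj_of_one_le_degOn hdv
  have huB := (h.of_mem_of_card_lt_three hA hK hlt hu).2.1
  have haK := hK.notMem haA
  have haB : a ∉ B := fun haB => haK <| by
    rwa [hB v (hK.subset hv) a haD u (hK.subset hu) haB huB hva hvu]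
  have hda := h.le_rootedDeg haD
  have hleB := rootedDeg_le_of_notMem_right (G := G) (D := D) (A := A) haB
  obtain ⟨g, hg, hag, hgv⟩ := exists_adj_ne_of_two_le_degOn (G := G) (D := D) (v := a)
    (by omega) v
  exact ⟨a, haA, haD, haB, u, hu, huB, hva.symm, hvu, g, hg,
    fun hgB => hgv (hB a haD g hg v (hK.subset hv) hgB hvB hag hva.symm), hag.symm⟩

theorem hasSpan_two_of_right_notMem_left (h : Rooted G D A B 3) (ih : SpanBelow G D 2)
    (hA : MeetsCutOffs G D A) (hB : MeetsCutOffs G D B) (h1A : UniqueRootNbr G D A)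
    (h1B : UniqueRootNbr G D B) (hb : b ∈ B) (hbD : b ∈ D) (hbA : b ∉ A) :
    HasSpan (pathOrders G D A B) 2 := by
  classical
  obtain ⟨K, hK, hKc, hbK⟩ := CutsOff.exists_connOn_of_mem (G := G) hbD hbA
  by_cases hK3 : 3 ≤ K.card
  · exact h.hasSpan_of_contract ih h1A hA hK hKc ⟨b, hb, hbK⟩ hK3
  obtain ⟨a, haA, haD, haB, u, hu, huB, hab, hbu, g, hg, hgB, hga⟩ :=
    h.exists_adj_adj_of_card_lt_three h1A h1B hK (not_le.1 hK3) hbK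
  have huD := hK.subset hu
  have hau : a ≠ u := fun hau => hK.notMem haA (hau ▸ hu)
  by_cases hgA : g ∈ A
  · have := hga.ne
    have := hab.ne
    have := hbu.ne
    exact .of_mem_of_add_two_mem (n := 2)
      ⟨a, haA, b, hb, .cons haD hab (.single (by grind))⟩
      ⟨g, hgA, u, huB, .cons hg hga (.cons (by grind) hab (.cons (by grind) hbu
        (.single (by grind))))⟩
  · obtain ⟨L, hL, hLc, haL⟩ := CutsOff.exists_connOn_of_mem (G := G) haD haB
    have hgL : g ∈ L := (hL.adj haL hg hga.symm).resolve_right hgB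
    have hdg := h.le_rootedDeg hg
    rw [rootedDeg_of_notMem hgA hgB] at hdg
    rw [pathOrders_comm]
    exact h.symm.hasSpan_of_contract ih h1B hB hL hLc ⟨a, haA, haL⟩
      (hL.three_le_card h1B hgL hdg)

theorem exists_leaf_of_subset_left (h : Rooted G D A B 3) (h3 : 3 ≤ D.card)
    (h1 : UniqueRootNbr G D A) (hBA : ∀ b ∈ B, b ∈ D → b ∈ A)
    (hBN : ∀ b ∈ B, b ∈ D → ∀ w ∈ D, G.Adj b w → w ∈ A) :
    ∃ b ∈ B, b ∈ A ∧ b ∈ D ∧ ∃ a ∈ A, a ∈ D ∧ G.Adj b a ∧ (∀ w ∈ D, G.Adj b w → w = a) ∧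
      ∃ g ∈ D, g ∉ A ∧ G.Adj a g := by
  classical
  obtain ⟨b, hb, hbD⟩ := h.right
  have hbA := hBA b hb hbD
  obtain ⟨a, haD, hba⟩ := exists_adj_of_one_le_degOn (G := G) (D := D) (v := b)
    (by have := h.le_degOn_add_two hbD; omega)
  have haA := hBN b hb hbD a haD hba
  have hbu : ∀ w ∈ D, G.Adj b w → w = a := fun w hw hbw =>
    h1 b hbD w hw a haD (hBN b hb hbD w hw hbw) haA hbw hba
  have haB : a ∉ B := by
    intro haB
    obtain ⟨x, hx, hxab⟩ : ∃ x ∈ D, x ∉ ({a, b} : Finset V) :=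
      Finset.exists_mem_notMem_of_card_lt_card (Finset.card_le_two.trans_lt h3)
    obtain ⟨y, _, z, hz, hyab, hzab, hyz⟩ := h.conn.exists_adj (S := {a, b}) hbD hx
      (by simp) (by simpa using hxab)
    obtain rfl | rfl : y = a ∨ y = b := by simpa using hyab
    · exact hzab (.inr (h1 y haD z hz b hbD (hBN y haB haD z hz hyz) hbA hyz hba.symm))
    · exact hzab (.inl (hbu z hz hyz))
  have hda := h.le_rootedDeg haD
  have hleB := rootedDeg_le_of_notMem_right (G := G) (D := D) (A := A) haB
  obtain ⟨g, hgD, hag, hgb⟩ := exists_adj_ne_of_two_le_degOn (G := G) (D := D) (v := a)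
    (by omega) b
  exact ⟨b, hb, hbA, hbD, a, haA, haD, hba, hbu, g, hgD,
    fun hgA => hgb (h1 a haD g hgD b hbD hgA hbA hag hba.symm), hag⟩

theorem hasSpan_two_of_subset_left (h : Rooted G D A B 3) (h3 : 3 ≤ D.card)
    (ih : SpanBelow G D 2) (hA : MeetsCutOffs G D A) (h1 : UniqueRootNbr G D A)
    (hBA : ∀ b ∈ B, b ∈ D → b ∈ A) (hBN : ∀ b ∈ B, b ∈ D → ∀ w ∈ D, G.Adj b w → w ∈ A) :
    HasSpan (pathOrders G D A B) 2 := by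
  classical
  obtain ⟨b, hb, hbA, hbD, a, haA, haD, hba, hbu, g, hg, hgA, hag⟩ :=
    h.exists_leaf_of_subset_left h3 h1 hBA hBN
  obtain ⟨K, hK, hs⟩ := h.exists_hasSpan_of_subset_left le_rfl ih h1 hA hBA haA hg hgA hag
  have haK := hK.notMem haA
  have hbK := hK.notMem hbA
  have hab := hba.ne
  refine hs.shift 3 ?_
  rintro n ⟨u, ⟨c, ⟨⟨hcA, hcD⟩, hca⟩, huc⟩, v, hv, hp⟩
  rw [mem_nbrs_singleton] at hv
  have hcb : c ≠ b := by
    rintro rfl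
    exact haK (hbu u (hK.subset hp.left_mem) huc.symm ▸ hp.left_mem)
  have hpab : PathIn G (insert a (insert b K)) u b (n + 2) :=
    hp.append (E := {a, b}) (.cons (by simp) hba.symm (.single (by grind))) hv
      (by simp [haK, hbK]) (by grind) (by grind)
  have hKD := hK.subset
  have hcK := hK.notMem hcA
  exact ⟨c, hcA, b, hb, hpab.cons_of_notMem (by grind) hcD (by grind) huc.symm⟩

theorem hasSpan_two_of_spanBelow (h : Rooted G D A B 3) (h3 : 3 ≤ D.card)
    (ih : SpanBelow G D 2) : HasSpan (pathOrders G D A B) 2 := by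
  by_contra hn
  have hn' : ¬ HasSpan (pathOrders G D B A) 2 := by rwa [pathOrders_comm]
  have hB := h.meetsCutOffs_right le_rfl ih hn
  have hA := h.symm.meetsCutOffs_right le_rfl ih hn'
  have h1A := hB.uniqueRootNbr hn
  have h1B := hA.uniqueRootNbr hn'
  by_cases hBA : ∀ b ∈ B, b ∈ D → b ∈ A
  · by_cases hBN : ∀ b ∈ B, b ∈ D → ∀ w ∈ D, G.Adj b w → w ∈ A
    · exact hn (h.hasSpan_two_of_subset_left h3 ih hA h1A hBA hBN)
    · push Not at hBN
      obtain ⟨b, hb, hbD, w, hw, hbw, hwA⟩ := hBN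
      exact hn (h.hasSpan_of_subset_left le_rfl ih h1A hA hBA hb hbD hw hwA hbw)
  · push Not at hBA
    obtain ⟨b, hb, hbD, hbA⟩ := hBA
    exact hn (h.hasSpan_two_of_right_notMem_left ih hA hB h1A h1B hb hbD hbA)

theorem hasSpan_two (h : Rooted G D A B 3) (h3 : 3 ≤ D.card) : HasSpan (pathOrders G D A B) 2 := by
  induction hN : D.card using Nat.strong_induction_on generalizing D A B with
  | _ N ih =>
    subst hN
    exact h.hasSpan_two_of_spanBelow h3 fun D' _ _ hlt h3' h' => ih D'.card hlt h' h3' rfl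

end Rooted

end

section

variable {V : Type*} {G : SimpleGraph V} {D E F K : Finset V} {A B Q : Set V} {e s v x y : V}
  {n m t : ℕ}

theorem RootedExcept.of_meetsCutOffs (s : V) (hD : ConnOn G D) (hA : ∃ a ∈ A, a ∈ D)
    (hB : ∃ b ∈ B, b ∈ D) (hdeg : ∀ v ∈ D, 3 ≤ rootedDeg G D A B v)
    (hmeets : MeetsCutOffs G D (A ∪ B)) : RootedExcept G D A B s where
  conn := hD
  left := hA
  right := hB
  two := by
    obtain ⟨a, ha, haD⟩ := hA
    have hda := (hdeg a haD).trans rootedDeg_le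
    obtain ⟨y, hy, hay⟩ := exists_adj_of_one_le_degOn (G := G) (D := D) (v := a) (by omega)
    obtain ⟨x, hx, hxD, hxa⟩ := hmeets.exists_ne hy hay.ne'
    exact ⟨a, haD, x, hxD, hxa.symm, .inl ha, hx⟩
  deg v hv _ := hdeg v hv
  meets e F hF _ := hmeets e F hF

theorem add_add_one_mem_pathOrders (hn : n ∈ pathOrders G K A (nbrs G {e}))
    (hm : m ∈ pathOrders G E (nbrs G {e}) B) (he : e ∈ D) (heK : e ∉ K) (heE : e ∉ E)
    (hKE : Disjoint K E) (hK : K ⊆ D) (hE : E ⊆ D) : n + m + 1 ∈ pathOrders G D A B := by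
  classical
  obtain ⟨u, hu, v, hv, hp⟩ := hn
  obtain ⟨w, hw, x, hx, hp'⟩ := hm
  rw [mem_nbrs_singleton] at hv hw
  have hpe : PathIn G (insert e E) e x (m + 1) :=
    hp'.cons_of_notMem heE (Finset.mem_insert_self e E) (Finset.subset_insert e E) hw.symm
  exact ⟨u, hu, x, hx, hp.append hpe hv (by simp [heK, hKE]) hK (Finset.insert_subset he hE)⟩

theorem hasSpan_add_of_glue {s t : ℕ} (hs : HasSpan (pathOrders G K A (nbrs G {e})) s)
    (ht : HasSpan (pathOrders G E (nbrs G {e}) B) t) (he : e ∈ D) (heK : e ∉ K) (heE : e ∉ E)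
    (hKE : Disjoint K E) (hK : K ⊆ D) (hE : E ⊆ D) : HasSpan (pathOrders G D A B) (s + t) :=
  (hs.add ht (T := {k | k + 1 ∈ pathOrders G D A B}) fun _ hn _ hm =>
    add_add_one_mem_pathOrders hn hm he heK heE hKE hK hE).shift 1 fun _ hk => hk

namespace CutsOff

theorem subset_of_connOn (hF : CutsOff G D Q F) (hK : CutsOff G D Q K) (hKc : ConnOn G K)
    (hx : x ∈ K) (hxF : x ∈ F) : K ⊆ F := by
  intro z hz
  by_contra hzF
  obtain ⟨u, -, v, hv, huF, hvF, huv⟩ := hKc.exists_adj (S := F) hx hz hxF hzF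
  exact (hF.adj huF (hK.subset hv) huv).elim hvF fun hvQ => hK.notMem hvQ hv

theorem erase [DecidableEq V] (hK : CutsOff G D {x, y} K) : CutsOff G (D.erase y) {x} K :=
  ⟨hK.nonempty, fun u hu => by have := hK.2 u hu; grind⟩

theorem degOn_le_pair (hK : CutsOff G D {x, y} K) (hv : v ∈ K) :
    degOn G D v ≤ rootedDeg G K (nbrs G {x}) (nbrs G {y}) v := by
  classical
  have hxy : degOn G D v ≤ degOn G K v + degOn G {x, y} v :=
    degOn_le_add fun w hw hvw => by simpa using hK.adj hv hw hvw
  have hsplit : degOn G {x, y} v ≤ degOn G {x} v + degOn G {y} v := degOn_le_add (by simp)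
  have hx : degOn G {x} v ≤ if v ∈ nbrs G {x} then 1 else 0 := by
    simpa using degOn_le_ite (G := G) (D := {x}) (v := v) (by simp)
  have hy : degOn G {y} v ≤ if v ∈ nbrs G {y} then 1 else 0 := by
    simpa using degOn_le_ite (G := G) (D := {y}) (v := v) (by simp)
  unfold rootedDeg
  split_ifs at * <;> omega

end CutsOff

/-- A counterexample to `Rooted.hasSpan_three` all of whose smaller instances have a span of `3`. -/
structure MinCounterexample (G : SimpleGraph V) (D : Finset V) (A B : Set V) : Prop where
  rooted : Rooted G D A B 4
  smaller : Rooted.SpanBelow G D 3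
  not_hasSpan : ¬ HasSpan (pathOrders G D A B) 3

theorem Rooted.four_le_card (h : Rooted G D A B 4) : 4 ≤ D.card := by
  classical
  by_contra! hlt
  have hdeg : ∀ v ∈ D, 2 ≤ degOn G D v := fun v hv => by
    have := h.le_degOn_add_two hv
    omega
  obtain ⟨v, hv⟩ := h.conn.nonempty
  obtain ⟨x, hx, hvx⟩ := exists_adj_of_one_le_degOn (one_le_two.trans (hdeg v hv))
  obtain ⟨y, hy, hvy, hyx⟩ := exists_adj_ne_of_two_le_degOn (hdeg v hv) x
  have hD : {v, x, y} = D := Finset.eq_of_subset_of_card_le (by grind) (by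
    rw [Finset.card_eq_three.2 ⟨v, x, y, hvx.ne, hvy.ne, hyx.symm, rfl⟩]
    omega)
  obtain ⟨w, hw, hxw, hwv⟩ := exists_adj_ne_of_two_le_degOn (hdeg x hx) v
  obtain rfl : w = y := by
    have := hxw.ne
    grind
  have h5 := (h.deg v hv).2 ⟨x, hx, w, hy, hvx, hvy, hxw⟩
  have := rootedDeg_le (G := G) (D := D) (A := A) (B := B) (v := v)
  have := degOn_lt_card (G := G) hv
  omega

namespace MinCounterexample

theorem symm (h : MinCounterexample G D A B) : MinCounterexample G D B A where
  rooted := h.rooted.symm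
  smaller := h.smaller
  not_hasSpan := by rw [pathOrders_comm]; exact h.not_hasSpan

theorem hasSpan_of_card_lt (h : MinCounterexample G D A B) {A' B' : Set V}
    (hlt : K.card < D.card) (hK : Rooted G K A' B' 4) : HasSpan (pathOrders G K A' B') 3 :=
  h.smaller K A' B' hlt (Nat.le_of_succ_le hK.four_le_card) hK

theorem meetsCutOffs_right (h : MinCounterexample G D A B) : MeetsCutOffs G D B :=
  h.rooted.meetsCutOffs_right (by norm_num) h.smaller h.not_hasSpan

theorem meetsCutOffs_left (h : MinCounterexample G D A B) : MeetsCutOffs G D A :=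
  h.symm.meetsCutOffs_right

theorem not_uniqueRootNbr_left (h : MinCounterexample G D A B) : ¬ UniqueRootNbr G D A := by
  intro h1
  by_cases hBA : ∀ b ∈ B, b ∈ D → b ∈ A
  · obtain ⟨a, haB, haD⟩ := h.rooted.right
    have hda := h.rooted.le_degOn_add_two haD
    obtain ⟨g, hg, hag, hgA⟩ : ∃ g ∈ D, G.Adj a g ∧ g ∉ A := by
      obtain ⟨x, hx, hax, -⟩ := exists_adj_ne_of_two_le_degOn (G := G) (D := D) (v := a)
        (by omega) a
      obtain ⟨y, hy, hay, hyx⟩ := exists_adj_ne_of_two_le_degOn (G := G) (D := D) (v := a)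
        (by omega) x
      by_contra! hN
      exact hyx (h1 a haD y hy x hx (hN y hy hay) (hN x hx hax) hay hax)
    exact h.not_hasSpan (h.rooted.hasSpan_of_subset_left (by norm_num) h.smaller h1
      h.meetsCutOffs_left hBA haB haD hg hgA hag)
  · push Not at hBA
    obtain ⟨b, hb, hbD, hbA⟩ := hBA
    obtain ⟨K, hK, hKc, hbK⟩ := CutsOff.exists_connOn_of_mem (G := G) hbD hbA
    exact h.not_hasSpan (hK.hasSpan_of_nbrs (h.hasSpan_of_card_lt (hK.card_lt h.rooted.left)
      (h.rooted.contract h1 h.meetsCutOffs_left hK hKc ⟨b, hb, hbK⟩)))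

theorem exists_two_adj_left (h : MinCounterexample G D A B) :
    ∃ q ∈ D, ∃ x ∈ A, ∃ y ∈ A, x ∈ D ∧ y ∈ D ∧ x ≠ y ∧ G.Adj q x ∧ G.Adj q y := by
  have h1 := h.not_uniqueRootNbr_left
  unfold UniqueRootNbr at h1
  push Not at h1
  obtain ⟨q, hq, x, hx, y, hy, hxA, hyA, hqx, hqy, hxy⟩ := h1
  exact ⟨q, hq, x, hxA, y, hyA, hx, hy, hxy, hqx, hqy⟩

theorem hasSpan_two_of_cutsOff (h : MinCounterexample G D A B) (he : e ∈ D)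
    (hK : CutsOff G D {e} K) (hKc : ConnOn G K) :
    HasSpan (pathOrders G K A (nbrs G {e})) 2 := by
  classical
  have heK := hK.notMem (Set.mem_singleton e)
  refine Rooted.hasSpan_two ⟨hKc, ?_, ?_, h.rooted.deg.of_le_add (k := 1) hK.subset ?_, ?_⟩ <|
    h.rooted.deg.three_le_card_of_cutsOff hK he fun u _ => by
      have := rootedDeg_le (G := G) (D := D) (A := A) (B := B) (v := u); omega
  · obtain ⟨u, hu, huA⟩ := h.meetsCutOffs_left e K hK
    exact ⟨u, huA, hu⟩
  · obtain ⟨-, u, hu, hue⟩ := hK.exists_adj_cutVertex h.rooted.conn he heK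
    exact ⟨u, mem_nbrs_singleton.2 hue, hu⟩
  · intro v hv
    have := hK.degOn_le hv
    unfold rootedDeg
    split_ifs at * <;> omega
  · exact hK.meetsCutOffs_union_nbrs (B := ∅) (by simp) (by simpa using h.meetsCutOffs_left)

theorem connOn_erase [DecidableEq V] (h : MinCounterexample G D A B) (he : e ∈ D) :
    ConnOn G (D.erase e) := by
  have hde := h.rooted.le_degOn_add_two he
  obtain ⟨x, hx, hex⟩ := exists_adj_of_one_le_degOn (G := G) (D := D) (v := e) (by omega)
  obtain ⟨K, hK, hKc, -⟩ := CutsOff.exists_connOn_of_mem (G := G) (Q := {e}) hx hex.ne'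
  have heK := hK.notMem (Set.mem_singleton e)
  have hKD : K ⊆ D.erase e := Finset.subset_erase.2 ⟨hK.subset, heK⟩
  suffices hDK : D.erase e ⊆ K by rwa [hDK.antisymm hKD]
  by_contra hDK
  obtain ⟨y, hy, hyK⟩ := Finset.not_subset.1 hDK
  obtain ⟨L, hL, hLc, hyL⟩ := CutsOff.exists_connOn_of_mem (G := G) (Q := {e})
    (Finset.mem_of_mem_erase hy) (Finset.ne_of_mem_erase hy)
  have hKL : Disjoint K L := Finset.disjoint_left.2 fun z hzK hzL =>
    hyK (hK.subset_of_connOn hL hLc hzL hzK hyL)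
  have hLB : HasSpan (pathOrders G L (nbrs G {e}) B) 2 := by
    rw [pathOrders_comm]
    exact h.symm.hasSpan_two_of_cutsOff he hL hLc
  exact h.not_hasSpan ((hasSpan_add_of_glue (h.hasSpan_two_of_cutsOff he hK hKc) hLB he heK
    (hL.notMem rfl) hKL hK.subset hL.subset).of_le (by norm_num))

theorem exists_adj_of_cutsOff_pair (h : MinCounterexample G D A B) (hx : x ∈ D) (hy : y ∈ D)
    (hxy : x ≠ y) (hK : CutsOff G D {x, y} K) : ∃ u ∈ K, G.Adj u x := by
  classical
  exact (hK.erase.exists_adj_cutVertex (h.connOn_erase hy) (Finset.mem_erase.2 ⟨hxy, hx⟩)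
    (hK.notMem (.inl rfl))).2

theorem hasSpan_of_cutsOff_pair (h : MinCounterexample G D A B) (hx : x ∈ D) (hy : y ∈ D)
    (hxy : x ≠ y) (hK : CutsOff G D {x, y} K) (hKc : ConnOn G K) (hA : ∀ v ∈ K, v ∉ A)
    (hB : ∀ v ∈ K, v ∉ B) : HasSpan (pathOrders G K (nbrs G {x}) (nbrs G {y})) 3 := by
  obtain ⟨u, hu, hux⟩ := h.exists_adj_of_cutsOff_pair hx hy hxy hK
  obtain ⟨w, hw, hwy⟩ := h.exists_adj_of_cutsOff_pair hy hx hxy.symm (Set.pair_comm x y ▸ hK)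
  refine h.hasSpan_of_card_lt (hK.card_lt ⟨x, .inl rfl, hx⟩)
    ⟨hKc, ⟨u, mem_nbrs_singleton.2 hux, hu⟩, ⟨w, mem_nbrs_singleton.2 hwy, hw⟩,
      h.rooted.deg.of_le hK.subset fun v hv => ?_, fun f F hF => ?_⟩
  · rw [rootedDeg_of_notMem (hA v hv) (hB v hv)]
    exact hK.degOn_le_pair hv
  · by_contra! hN
    obtain ⟨z, hz, hzA⟩ := h.meetsCutOffs_left f F <| hK.trans hF fun z hz v _ hv hzv =>
      hN z hz <| hv.imp (fun hvx => ⟨v, hvx, hzv⟩) fun hvy => ⟨v, hvy, hzv⟩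
    exact hA z (hF.subset hz) hzA

end MinCounterexample

end

section

variable {V : Type*} {G : SimpleGraph V} {D E F K : Finset V} {A B : Set V} {b d g p q u x : V}
  {n t : ℕ}

theorem add_two_mem_pathOrders_of_adj (h : n ∈ pathOrders G K (nbrs G {q}) B) (hK : K ⊆ D)
    (hq : q ∈ D) (hqK : q ∉ K) (hp : p ∈ D) (hpA : p ∈ A) (hpK : p ∉ K) (hpq : G.Adj p q) :
    n + 2 ∈ pathOrders G D A B := by
  classical
  have hqB : n + 1 ∈ pathOrders G (insert q K) (nbrs G {p}) B :=
    add_one_mem_pathOrders_left h (by simp [hqK, hpq.symm]) (Finset.subset_insert q K)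
  exact add_one_mem_pathOrders_left hqB (by simp [hpA, hp, hpK, hpq.ne])
    (Finset.insert_subset hq hK)

-- A path entering `K` next to `p ∈ P` extends backwards by `p`, or by `x q p` with `x ∈ P`.
theorem hasSpan_add_two_of_nontrivial {P : Finset V}
    (hs : HasSpan (pathOrders G K (nbrs G P) B) t) (hK : K ⊆ D)
    (hP : ∀ p ∈ P, p ∈ A ∧ p ∈ D ∧ G.Adj q p ∧ p ∉ K) (hq : q ∈ D) (hqK : q ∉ K)
    (hPn : P.Nontrivial) : HasSpan (pathOrders G D A B) (t + 2) := by
  classical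
  have h13 : HasSpan ({1, 3} : Set ℕ) 2 :=
    HasSpan.of_mem_of_add_two_mem (n := 1) (.inl rfl) (.inr rfl)
  refine hs.add h13 ?_
  rintro n hn m (rfl | rfl)
  · exact add_one_mem_pathOrders_left hn
      (fun p hp => ⟨(hP p hp).1, (hP p hp).2.1, (hP p hp).2.2.2⟩) hK
  · obtain ⟨u, ⟨p, hpP, hup⟩, v, hv, huv⟩ := hn
    obtain ⟨p', hp', hne⟩ := hPn.exists_ne p
    obtain ⟨-, hpD, hqp, hpK⟩ := hP p hpP
    obtain ⟨hpA', hpD', hqp', hpK'⟩ := hP p' hp'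
    have hpv : PathIn G (insert p K) p v (n + 1) :=
      huv.cons_of_notMem hpK (by simp) (Finset.subset_insert _ _) hup.symm
    have hqv : PathIn G (insert q (insert p K)) q v (n + 1 + 1) :=
      hpv.cons_of_notMem (by simp [hqK, hqp.ne]) (by simp) (Finset.subset_insert _ _) hqp
    exact ⟨p', hpA', v, hv, hqv.cons_of_notMem (by simp [hqp'.ne', hne, hpK']) hpD'
      (by simp [Finset.insert_subset_iff, hq, hpD, hK]) hqp'.symm⟩

namespace MinCounterexample

theorem hasSpan_two_of_cutsOff_pair (h : MinCounterexample G D A B) (hq : q ∈ D) (hd : d ∈ D)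
    (hqd : q ≠ d) (hF : CutsOff G D {q, d} F) (hFc : ConnOn G F) (hFB : ∀ v ∈ F, v ∉ B)
    (hFq : ∀ v ∈ F, v ∈ A → ¬ G.Adj q v) (hx : x ∈ A) (hxF : x ∈ F)
    (hmeets : MeetsCutOffs G F (A ∪ nbrs G {d})) :
    HasSpan (pathOrders G F A (nbrs G {d})) 2 := by
  have hxq : x ∉ nbrs G {q} := fun hxq => hFq x hxF hx (mem_nbrs_singleton.1 hxq).symm
  obtain ⟨u, hu, hud⟩ := h.exists_adj_of_cutsOff_pair hd hq hqd.symm (Set.pair_comm q d ▸ hF)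
  refine Rooted.hasSpan_two ⟨hFc, ⟨x, hx, hxF⟩, ⟨u, mem_nbrs_singleton.2 hud, hu⟩,
    h.rooted.deg.of_le_add (k := 1) hF.subset fun v hv => ?_, hmeets⟩ ?_
  · have hv' := hF.degOn_le_pair hv
    have hvB := hFB v hv
    unfold rootedDeg at *
    split_ifs at * <;> omega
  · have hdeg := h.rooted.le_rootedDeg (hF.subset hxF)
    have hx' := hF.degOn_le_pair hxF
    have hxB := hFB x hxF
    have hlt := degOn_lt_card (G := G) hxF
    unfold rootedDeg at *
    split_ifs at * <;> omega

theorem exists_ne_of_cutsOff_pair [DecidableEq V] (h : MinCounterexample G D A B)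
    (hF : CutsOff G D {q, d} F) (hFB : ∀ v ∈ F, v ∉ B) (hg : g ∈ D.erase d \ F) (hgd : G.Adj g d)
    (hgq : g ≠ q) : ∃ x ∈ D.erase d \ F, ∃ y ∈ D.erase d \ F, x ≠ y ∧
      x ∈ nbrs G {d} ∪ B ∧ y ∈ nbrs G {d} ∪ B := by
  have aux : ∀ r ∈ D, G.Adj r d → ∀ z ∈ B, z ∈ D → z ≠ d → G.Adj r z →
      ∃ x ∈ D.erase d \ F, ∃ y ∈ D.erase d \ F, x ≠ y ∧
        x ∈ nbrs G {d} ∪ B ∧ y ∈ nbrs G {d} ∪ B := by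
    intro r hr hrd z hz hzD hzd hrz
    have hzF : z ∉ F := fun hzF => hFB z hzF hz
    have hzE : z ∈ D.erase d \ F := by simp [hzF, hzd, hzD]
    by_cases hzg : z = g
    · have hrF : r ∉ F := fun hrF => by
        rcases hF.adj hrF hzD hrz with hz' | rfl | rfl
        exacts [hzF hz', hgq hzg.symm, hzd rfl]
      exact ⟨r, by simp [hrF, hrd.ne, hr], z, hzE, hrz.ne, .inl (mem_nbrs_singleton.2 hrd), .inr hz⟩
    · exact ⟨z, hzE, g, hg, hzg, .inr hz, .inl (mem_nbrs_singleton.2 hgd)⟩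
  obtain ⟨r, hr, y, hy, z, hz, hyD, hzD, hyz, hry, hrz⟩ := h.symm.exists_two_adj_left
  by_cases hyd : y = d
  · subst hyd
    exact aux r hr hry z hz hzD hyz.symm hrz
  by_cases hzd : z = d
  · subst hzd
    exact aux r hr hrz y hy hyD hyz hry
  have hyF : y ∉ F := fun hyF => hFB y hyF hy
  have hzF : z ∉ F := fun hzF => hFB z hzF hz
  exact ⟨y, by simp [*], z, by simp [*], hyz, .inr hy, .inr hz⟩

theorem hasSpan_one_sdiff_of_cutsOff_pair [DecidableEq V] (h : MinCounterexample G D A B)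
    (hq : q ∈ D) (hd : d ∈ D) (hqd : q ≠ d) (hF : CutsOff G D {q, d} F) (hFB : ∀ v ∈ F, v ∉ B)
    (hg : g ∈ D.erase d \ F) (hgd : G.Adj g d) (hgq : g ≠ q) :
    HasSpan (pathOrders G (D.erase d \ F) (nbrs G {d}) B) 1 := by
  classical
  have hEF : ∀ v ∈ D.erase d \ F, v ≠ q → ∀ w ∈ F, ¬ G.Adj v w := by
    intro v hv hvq w hw hvw
    have := hF.adj hw (v := v) (by grind) hvw.symm
    grind
  obtain ⟨y, hy, hyD, hyd⟩ := h.meetsCutOffs_right.exists_ne hq hqd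
  have hyF : y ∉ F := fun hyF => hFB y hyF hy
  refine RootedExcept.hasSpan_one (s := q)
    ⟨hF.erase.connOn_sdiff (h.connOn_erase hd) (Finset.mem_erase.2 ⟨hqd, hq⟩),
      ⟨g, mem_nbrs_singleton.2 hgd, hg⟩, ⟨y, hy, by simp [hyd, hyD, hyF]⟩,
      h.exists_ne_of_cutsOff_pair hF hFB hg hgd hgq, fun v hv hvq => ?_, fun e L hL hqL => ?_⟩
  · have hvD := h.rooted.le_rootedDeg (v := v) (by grind)
    have hle : degOn G D v ≤ degOn G (D.erase d \ F) v + degOn G {d} v :=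
      degOn_le_add fun w hw hvw => by
        have := hEF v hv hvq w
        grind
    have hle' : degOn G {d} v ≤ if v ∈ nbrs G {d} then 1 else 0 := by
      simpa using degOn_le_ite (G := G) (D := {d}) (v := v) (by simp)
    unfold rootedDeg at *
    split_ifs at * <;> omega
  · by_contra! hN
    obtain ⟨u, hu, huB⟩ := h.meetsCutOffs_right e L ⟨hL.nonempty, fun u hu => by
      have huE := hL.subset hu
      refine ⟨(by grind), fun hue => hL.notMem hue hu, fun v hv huv => ?_⟩
      have hvd : v ≠ d := fun hvd => hN u hu (.inl (mem_nbrs_singleton.2 (hvd ▸ huv)))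
      have hvF : v ∉ F := fun hvF => hEF u huE (ne_of_mem_of_not_mem hu hqL) v hvF huv
      exact hL.adj hu (by simp [*]) huv⟩
    exact hN u hu (.inr huB)

theorem meetsCutOffs_of_cutsOff_pair (h : MinCounterexample G D A B) (hq : q ∈ D)
    (hF : CutsOff G D {q, d} F) (hFc : ConnOn G F) (hFB : ∀ v ∈ F, v ∉ B) (hx : x ∈ A)
    (hxF : x ∈ F) (hE : ConnOn G E) (hED : E ⊆ D) (hqE : q ∈ E) (hFE : Disjoint F E)
    (hb : ∃ b ∈ B, b ∈ E) : MeetsCutOffs G F (A ∪ nbrs G {d}) := by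
  classical
  by_contra hN
  unfold MeetsCutOffs at hN
  push Not at hN
  obtain ⟨f, L₀, hL₀, hmiss⟩ := hN
  obtain ⟨y, hy⟩ := hL₀.nonempty
  obtain ⟨L, hLL₀, hL, hLc, -⟩ := hL₀.exists_connOn_subset hy
  have hmissL : ∀ u ∈ L, u ∉ A ∪ nbrs G {d} := fun u hu => hmiss u (hLL₀ hu)
  have hxL : x ∉ L := fun hxL => hmissL x hxL (.inl hx)
  obtain ⟨hfF, -⟩ := hL.exists_adj_cutVertex hFc hxF hxL
  have hqF : q ∉ F := hF.notMem (.inl rfl)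
  have hLD : CutsOff G D {f, q} L := ⟨hL.nonempty, fun u hu => by
    have huF := hL.subset hu
    refine ⟨hF.subset huF, ?_, fun v hv huv => ?_⟩
    · rintro (rfl | rfl)
      exacts [hL.notMem rfl hu, hqF huF]
    · rcases hF.adj huF hv huv with hvF | rfl | rfl
      · exact (hL.adj hu hvF huv).imp_right .inl
      · exact .inr (.inr rfl)
      · exact absurd (.inr (mem_nbrs_singleton.2 huv)) (hmissL u hu)⟩
  have hs := h.hasSpan_of_cutsOff_pair (hF.subset hfF) hq (ne_of_mem_of_not_mem hfF hqF) hLD hLc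
    (fun v hv hvA => hmissL v hv (.inl hvA)) fun v hv => hFB v (hL.subset hv)
  rw [pathOrders_comm] at hs
  have hsF : HasSpan (pathOrders G F (nbrs G {q}) A) 3 :=
    hasSpan_pathOrders_of_connOn hs (hL.connOn_sdiff hFc hfF) (by simp [hfF, hL.notMem rfl])
      ⟨x, hx, by simp [hxF, hxL]⟩ Finset.disjoint_sdiff hL.subset Finset.sdiff_subset
  rw [pathOrders_comm] at hsF
  exact h.not_hasSpan (hasSpan_pathOrders_of_connOn hsF hE hqE hb hFE hF.subset hED)

theorem not_cutsOff_pair (h : MinCounterexample G D A B) (hq : q ∈ D) (hFc : ConnOn G F)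
    (hFB : ∀ v ∈ F, v ∉ B) (hFq : ∀ v ∈ F, v ∈ A → ¬ G.Adj q v) (hE : ConnOn G E) (hED : E ⊆ D)
    (hFE : Disjoint F E) (hd : d ∈ E) (hqE : q ∉ E) (hb : b ∈ B) (hbE : b ∈ E) (hp : p ∈ A)
    (hpD : p ∈ D) (hpE : p ∉ E) (hqp : G.Adj q p) (hu : u ∈ E) (hup : G.Adj u p) :
    ¬ CutsOff G D {q, d} F := by
  classical
  intro hF
  have hqd : q ≠ d := (ne_of_mem_of_not_mem hd hqE).symm
  have hqF : q ∉ F := hF.notMem (.inl rfl)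
  have hpF : p ∉ F := fun hpF => hFq p hpF hp hqp
  by_cases hFA : ∃ x ∈ F, x ∈ A
  · obtain ⟨x, hxF, hx⟩ := hFA
    have hmeets := h.meetsCutOffs_of_cutsOff_pair (E := insert q (insert p E)) hq hF hFc hFB hx hxF
      ((hE.insert hu hup.symm).insert (Finset.mem_insert_self p E) hqp)
      (by simp [Finset.insert_subset_iff, hq, hpD, hED]) (by simp) (by simp [hqF, hpF, hFE])
      ⟨b, hb, by simp [hbE]⟩
    obtain ⟨g, hg, hgd, hgq⟩ : ∃ g ∈ D.erase d \ F, G.Adj g d ∧ g ≠ q := by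
      by_cases hud : u = d
      · subst hud
        exact ⟨p, by simp [hup.ne', hpD, hpF], hup.symm, hqp.ne'⟩
      · obtain ⟨y, -, z, hz, rfl, -, hyz⟩ := hE.exists_adj (S := {d}) hd hu rfl hud
        exact ⟨z, by simp [hED hz, Finset.disjoint_right.1 hFE hz, hyz.ne'], hyz.symm,
          ne_of_mem_of_not_mem hz hqE⟩
    exact h.not_hasSpan (hasSpan_add_of_glue
      (h.hasSpan_two_of_cutsOff_pair hq (hED hd) hqd hF hFc hFB hFq hx hxF hmeets)
      (h.hasSpan_one_sdiff_of_cutsOff_pair hq (hED hd) hqd hF hFB hg hgd hgq) (hED hd)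
      (hF.notMem (.inr rfl)) (by simp) Finset.disjoint_sdiff hF.subset
      (Finset.sdiff_subset.trans (Finset.erase_subset d D)))
  · push Not at hFA
    have hFED : F ∪ E ⊆ D := Finset.union_subset hF.subset hED
    have hs : HasSpan (pathOrders G (F ∪ E) (nbrs G {q}) B) 3 :=
      hasSpan_pathOrders_of_connOn (h.hasSpan_of_cutsOff_pair hq (hED hd) hqd hF hFc hFA hFB) hE hd
        ⟨b, hb, hbE⟩ hFE Finset.subset_union_left Finset.subset_union_right
    exact h.not_hasSpan (hs.shift 2 fun n hn => add_two_mem_pathOrders_of_adj hn hFED hq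
      (by simp [hqF, hqE]) hpD hp (by simp [hpF, hpE]) hqp.symm)

end MinCounterexample

end

section

variable {V : Type*} {G : SimpleGraph V} {D K : Finset V} {A B Q : Set V}
  {b p q u v w x y : V} {t : ℕ}

open Classical in
/-- The neighbours of `q` in `D` that are roots in `A`. -/
noncomputable def rootNbrs (G : SimpleGraph V) (D : Finset V) (A : Set V) (q : V) : Finset V :=
  {x ∈ D | x ∈ A ∧ G.Adj q x}

@[simp] theorem mem_rootNbrs : x ∈ rootNbrs G D A q ↔ x ∈ D ∧ x ∈ A ∧ G.Adj q x := by
  simp [rootNbrs]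

theorem CutsOff.meetsCutOffs_nbrs_union (hK : CutsOff G D Q K) (hB : MeetsCutOffs G D B) :
    MeetsCutOffs G K (nbrs G Q ∪ B) := by
  intro e F hF
  by_contra! hN
  obtain ⟨u, hu, huB⟩ := hB e F <| hK.trans hF fun u hu v _ hv huv =>
    hN u hu (.inl ⟨v, hv, huv⟩)
  exact hN u hu (.inr huB)

theorem CutsOff.rootedDeg_le_nbrs_pair (hK : CutsOff G D {q, w} K) (hv : v ∈ K)
    (hvA : v ∈ A → ¬ (G.Adj v q ∧ G.Adj v w)) :
    rootedDeg G D A B v ≤ rootedDeg G K (nbrs G {q, w}) B v + 1 := by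
  have hdeg := hK.degOn_le_pair hv
  have hqw : v ∈ nbrs G {q, w} ↔ v ∈ nbrs G {q} ∨ v ∈ nbrs G {w} := by simp
  rw [← mem_nbrs_singleton, ← mem_nbrs_singleton] at hvA
  unfold rootedDeg at *
  by_cases hq : v ∈ nbrs G {q} <;> by_cases hw : v ∈ nbrs G {w} <;> by_cases hA : v ∈ A <;>
    simp only [hq, hw, hA, hqw, or_true, or_false, if_true, if_false] at * <;> grind

theorem MinRootedDeg.le_rootedDeg_nbrs_rootNbrs (h : MinRootedDeg G D A B (t + 1)) (hq : q ∈ D)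
    (hK : CutsOff G D (insert q (rootNbrs G D A q : Set V)) K) (hv : v ∈ K)
    (h2 : degOn G (rootNbrs G D A q) v ≤ 2) (h1 : v ∈ A → degOn G (rootNbrs G D A q) v ≤ 1) :
    t ≤ rootedDeg G K (nbrs G (rootNbrs G D A q)) B v := by
  classical
  set P := rootNbrs G D A q
  obtain ⟨hdeg, htri⟩ := h v (hK.subset hv)
  have hvP : v ∉ P := fun hvP => hK.notMem (.inr hvP) hv
  have hvA : v ∈ A → ¬ G.Adj v q := fun hvA hvq =>
    hvP (mem_rootNbrs.2 ⟨hK.subset hv, hvA, hvq.symm⟩)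
  have hKP : degOn G D v ≤ degOn G K v + degOn G (insert q P) v :=
    degOn_le_add fun w hw hvw => by simpa using hK.adj hv hw hvw
  have hqP : degOn G (insert q P) v ≤ degOn G {q} v + degOn G P v := degOn_le_add (by grind)
  have hvq : degOn G {q} v ≤ 1 := degOn_le_one (by simp)
  have hvq' : ¬ G.Adj v q → degOn G {q} v = 0 := fun hn => degOn_eq_zero (by simpa using hn)
  by_cases hvn : v ∈ nbrs G (P : Set V)
  · have hT : G.Adj v q → InTriangle G D v := fun hvq => by
      obtain ⟨p, hp, hvp⟩ := hvn
      have hp' := mem_rootNbrs.1 (Finset.mem_coe.1 hp)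
      exact ⟨q, hq, p, hp'.1, hvq, hvp, hp'.2.2⟩
    by_cases hA : v ∈ A
    · have := hvq' (hvA hA)
      have := h1 hA
      simp only [rootedDeg, if_pos hA, if_pos hvn] at hdeg ⊢
      omega
    · simp only [rootedDeg, if_neg hA, if_pos hvn] at hdeg htri ⊢
      by_cases hadj : G.Adj v q
      · have := htri (hT hadj)
        omega
      · have := hvq' hadj
        omega
  · have hvP0 : degOn G P v = 0 := degOn_eq_zero fun w hw hvw => hvn ⟨w, hw, hvw⟩
    simp only [rootedDeg, if_neg hvn] at hdeg ⊢
    by_cases hA : v ∈ A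
    · have := hvq' (hvA hA)
      rw [if_pos hA] at hdeg
      omega
    · rw [if_neg hA] at hdeg
      omega

-- With `p, x, y ∈ Q` and a path from `p` to `B` in `K`, the paths `p …`, `x q p …`, `w x q p …`
-- and `y w x q p …` have orders `m`, `m + 2`, `m + 3` and `m + 4`.
theorem hasSpan_three_of_common {Q : Finset V} (hKc : ConnOn G K) (hKD : K ⊆ D) (hq : q ∈ D)
    (hqK : q ∉ K) (hw : w ∈ D) (hwK : w ∉ K) (hwq : w ≠ q)
    (hQ : ∀ x ∈ Q, x ∈ A ∧ x ∈ D ∧ G.Adj q x ∧ G.Adj w x) (hQn : Q.Nontrivial)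
    (hwA : w ∈ A ∨ 2 < Q.card) (hQK : ∃ p ∈ Q, p ∈ K) (hB : ∃ b ∈ B, b ∈ K) :
    HasSpan (pathOrders G D A B) 3 := by
  classical
  obtain ⟨p, hp, hpK, b, hb, m, hpb⟩ := hKc.exists_pathIn_of_meets hQK hB
  obtain ⟨p', hp', hne⟩ := hQn.exists_ne p
  obtain ⟨hpA, hpD, hqp, hwp⟩ := hQ p hp
  obtain ⟨hpA', hpD', hqp', hwp'⟩ := hQ p' hp'
  have hqb : PathIn G (insert q (insert p (K \ Q))) q b (m + 1) :=
    hpb.cons_of_notMem (by simp [hqK, hqp.ne]) (by simp) (Finset.subset_insert _ _) hqp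
  have hp'b : PathIn G (insert p' (insert q (insert p (K \ Q)))) p' b (m + 2) :=
    hqb.cons_of_notMem (by simp [hqp'.ne', hne, hp']) (by simp) (Finset.subset_insert _ _) hqp'.symm
  have hwb : PathIn G (insert w (insert p' (insert q (insert p (K \ Q))))) w b (m + 3) :=
    hp'b.cons_of_notMem (by simp [hwp'.ne, hwp.ne, hwq, hwK]) (by simp) (Finset.subset_insert _ _)
      hwp'
  have hm : m ∈ pathOrders G D A B := ⟨p, hpA, b, hb, hpb.mono (by intro x; grind)⟩
  have hm2 : m + 2 ∈ pathOrders G D A B := ⟨p', hpA', b, hb, hp'b.mono (by intro x; grind)⟩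
  rcases hwA with hwA | hQ3
  · have hm3 : m + 3 ∈ pathOrders G D A B := ⟨w, hwA, b, hb, hwb.mono (by intro x; grind)⟩
    refine ⟨m, m + 3, le_rfl, hm, hm3, fun i _ _ => ?_⟩
    obtain rfl | rfl | rfl : i = m ∨ i = m + 1 ∨ i = m + 2 := by omega
    exacts [.inl hm, .inr hm2, .inl hm2]
  · obtain ⟨p'', hp'', hp''pp'⟩ := Finset.exists_mem_notMem_of_card_lt_card
      (Finset.card_le_two.trans_lt hQ3 : ({p, p'} : Finset V).card < Q.card)
    simp only [Finset.mem_insert, Finset.mem_singleton, not_or] at hp''pp'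
    obtain ⟨hpA'', hpD'', hqp'', hwp''⟩ := hQ p'' hp''
    have hm4 : m + 4 ∈ pathOrders G D A B := ⟨p'', hpA'', b, hb, hwb.cons_of_notMem
      (by simp [hwp''.ne', hqp''.ne', hp''pp', hp'']) hpD'' (by intro x; grind) hwp''.symm⟩
    refine ⟨m, m + 4, by omega, hm, hm4, fun i _ _ => ?_⟩
    obtain rfl | rfl | rfl | rfl : i = m ∨ i = m + 1 ∨ i = m + 2 ∨ i = m + 3 := by omega
    exacts [.inl hm, .inr hm2, .inl hm2, .inr hm4]

theorem hasSpan_add_two_of_common {Q : Finset V}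
    (hs : HasSpan (pathOrders G K (nbrs G {q, w}) B) t) (hKD : K ⊆ D) (hq : q ∈ D)
    (hqK : q ∉ K) (hw : w ∈ D) (hwK : w ∉ K) (hwq : w ≠ q)
    (hQ : ∀ x ∈ Q, x ∈ A ∧ x ∈ D ∧ G.Adj q x ∧ G.Adj w x) (hQn : Q.Nontrivial)
    (hQK : ∀ x ∈ Q, x ∉ K) : HasSpan (pathOrders G D A B) (t + 2) := by
  classical
  have h24 : HasSpan ({2, 4} : Set ℕ) 2 :=
    HasSpan.of_mem_of_add_two_mem (n := 2) (.inl rfl) (.inr rfl)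
  have key : ∀ {q w n}, q ∈ D → q ∉ K → w ∈ D → w ∉ K → w ≠ q →
      (∀ x ∈ Q, x ∈ A ∧ x ∈ D ∧ G.Adj q x ∧ G.Adj w x) → n ∈ pathOrders G K (nbrs G {q}) B →
      n + 2 ∈ pathOrders G D A B ∧ n + 4 ∈ pathOrders G D A B := by
    intro q w n hq hqK hw hwK hwq hQ hn
    obtain ⟨p, hp, p', hp', hne⟩ := hQn
    obtain ⟨hpA, hpD, hqp, hwp⟩ := hQ p hp
    obtain ⟨hpA', hpD', hqp', hwp'⟩ := hQ p' hp'
    have hpK := hQK p hp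
    refine ⟨add_two_mem_pathOrders_of_adj hn hKD hq hqK hpD hpA hpK hqp.symm, ?_⟩
    have hn2 : n + 2 ∈ pathOrders G (insert p (insert q K)) (nbrs G {w}) B :=
      add_two_mem_pathOrders_of_adj hn (by intro x; grind) (by simp) hqK (by simp)
        (mem_nbrs_singleton.2 hwp.symm) hpK hqp.symm
    exact add_two_mem_pathOrders_of_adj hn2 (by simp [Finset.insert_subset_iff, hpD, hq, hKD]) hw
      (by simp [hwp.ne, hwq, hwK]) hpD' hpA' (by simp [hne.symm, hqp'.ne', hQK p' hp']) hwp'.symm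
  refine hs.add h24 ?_
  rintro n ⟨u, ⟨z, hz, huz⟩, v, hv, huv⟩ m hm
  have hn : n + 2 ∈ pathOrders G D A B ∧ n + 4 ∈ pathOrders G D A B := by
    rcases hz with rfl | rfl
    · exact key hq hqK hw hwK hwq hQ ⟨u, mem_nbrs_singleton.2 huz, v, hv, huv⟩
    · exact key hw hwK hq hqK hwq.symm (fun x hx => by have := hQ x hx; tauto)
        ⟨u, mem_nbrs_singleton.2 huz, v, hv, huv⟩
  rcases hm with rfl | rfl
  exacts [hn.1, hn.2]

namespace MinCounterexample

theorem meetsCutOffs_of_cutsOff_rootNbrs (h : MinCounterexample G D A B) (hq : q ∈ D)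
    (hK : CutsOff G D (insert q (rootNbrs G D A q : Set V)) K) (hKc : ConnOn G K) (hb : b ∈ B)
    (hbK : b ∈ K) (hp : p ∈ rootNbrs G D A q) (hu : u ∈ K) (hup : G.Adj u p) :
    MeetsCutOffs G K (nbrs G (rootNbrs G D A q) ∪ B) := by
  classical
  by_contra hN
  unfold MeetsCutOffs at hN
  push Not at hN
  obtain ⟨d, F₀, hF₀, hmiss⟩ := hN
  obtain ⟨y, hy⟩ := hF₀.nonempty
  obtain ⟨F, hFF₀, hF, hFc, -⟩ := hF₀.exists_connOn_subset hy
  have hmissF : ∀ v ∈ F, v ∉ nbrs G (rootNbrs G D A q) ∪ B := fun v hv => hmiss v (hFF₀ hv)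
  have hbF : b ∉ F := fun hbF => hmissF b hbF (.inr hb)
  have huF : u ∉ F := fun huF => hmissF u huF (.inl ⟨p, hp, hup⟩)
  have hqK : q ∉ K := hK.notMem (.inl rfl)
  obtain ⟨hd, -⟩ := hF.exists_adj_cutVertex hKc hbK hbF
  obtain ⟨hpD, hpA, hqp⟩ := mem_rootNbrs.1 hp
  have hpK : p ∉ K := hK.notMem (.inr hp)
  refine h.not_cutsOff_pair (E := K \ F) hq hFc (fun v hv hvB => hmissF v hv (.inr hvB))
    (fun v hv hvA hqv => hK.notMem (.inr (mem_rootNbrs.2 ⟨hK.subset (hF.subset hv), hvA, hqv⟩))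
      (hF.subset hv)) (hF.connOn_sdiff hKc hd) (Finset.sdiff_subset.trans hK.subset)
    Finset.disjoint_sdiff (Finset.mem_sdiff.2 ⟨hd, hF.notMem rfl⟩) (by simp [hqK]) hb
    (Finset.mem_sdiff.2 ⟨hbK, hbF⟩) hpA hpD (by simp [hpK]) hqp
    (Finset.mem_sdiff.2 ⟨hu, huF⟩) hup ⟨hF.nonempty, fun v hv => ?_⟩
  have hvK := hF.subset hv
  refine ⟨hK.subset hvK, ?_, fun w hw hvw => ?_⟩
  · rintro (rfl | rfl)
    exacts [hqK hvK, hF.notMem rfl hv]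
  · rcases hK.adj hvK hw hvw with hwK | rfl | hwP
    · exact (hF.adj hv hwK hvw).imp_right .inr
    · exact .inr (.inl rfl)
    · exact absurd (.inl ⟨w, hwP, hvw⟩) (hmissF v hv)

theorem mem_rootNbrs_of_degOn_le (h : MinCounterexample G D A B) (hq : q ∈ D)
    (hP : (rootNbrs G D A q).Nontrivial)
    (hdeg : ∀ w ∈ D, w ≠ q → w ∉ rootNbrs G D A q → degOn G (rootNbrs G D A q) w ≤ 2 ∧
      (w ∈ A → degOn G (rootNbrs G D A q) w ≤ 1))
    (hb : b ∈ B) (hbD : b ∈ D) (hbq : b ≠ q) : b ∈ rootNbrs G D A q := by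
  classical
  by_contra hbP
  obtain ⟨K, hK, hKc, hbK⟩ := CutsOff.exists_connOn_of_mem (G := G) (D := D) (u := b)
    (Q := insert q (rootNbrs G D A q : Set V)) hbD (by simpa [hbq] using hbP)
  have hqK : q ∉ K := hK.notMem (.inl rfl)
  have hPK : ∀ p ∈ rootNbrs G D A q, p ∉ K := fun p hp => hK.notMem (.inr hp)
  obtain ⟨u, hu, p, hp, hup⟩ : ∃ u ∈ K, ∃ p ∈ rootNbrs G D A q, G.Adj u p := by
    obtain ⟨p, hp, -⟩ := hP
    obtain ⟨hpD, -, hqp⟩ := mem_rootNbrs.1 hp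
    obtain ⟨y, -, z, hz, hyK, hzK, hyz⟩ := (h.connOn_erase hq).exists_adj (S := K)
      (Finset.mem_erase.2 ⟨hbq, hbD⟩) (Finset.mem_erase.2 ⟨hqp.ne', hpD⟩) hbK (hPK p hp)
    rcases hK.adj hyK (Finset.mem_of_mem_erase hz) hyz with hzK' | rfl | hzP
    exacts [absurd hzK' hzK, absurd hz (Finset.notMem_erase _ _), ⟨y, hyK, z, hzP, hyz⟩]
  have hbase : RootedExcept G K (nbrs G (rootNbrs G D A q)) B b := by
    refine .of_meetsCutOffs b hKc ⟨u, ⟨p, hp, hup⟩, hu⟩ ⟨b, hb, hbK⟩ (fun v hv => ?_)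
      (h.meetsCutOffs_of_cutsOff_rootNbrs hq hK hKc hb hbK hp hu hup)
    obtain ⟨h2, h1⟩ := hdeg v (hK.subset hv) (ne_of_mem_of_not_mem hv hqK)
      fun hvP => hPK v hvP hv
    exact h.rooted.deg.le_rootedDeg_nbrs_rootNbrs hq hK hv h2 h1
  exact h.not_hasSpan (hasSpan_add_two_of_nontrivial hbase.hasSpan_one hK.subset (fun p hp => by
    obtain ⟨hpD, hpA, hqp⟩ := mem_rootNbrs.1 hp
    exact ⟨hpA, hpD, hqp, hPK p hp⟩) hq hqK hP)

theorem mem_pair_of_common (h : MinCounterexample G D A B) (hq : q ∈ D) (hw : w ∈ D)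
    (hwq : w ≠ q) (hQ : (rootNbrs G D (A ∩ G.neighborSet w) q).Nontrivial)
    (hwA : w ∈ A ∨ 2 < (rootNbrs G D (A ∩ G.neighborSet w) q).card) (hb : b ∈ B) (hbD : b ∈ D) :
    b ∈ ({q, w} : Set V) := by
  by_contra hbqw
  obtain ⟨K, hK, hKc, hbK⟩ := CutsOff.exists_connOn_of_mem (G := G) hbD hbqw
  have hqK : q ∉ K := hK.notMem (.inl rfl)
  have hwK : w ∉ K := hK.notMem (.inr rfl)
  have hQ' : ∀ x ∈ rootNbrs G D (A ∩ G.neighborSet w) q, x ∈ A ∧ x ∈ D ∧ G.Adj q x ∧ G.Adj w x := by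
    intro x hx
    obtain ⟨hxD, ⟨hxA, hwx⟩, hqx⟩ := mem_rootNbrs.1 hx
    exact ⟨hxA, hxD, hqx, hwx⟩
  have hQK : ∀ x ∈ rootNbrs G D (A ∩ G.neighborSet w) q, x ∉ K := fun x hx hxK =>
    h.not_hasSpan (hasSpan_three_of_common hKc hK.subset hq hqK hw hwK hwq hQ' hQ hwA
      ⟨x, hx, hxK⟩ ⟨b, hb, hbK⟩)
  obtain ⟨u, hu, v, -, hv, huv⟩ := hK.exists_adj h.rooted.conn hq hqK
  have hbase : RootedExcept G K (nbrs G {q, w}) B b := by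
    refine .of_meetsCutOffs b hKc ⟨u, ⟨v, hv, huv⟩, hu⟩ ⟨b, hb, hbK⟩ (fun v hv => ?_)
      (hK.meetsCutOffs_nbrs_union h.meetsCutOffs_right)
    have hv4 := h.rooted.le_rootedDeg (hK.subset hv)
    have hle := hK.rootedDeg_le_nbrs_pair (A := A) (B := B) hv fun hvA ⟨hvq, hvw⟩ =>
      hQK v (mem_rootNbrs.2 ⟨hK.subset hv, ⟨hvA, hvw.symm⟩, hvq.symm⟩) hv
    omega
  exact h.not_hasSpan
    (hasSpan_add_two_of_common hbase.hasSpan_one hK.subset hq hqK hw hwK hwq hQ' hQ hQK)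

theorem not_nontrivial_common (h : MinCounterexample G D A B) (hq : q ∈ D) (hw : w ∈ D)
    (hwq : w ≠ q) (hwA : w ∈ A ∨ 2 < (rootNbrs G D (A ∩ G.neighborSet w) q).card) :
    ¬ (rootNbrs G D (A ∩ G.neighborSet w) q).Nontrivial := by
  classical
  intro hQ
  have hB : ∀ b ∈ B, b ∈ D → b = q ∨ b = w := fun b hb hbD =>
    h.mem_pair_of_common hq hw hwq hQ hwA hb hbD
  obtain ⟨-, -, x, hx, y, hy, hxD, hyD, hxy, -⟩ := h.symm.exists_two_adj_left
  have hqwB : q ∈ B ∧ w ∈ B := by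
    have := hB x hx hxD
    have := hB y hy hyD
    grind
  obtain ⟨p, hp, p', hp', hne⟩ := hQ
  obtain ⟨hpD, ⟨-, hwp⟩, hqp⟩ := mem_rootNbrs.1 hp
  obtain ⟨hpD', ⟨hpA', hwp'⟩, hqp'⟩ := mem_rootNbrs.1 hp'
  have hqp₀ : q ∈ rootNbrs G D B p := mem_rootNbrs.2 ⟨hq, hqwB.1, hqp.symm⟩
  have hwp₀ : w ∈ rootNbrs G D B p := mem_rootNbrs.2 ⟨hw, hqwB.2, SimpleGraph.Adj.symm hwp⟩
  have hsub : ∀ x ∈ rootNbrs G D B p, x ∈ ({q, w} : Finset V) := fun x hx => by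
    simpa using hB x (mem_rootNbrs.1 hx).2.1 (mem_rootNbrs.1 hx).1
  have hp'₀ := hsub p' (h.symm.mem_rootNbrs_of_degOn_le hpD ⟨q, hqp₀, w, hwp₀, hwq.symm⟩
    (fun v hv _ hvn => ⟨(degOn_le_card fun x hx _ => hsub x hx).trans Finset.card_le_two,
      fun hvB => absurd ((hB v hvB hv).elim (· ▸ hqp₀) (· ▸ hwp₀)) hvn⟩) hpA' hpD' hne.symm)
  simp only [Finset.mem_insert, Finset.mem_singleton] at hp'₀
  exact hp'₀.elim hqp'.ne' (SimpleGraph.Adj.ne hwp').symm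

theorem degOn_rootNbrs_le (h : MinCounterexample G D A B) (hq : q ∈ D) (hw : w ∈ D)
    (hwq : w ≠ q) :
    degOn G (rootNbrs G D A q) w ≤ 2 ∧ (w ∈ A → degOn G (rootNbrs G D A q) w ≤ 1) := by
  classical
  have hcard : degOn G (rootNbrs G D A q) w = (rootNbrs G D (A ∩ G.neighborSet w) q).card := by
    refine congrArg Finset.card (Finset.ext fun x => ?_)
    simp only [Finset.mem_filter, mem_rootNbrs, Set.mem_inter_iff, mem_neighborSet]
    tauto
  rw [hcard]
  constructor
  · by_contra! hlt
    exact h.not_nontrivial_common hq hw hwq (.inr hlt) (Finset.one_lt_card_iff_nontrivial.1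
      (by omega))
  · intro hwA
    by_contra! hlt
    exact h.not_nontrivial_common hq hw hwq (.inl hwA) (Finset.one_lt_card_iff_nontrivial.1 hlt)

theorem mem_left_and_adj_of_right (h : MinCounterexample G D A B) (hq : q ∈ D) (hx : x ∈ A)
    (hxD : x ∈ D) (hy : y ∈ A) (hyD : y ∈ D) (hxy : x ≠ y) (hqx : G.Adj q x) (hqy : G.Adj q y)
    (hb : b ∈ B) (hbD : b ∈ D) (hbq : b ≠ q) : b ∈ A ∧ G.Adj q b :=
  (mem_rootNbrs.1 (h.mem_rootNbrs_of_degOn_le hq ⟨x, mem_rootNbrs.2 ⟨hxD, hx, hqx⟩, y,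
    mem_rootNbrs.2 ⟨hyD, hy, hqy⟩, hxy⟩ (fun _ hw hwq _ => h.degOn_rootNbrs_le hq hw hwq)
    hb hbD hbq)).2

end MinCounterexample

end

section

variable {V : Type*} {G : SimpleGraph V} {D K : Finset V} {A B : Set V} {v x y z : V} {n : ℕ}

namespace MinCounterexample

theorem not_cutsOff_pair_of_mem (h : MinCounterexample G D A B) (hxA : x ∈ A) (hx : x ∈ D)
    (hyB : y ∈ B) (hy : y ∈ D) (hxy : x ≠ y) (hKc : ConnOn G K) (hA : ∀ v ∈ K, v ∉ A)
    (hB : ∀ v ∈ K, v ∉ B) : ¬ CutsOff G D {x, y} K := by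
  classical
  intro hK
  have hxK : x ∉ K := hK.notMem (by simp)
  have hyK : y ∉ K := hK.notMem (by simp)
  have hs : HasSpan (pathOrders G (insert y K) (nbrs G {x}) B) 3 :=
    (h.hasSpan_of_cutsOff_pair hx hy hxy hK hKc hA hB).shift 1 fun n hn =>
      add_one_mem_pathOrders_right hn (by simp [hyB, hyK]) (Finset.subset_insert _ _)
  exact h.not_hasSpan (hs.shift 1 fun n hn => add_one_mem_pathOrders_left hn
    (by simp [hxA, hx, hxK, hxy]) (Finset.insert_subset hy hK.subset))

theorem exists_adj_of_cutsOff_triple (h : MinCounterexample G D A B) (hxA : x ∈ A) (hx : x ∈ D)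
    (hyB : y ∈ B) (hy : y ∈ D) (hxy : x ≠ y) (hKc : ConnOn G K) (hA : ∀ v ∈ K, v ∉ A)
    (hB : ∀ v ∈ K, v ∉ B) (hK : CutsOff G D {x, y, z} K) : ∃ u ∈ K, G.Adj u z := by
  by_contra! hz
  refine h.not_cutsOff_pair_of_mem hxA hx hyB hy hxy hKc hA hB
    ⟨hK.nonempty, fun u hu => ⟨hK.subset hu, fun hQ => hK.notMem ?_ hu, fun v hv ha => ?_⟩⟩
  · grind
  · have := hz u hu
    have := hK.adj hu hv ha
    grind

end MinCounterexample

section Triple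

variable {t₁ t₂ t₃ : V}

theorem CutsOff.degOn_le_triple (hK : CutsOff G D {t₁, t₂, t₃} K) (hv : v ∈ K) :
    degOn G D v ≤ rootedDeg G K (nbrs G {t₁}) (nbrs G {t₂, t₃}) v + 1 := by
  classical
  have h₀ : degOn G D v ≤ degOn G K v + degOn G {t₁, t₂, t₃} v :=
    degOn_le_add fun w hw ha => by simpa using hK.adj hv hw ha
  have h₁ : degOn G {t₁, t₂, t₃} v ≤ degOn G {t₁} v + degOn G {t₂, t₃} v :=
    degOn_le_add (by simp)
  have h₂ : degOn G {t₁} v ≤ if v ∈ nbrs G {t₁} then 1 else 0 := by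
    simpa using degOn_le_ite (G := G) (D := {t₁}) (v := v) (by simp)
  have h₃ : degOn G {t₂, t₃} v ≤ 2 := (degOn_le_card fun _ h _ => h).trans Finset.card_le_two
  have h₄ : v ∉ nbrs G {t₂, t₃} → degOn G {t₂, t₃} v = 0 := fun hn =>
    degOn_eq_zero fun w hw ha => hn ⟨w, by simpa using hw, ha⟩
  unfold rootedDeg
  split_ifs at * <;> grind

theorem MinRootedDeg.three_le_card_of_cutsOff_triple (h : MinRootedDeg G D A B 4)
    (hK : CutsOff G D {t₁, t₂, t₃} K) (ht₁ : t₁ ∈ D) (hA : ∀ v ∈ K, v ∉ A)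
    (hB : ∀ v ∈ K, v ∉ B) : 3 ≤ K.card := by
  classical
  by_contra! hlt
  have hdeg : ∀ v ∈ K, 4 ≤ degOn G D v ∧ (InTriangle G D v → 5 ≤ degOn G D v) := fun v hv => by
    simpa only [rootedDeg_of_notMem (hA v hv) (hB v hv)] using h v (hK.subset hv)
  have hle : ∀ v ∈ K, degOn G D v ≤ degOn G K v + 3 := fun v hv =>
    (degOn_le_add (Q := {t₁, t₂, t₃}) fun w hw ha => by simpa using hK.adj hv hw ha).trans
      (Nat.add_le_add_left ((degOn_le_card fun _ h _ => h).trans Finset.card_le_three) _)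
  have hadj : ∀ v ∈ K, G.Adj v t₁ := fun v hv => by
    by_contra hna
    have h₁ : degOn G D v ≤ degOn G K v + degOn G {t₂, t₃} v := degOn_le_add fun w hw ha => by
      have := hK.adj hv hw ha
      grind
    have h₂ : degOn G {t₂, t₃} v ≤ 2 := (degOn_le_card fun _ h _ => h).trans Finset.card_le_two
    have := degOn_lt_card (G := G) hv
    have := hdeg v hv
    omega
  obtain ⟨v, hv⟩ := hK.nonempty
  have h₁ := degOn_lt_card (G := G) hv
  have h₂ := hdeg v hv
  have h₃ := hle v hv
  obtain ⟨w, hw, hvw⟩ := exists_adj_of_one_le_degOn (G := G) (D := K) (v := v) (by omega)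
  have := h₂.2 ⟨w, hK.subset hw, t₁, ht₁, hvw, hadj v hv, hadj w hw⟩
  omega

theorem MinCounterexample.rooted_of_cutsOff_triple (h : MinCounterexample G D A B)
    (hK : CutsOff G D {t₁, t₂, t₃} K) (hKc : ConnOn G K) (hA : ∀ v ∈ K, v ∉ A)
    (hB : ∀ v ∈ K, v ∉ B) (h₁ : ∃ u ∈ K, G.Adj u t₁) (h₂ : ∃ u ∈ K, G.Adj u t₂) :
    Rooted G K (nbrs G {t₁}) (nbrs G {t₂, t₃}) 3 where
  conn := hKc
  left := by
    obtain ⟨u, hu, ha⟩ := h₁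
    exact ⟨u, by simpa using ha, hu⟩
  right := by
    obtain ⟨u, hu, ha⟩ := h₂
    exact ⟨u, ⟨t₂, by simp, ha⟩, hu⟩
  deg := MinRootedDeg.of_le_add (k := 1) h.rooted.deg hK.subset fun v hv => by
    rw [rootedDeg_of_notMem (hA v hv) (hB v hv)]
    exact hK.degOn_le_triple hv
  meets e F hF := by
    obtain ⟨u, hu, ⟨t, ht, ha⟩ | hub⟩ := hK.meetsCutOffs_nbrs_union h.meetsCutOffs_right e F hF
    · rcases ht with rfl | ht
      exacts [⟨u, hu, .inl (by simpa using ha)⟩, ⟨u, hu, .inr ⟨t, ht, ha⟩⟩]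
    · exact absurd hub (hB u (hF.subset hu))

theorem add_two_mem_pathOrders_of_triple (hn : n ∈ pathOrders G K (nbrs G {t₁}) (nbrs G {t₂, t₃}))
    (hK : CutsOff G D {t₁, t₂, t₃} K) (h₁ : t₁ ∈ D) (h₂ : t₂ ∈ D) (h₃ : t₃ ∈ D) (hA : t₁ ∈ A)
    (hB : {t₂, t₃} ⊆ B) (h₁₂ : t₁ ≠ t₂) (h₁₃ : t₁ ≠ t₃) : n + 2 ∈ pathOrders G D A B := by
  classical
  have hK₁ : t₁ ∉ K := hK.notMem (by simp)
  have hn' : n + 1 ∈ pathOrders G (D.erase t₁) (nbrs G {t₁}) B :=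
    add_one_mem_pathOrders_right hn (fun p hp => ⟨hB hp, by grind, hK.notMem (.inr hp)⟩)
      (Finset.subset_erase.2 ⟨hK.subset, hK₁⟩)
  exact add_one_mem_pathOrders_left hn' (by simp [hA, h₁]) (Finset.erase_subset _ _)

theorem add_three_mem_pathOrders_of_triple
    (hn : n ∈ pathOrders G K (nbrs G {t₁}) (nbrs G {t₂, t₃}))
    (hK : CutsOff G D {t₁, t₂, t₃} K) (h₁ : t₁ ∈ D) (h₂ : t₂ ∈ D) (h₃ : t₃ ∈ D) (hA₁ : t₁ ∈ A)
    (hA₃ : t₃ ∈ A) (hB : {t₂, t₃} ⊆ B) (h₁₂ : G.Adj t₁ t₂) (h₁₃ : G.Adj t₁ t₃) (hne : t₂ ≠ t₃)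
    (h₂₃ : t₂ ∈ A ∨ G.Adj t₂ t₃) : n + 3 ∈ pathOrders G D A B := by
  classical
  obtain ⟨u, hu, v, ⟨t, ht, hvt⟩, hp⟩ := hn
  have hKD := hK.subset
  have hK₁ : t₁ ∉ K := hK.notMem (by simp)
  have hK₂ : t₂ ∉ K := hK.notMem (by simp)
  have hK₃ : t₃ ∉ K := hK.notMem (by simp)
  have h₁₂n := h₁₂.ne
  have h₁₃n := h₁₃.ne
  obtain ⟨t', ht', htt', htA, h₁'⟩ :
      ∃ t' ∈ ({t₂, t₃} : Set V), t ≠ t' ∧ (t ∈ A ∨ G.Adj t t') ∧ G.Adj t₁ t' := by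
    rcases ht with rfl | rfl
    exacts [⟨t₃, .inr rfl, hne, h₂₃, h₁₃⟩, ⟨t₂, .inl rfl, hne.symm, .inl hA₃, h₁₂⟩]
  have hp₁ : PathIn G (insert t K) t u (n + 1) :=
    hp.symm.cons_of_notMem (by grind) (by simp) (Finset.subset_insert _ _) hvt.symm
  have hp₂ : PathIn G (insert t₁ (insert t K)) t₁ t (n + 2) :=
    hp₁.symm.cons_of_notMem (by grind) (by simp) (Finset.subset_insert _ _)
      (by simpa [adj_comm] using hu)
  have hD : insert t₁ (insert t K) ⊆ D := by grind
  have ht'n : t' ∉ insert t₁ (insert t K) := by grind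
  rcases htA with htA | htt
  · rw [pathOrders_comm]
    exact ⟨t', hB ht', t, htA, hp₂.cons_of_notMem ht'n (by grind) hD h₁'.symm⟩
  · exact ⟨t₁, hA₁, t', hB ht',
      (hp₂.symm.cons_of_notMem ht'n (by grind) hD htt.symm).symm⟩

theorem MinCounterexample.false_of_triple (h : MinCounterexample G D A B) (h₁ : t₁ ∈ D)
    (h₂ : t₂ ∈ D) (h₃ : t₃ ∈ D) (hA : ∀ v ∈ D, v ∈ A → v ∈ ({t₁, t₂, t₃} : Set V))
    (hB : ∀ v ∈ D, v ∈ B → v ∈ ({t₁, t₂, t₃} : Set V)) (hA₁ : t₁ ∈ A) (hB₂ : t₂ ∈ B)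
    (hB₃ : t₃ ∈ B) (hA₃ : t₃ ∈ A) (h₁₂ : G.Adj t₁ t₂) (h₁₃ : G.Adj t₁ t₃) (hne : t₂ ≠ t₃)
    (h₂₃ : t₂ ∈ A ∨ G.Adj t₂ t₃) : False := by
  classical
  obtain ⟨v, hv, hvT⟩ := Finset.exists_mem_notMem_of_card_lt_card
    (Finset.card_le_three.trans_lt h.rooted.four_le_card : ({t₁, t₂, t₃} : Finset V).card < _)
  obtain ⟨K, hK, hKc, -⟩ := CutsOff.exists_connOn_of_mem (G := G) (Q := {t₁, t₂, t₃}) hv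
    (by simpa using hvT)
  have hKA : ∀ v ∈ K, v ∉ A := fun v hv hvA => hK.notMem (hA v (hK.subset hv) hvA) hv
  have hKB : ∀ v ∈ K, v ∉ B := fun v hv hvB => hK.notMem (hB v (hK.subset hv) hvB) hv
  have hu₁ : ∃ u ∈ K, G.Adj u t₁ := h.exists_adj_of_cutsOff_triple hA₃ h₃ hB₂ h₂ hne.symm hKc hKA
    hKB (by rwa [Set.insert_comm t₃, Set.pair_comm t₃, Set.insert_comm t₂])
  have hu₂ : ∃ u ∈ K, G.Adj u t₂ := h.exists_adj_of_cutsOff_triple hA₁ h₁ hB₃ h₃ h₁₃.ne hKc hKA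
    hKB (by rwa [Set.pair_comm])
  have hs := (h.rooted_of_cutsOff_triple hK hKc hKA hKB hu₁ hu₂).hasSpan_two
    (h.rooted.deg.three_le_card_of_cutsOff_triple hK h₁ hKA hKB)
  have hB' : {t₂, t₃} ⊆ B := Set.pair_subset hB₂ hB₃
  refine h.not_hasSpan (hs.add (HasSpan.of_mem_of_succ_mem (S := {2, 3}) (n := 2) (by simp)
    (by simp)) ?_)
  rintro n hn m (rfl | rfl)
  · exact add_two_mem_pathOrders_of_triple hn hK h₁ h₂ h₃ hA₁ hB' h₁₂.ne h₁₃.ne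
  · exact add_three_mem_pathOrders_of_triple hn hK h₁ h₂ h₃ hA₁ hA₃ hB' h₁₂ h₁₃ hne h₂₃

end Triple

end

section

variable {V : Type*} {G : SimpleGraph V} {D K S : Finset V} {A B : Set V}
  {q u v x y z : V} {n : ℕ}

/-- Every root other than `q` lies in the set `S` of more than two common roots of both kinds, and
`q` is adjacent to all of `S`. -/
structure RootStar (G : SimpleGraph V) (D : Finset V) (A B : Set V) (q : V) (S : Finset V) :
    Prop where
  center_mem : q ∈ D
  mem_left : ∀ x ∈ S, x ∈ A
  mem_right : ∀ x ∈ S, x ∈ B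
  subset : S ⊆ D
  adj : ∀ x ∈ S, G.Adj q x
  left : ∀ x ∈ D, x ∈ A → x ∈ (insert q S : Set V)
  right : ∀ x ∈ D, x ∈ B → x ∈ (insert q S : Set V)
  two_lt_card : 2 < S.card

namespace RootStar

theorem exists_ne (h : RootStar G D A B q S) (x y : V) : ∃ z ∈ S, z ≠ x ∧ z ≠ y := by
  classical
  obtain ⟨z, hz, hxy⟩ := Finset.exists_mem_notMem_of_card_lt_card
    (Finset.card_le_two.trans_lt h.two_lt_card : ({x, y} : Finset V).card < _)
  exact ⟨z, hz, by simpa using hxy⟩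

theorem center_notMem (h : RootStar G D A B q S) : q ∉ S := fun hq => (h.adj q hq).ne rfl

theorem hasSpan_three_of_adj (h : RootStar G D A B q S) (hx : x ∈ S) (hy : y ∈ S)
    (hxy : G.Adj x y) : HasSpan (pathOrders G D A B) 3 := by
  classical
  obtain ⟨z, hz, hzx, hzy⟩ := h.exists_ne x y
  have hqS := h.center_notMem
  have hSD := h.subset
  have hqD := h.center_mem
  have hne := hxy.ne
  have hxx : PathIn G {x} x x 1 := .single (by simp)
  have hyx : PathIn G {y, x} y x 2 :=
    hxx.cons_of_notMem (by grind) (by simp) (by simp) hxy.symm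
  have hqx : PathIn G {q, x} q x 2 :=
    hxx.cons_of_notMem (by grind) (by simp) (by simp) (h.adj x hx)
  have hqyx : PathIn G {q, y, x} q x 3 :=
    hyx.cons_of_notMem (by grind) (by simp) (by simp) (h.adj y hy)
  have hzq := (h.adj z hz).symm
  have mem {w k} (hw : w ∈ S) (hp : PathIn G D w x k) : k ∈ pathOrders G D A B :=
    ⟨w, h.mem_left w hw, x, h.mem_right x hx, hp⟩
  have h₁ := mem hx (.single (hSD hx))
  have h₂ := mem hy (hyx.mono (by grind))
  have h₃ := mem hz (hqx.cons_of_notMem (by grind) (hSD hz) (by grind) hzq)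
  have h₄ := mem hz (hqyx.cons_of_notMem (by grind) (hSD hz) (by grind) hzq)
  exact ⟨1, 4, le_rfl, h₁, h₄, fun i _ _ => by interval_cases i <;> simp_all⟩

theorem notMem_left (h : RootStar G D A B q S) (hK : CutsOff G D (insert q S) K) :
    ∀ v ∈ K, v ∉ A :=
  fun v hv hvA => hK.notMem (h.left v (hK.subset hv) hvA) hv

theorem notMem_right (h : RootStar G D A B q S) (hK : CutsOff G D (insert q S) K) :
    ∀ v ∈ K, v ∉ B :=
  fun v hv hvB => hK.notMem (h.right v (hK.subset hv) hvB) hv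

theorem add_two_mem_pathOrders [DecidableEq V] (h : RootStar G D A B q S)
    (hK : CutsOff G D (insert q S) K) (hz : z ∈ S)
    (hn : n ∈ pathOrders G K (nbrs G {z}) (nbrs G (S.erase z))) :
    n + 2 ∈ pathOrders G D A B ∧ n + 4 ∈ pathOrders G D A B := by
  obtain ⟨u, hu, v, ⟨y, hy, hvy⟩, hp⟩ := hn
  obtain ⟨hyz, hyS⟩ := Finset.mem_erase.1 hy
  obtain ⟨x, hx, hxz, hxy⟩ := h.exists_ne z y
  have hSK : ∀ w ∈ S, w ∉ K := fun w hw => hK.notMem (.inr hw)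
  have hqK : q ∉ K := hK.notMem (.inl rfl)
  have hqS := h.center_notMem
  have hqD := h.center_mem
  have hSD := h.subset
  have hKD := hK.subset
  have hp₁ : PathIn G (insert y K) y u (n + 1) :=
    hp.symm.cons_of_notMem (hSK y hyS) (by simp) (Finset.subset_insert _ _) hvy.symm
  have hp₂ : PathIn G (insert z (insert y K)) z y (n + 2) :=
    hp₁.symm.cons_of_notMem (by grind) (by simp) (Finset.subset_insert _ _)
      (mem_nbrs_singleton.1 hu).symm
  have hp₃ : PathIn G (insert q (insert z (insert y K))) q y (n + 3) :=
    hp₂.cons_of_notMem (by grind) (by simp) (Finset.subset_insert _ _) (h.adj z hz)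
  exact ⟨⟨z, h.mem_left z hz, y, h.mem_right y hyS, hp₂.mono (by grind)⟩,
    x, h.mem_left x hx, y, h.mem_right y hyS,
    hp₃.cons_of_notMem (by grind) (hSD hx) (by grind) (h.adj x hx).symm⟩

theorem three_le_rootedDeg [DecidableEq V] (h : RootStar G D A B q S)
    (hdeg : MinRootedDeg G D A B 4) (hK : CutsOff G D (insert q S) K) (hz : z ∈ S) (hv : v ∈ K)
    (h2 : degOn G S v ≤ 2) : 3 ≤ rootedDeg G K (nbrs G {z}) (nbrs G (S.erase z)) v := by
  classical
  have h₀ : degOn G D v ≤ degOn G K v + degOn G (insert q S) v :=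
    degOn_le_add fun w hw ha => by simpa using hK.adj hv hw ha
  have h₁ : degOn G (insert q S) v ≤ degOn G {q} v + degOn G S v := degOn_le_add (by grind)
  have h₂ : degOn G {q} v ≤ if G.Adj v q then 1 else 0 := by
    simpa using degOn_le_ite (G := G) (D := {q}) (v := v) (by simp)
  have h₃ : v ∉ nbrs G {z} → v ∉ nbrs G (S.erase z) → degOn G S v = 0 := fun n₁ n₂ =>
    degOn_eq_zero fun w hw ha => by
      rcases eq_or_ne w z with rfl | hwz
      exacts [n₁ (by simpa using ha), n₂ ⟨w, by simp [hw, hwz], ha⟩]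
  have h₄ : G.Adj v q → v ∈ nbrs G {z} ∨ v ∈ nbrs G (S.erase z) → InTriangle G D v := by
    rintro hq (ha | ⟨w, hw, ha⟩)
    · exact ⟨q, h.center_mem, z, h.subset hz, hq, by simpa using ha, h.adj z hz⟩
    · have hw := Finset.mem_of_mem_erase hw
      exact ⟨q, h.center_mem, w, h.subset hw, hq, ha, h.adj w hw⟩
  have h₅ := hdeg v (hK.subset hv)
  rw [rootedDeg_of_notMem (h.notMem_left hK v hv) (h.notMem_right hK v hv)] at h₅
  unfold rootedDeg
  split_ifs at * <;> grind

end RootStar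

namespace MinCounterexample

theorem exists_notMem_of_rootStar (h : MinCounterexample G D A B) (hS : RootStar G D A B q S) :
    ∃ v ∈ D, v ∉ (insert q S : Set V) := by
  by_contra! hD
  obtain ⟨x, hx, -⟩ := hS.exists_ne q q
  have hdeg : 2 ≤ degOn G D x := by
    have := h.rooted.le_degOn_add_two (hS.subset hx)
    omega
  obtain ⟨y, hyD, hxy, hyq⟩ := exists_adj_ne_of_two_le_degOn hdeg q
  exact h.not_hasSpan (hS.hasSpan_three_of_adj hx ((hD y hyD).resolve_left hyq) hxy)

theorem exists_ne_adj_of_rootStar (h : MinCounterexample G D A B) (hS : RootStar G D A B q S)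
    (hK : CutsOff G D (insert q S) K) (hKc : ConnOn G K) (hz : z ∈ S) :
    ∃ x ∈ S, x ≠ z ∧ ∃ u ∈ K, G.Adj u x := by
  classical
  by_contra! hone
  have hqK : q ∉ K := hK.notMem (.inl rfl)
  have hSK : ∀ w ∈ S, w ∉ K := fun w hw => hK.notMem (.inr hw)
  have hcut : CutsOff G D {z, q} K := ⟨hK.nonempty, fun u hu => ⟨hK.subset hu, by grind,
    fun v hv ha => by
      have := hK.adj hu hv ha
      have := fun w hw hwz => hone w hw hwz u hu
      grind⟩⟩
  have hqz := (hS.adj z hz).ne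
  have hs := h.hasSpan_of_cutsOff_pair (hS.subset hz) hS.center_mem hqz.symm hcut hKc
    (hS.notMem_left hK) (hS.notMem_right hK)
  rw [pathOrders_comm] at hs
  obtain ⟨x, hx, hxz, -⟩ := hS.exists_ne z z
  have hs' : HasSpan (pathOrders G (insert x (insert q K)) (nbrs G {z}) B) 3 :=
    hs.shift 2 fun n hn => by
      rw [pathOrders_comm]
      exact add_two_mem_pathOrders_of_adj hn (by grind) (by simp) hqK (by simp)
        (hS.mem_right x hx) (hSK x hx) (hS.adj x hx).symm
  refine h.not_hasSpan (hs'.shift 1 fun n hn => add_one_mem_pathOrders_left hn ?_ ?_)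
  · have := hSK z hz
    have := hS.mem_left z hz
    have := hS.subset hz
    grind
  · have := hS.subset hx
    have := hS.center_mem
    have := hK.subset
    grind

theorem meetsCutOffs_of_rootStar [DecidableEq V] (h : MinCounterexample G D A B)
    (hS : RootStar G D A B q S) (hK : CutsOff G D (insert q S) K) (hKc : ConnOn G K)
    (hx : x ∈ S) (hxz : x ≠ z) (hz : z ∈ S) (hu : u ∈ K) (huz : G.Adj u z) :
    MeetsCutOffs G K (nbrs G {z} ∪ nbrs G (S.erase z)) := by
  by_contra hmeets
  unfold MeetsCutOffs at hmeets
  push Not at hmeets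
  obtain ⟨d, F₀, hF₀, hbad⟩ := hmeets
  obtain ⟨y, hy⟩ := hF₀.nonempty
  obtain ⟨F, hFF, hF, hFc, -⟩ := hF₀.exists_connOn_subset hy
  have huF : u ∉ F := fun hh => hbad u (hFF hh) (.inl (by simpa using huz))
  obtain ⟨hd, -⟩ := hF.exists_adj_cutVertex hKc hu huF
  have hqK : q ∉ K := hK.notMem (.inl rfl)
  have hSK : ∀ w ∈ S, w ∉ K := fun w hw => hK.notMem (.inr hw)
  have hSF : ∀ w ∈ F, ∀ y ∈ S, ¬ G.Adj w y := fun w hw y hyS ha => by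
    rcases eq_or_ne y z with rfl | hyz
    exacts [hbad w (hFF hw) (.inl (by simpa using ha)),
      hbad w (hFF hw) (.inr ⟨y, by simp [hyS, hyz], ha⟩)]
  have hcut : CutsOff G D {q, d} F := ⟨hF.nonempty, fun w hw => ⟨hK.subset (hF.subset hw), by
    have := hF.subset hw
    have := hF.notMem (x := d) rfl
    grind, fun v hv ha => by
      have := hK.adj (hF.subset hw) hv ha
      have := fun hvK => hF.adj hw hvK ha
      have := hSF w hw v
      grind⟩⟩
  have hs := h.hasSpan_of_cutsOff_pair hS.center_mem (hK.subset hd) (by grind) hcut hFc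
    (fun v hv => hS.notMem_left hK v (hF.subset hv))
    (fun v hv => hS.notMem_right hK v (hF.subset hv))
  have hs₁ : HasSpan (pathOrders G K (nbrs G {q}) (nbrs G {z})) 3 :=
    hasSpan_pathOrders_of_connOn hs (hF.connOn_sdiff hKc hd)
      (by simpa [hd] using hF.notMem (x := d) rfl)
      ⟨u, by simpa using huz, by simp [hu, huF]⟩ Finset.disjoint_sdiff hF.subset
      Finset.sdiff_subset
  have hs₂ : HasSpan (pathOrders G (insert z K) (nbrs G {q}) B) 3 := hs₁.shift 1 fun n hn =>
    add_one_mem_pathOrders_right hn (by simp [hS.mem_right z hz, hSK z hz])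
      (Finset.subset_insert _ _)
  have hqz := (hS.adj z hz).ne
  have hxK := hSK x hx
  exact h.not_hasSpan (hs₂.shift 2 fun n hn => add_two_mem_pathOrders_of_adj hn
    (Finset.insert_subset (hS.subset hz) hK.subset) hS.center_mem (by grind) (hS.subset hx)
    (hS.mem_left x hx) (by grind) (hS.adj x hx).symm)

theorem false_of_rootStar (h : MinCounterexample G D A B) (hS : RootStar G D A B q S)
    (hdeg : ∀ w ∈ D, w ≠ q → degOn G S w ≤ 2) : False := by
  classical
  obtain ⟨v, hv, hvS⟩ := h.exists_notMem_of_rootStar hS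
  obtain ⟨K, hK, hKc, -⟩ := CutsOff.exists_connOn_of_mem (G := G) hv hvS
  obtain ⟨z₀, hz₀, -⟩ := hS.exists_ne q q
  obtain ⟨z, hz, -, u, hu, huz⟩ := h.exists_ne_adj_of_rootStar hS hK hKc hz₀
  obtain ⟨x, hx, hxz, w, hw, hwx⟩ := h.exists_ne_adj_of_rootStar hS hK hKc hz
  have hqK : q ∉ K := hK.notMem (.inl rfl)
  have hR : RootedExcept G K (nbrs G {z}) (nbrs G (S.erase z)) q := .of_meetsCutOffs q hKc
    ⟨u, by simpa using huz, hu⟩ ⟨w, ⟨x, by simp [hx, hxz], hwx⟩, hw⟩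
    (fun v hv => hS.three_le_rootedDeg h.rooted.deg hK hz hv
      (hdeg v (hK.subset hv) (by rintro rfl; exact hqK hv)))
    (h.meetsCutOffs_of_rootStar hS hK hKc hx hxz hz hu huz)
  refine h.not_hasSpan (hR.hasSpan_one.add
    (HasSpan.of_mem_of_add_two_mem (S := {2, 4}) (n := 2) (by simp) (by simp)) ?_)
  rintro n hn m (rfl | rfl)
  exacts [(hS.add_two_mem_pathOrders hK hz hn).1, (hS.add_two_mem_pathOrders hK hz hn).2]

theorem false_of_two_right (h : MinCounterexample G D A B) (hq : q ∈ D)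
    (hBq : ∀ b ∈ B, b ∈ D → b ≠ q → b ∈ A ∧ G.Adj q b) (hx : x ∈ B) (hxD : x ∈ D) (hxq : x ≠ q)
    (hy : y ∈ B) (hyD : y ∈ D) (hyq : y ≠ q) (hxy : x ≠ y) : False := by
  classical
  obtain ⟨hxA, hqx⟩ := hBq x hx hxD hxq
  obtain ⟨hyA, hqy⟩ := hBq y hy hyD hyq
  have hAq : ∀ a ∈ A, a ∈ D → a ≠ q → a ∈ B ∧ G.Adj q a := fun a ha haD haq =>
    h.symm.mem_left_and_adj_of_right hq hx hxD hy hyD hxy hqx hqy ha haD haq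
  by_cases hcard : 2 < (rootNbrs G D A q).card
  · refine h.false_of_rootStar (q := q) (S := rootNbrs G D A q) ⟨hq, ?_, ?_, ?_, ?_, ?_, ?_, hcard⟩
      fun w hw hwq => (h.degOn_rootNbrs_le hq hw hwq).1
    all_goals
      simp only [Finset.subset_iff, Set.mem_insert_iff, Finset.mem_coe, mem_rootNbrs]
      grind [SimpleGraph.irrefl]
  have hS : {x, y} = rootNbrs G D A q := Finset.eq_of_subset_of_card_le
    (by grind [mem_rootNbrs]) (by rw [Finset.card_pair hxy]; omega)
  have hA : ∀ v ∈ D, v ∈ A → v ∈ ({q, x, y} : Set V) := fun v hvD hv => by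
    have := hAq v hv hvD
    have : v ∈ rootNbrs G D A q ↔ _ := mem_rootNbrs
    grind
  have hB : ∀ v ∈ D, v ∈ B → v ∈ ({q, x, y} : Set V) := fun v hvD hv => by
    have := hBq v hv hvD
    have := hA v hvD
    grind
  by_cases hqA : q ∈ A
  · exact h.false_of_triple hq hxD hyD hA hB hqA hx hy hyA hqx hqy hxy (.inl hxA)
  by_cases hqB : q ∈ B
  · exact h.symm.false_of_triple hq hxD hyD hB hA hqB hxA hyA hy hqx hqy hxy (.inl hx)
  obtain ⟨K, hK, hKc, -⟩ := CutsOff.exists_connOn_of_mem (G := G) (Q := {x, y}) hq (by grind)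
  have hsub := hK.subset
  exact h.not_cutsOff_pair_of_mem hxA hxD hy hyD hxy hKc
    (fun v hv hvA => hK.notMem (by grind) hv) (fun v hv hvB => hK.notMem (by grind) hv) hK

theorem false_of_right_subset_pair (h : MinCounterexample G D A B) (hq : q ∈ D) (hx : x ∈ A)
    (hxD : x ∈ D) (hy : y ∈ A) (hyD : y ∈ D) (hxy : x ≠ y) (hqx : G.Adj q x) (hqy : G.Adj q y)
    (hB : ∀ s ∈ B, ∀ t ∈ B, s ∈ D → t ∈ D → s ≠ q → t ≠ q → s = t) : False := by
  obtain ⟨r, hr, s, hs, t, ht, hsD, htD, hst, hrs, hrt⟩ := h.symm.exists_two_adj_left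
  have hAr : ∀ a ∈ A, a ∈ D → a ≠ r → a ∈ B ∧ G.Adj r a := fun a ha haD har =>
    h.symm.mem_left_and_adj_of_right hr hs hsD ht htD hst hrs hrt ha haD har
  obtain ⟨b, hb, hbD, hbq, hqB, hrq, hrb⟩ :
      ∃ b ∈ B, b ∈ D ∧ b ≠ q ∧ q ∈ B ∧ G.Adj r q ∧ G.Adj r b := by
    have := hB s hs t ht hsD htD
    by_cases hsq : s = q
    · exact ⟨t, ht, htD, by grind, by grind, by grind, hrt⟩
    · exact ⟨s, hs, hsD, by grind, by grind, by grind, hrs⟩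
  obtain ⟨hbA, hqb⟩ := h.mem_left_and_adj_of_right hq hx hxD hy hyD hxy hqx hqy hb hbD hbq
  have hB' : ∀ v ∈ D, v ∈ B → v ∈ ({r, q, b} : Set V) := fun v hv hvB => by
    have := hB v hvB b hb hv hbD
    grind
  have hA' : ∀ v ∈ D, v ∈ A → v ∈ ({r, q, b} : Set V) := fun v hv hvA => by
    have := hAr v hvA hv
    have := hB' v hv
    grind
  have hrA : r ∈ A := by
    have := hA' x hxD hx
    have := hA' y hyD hy
    have := hqx.ne
    have := hqy.ne
    grind
  exact h.false_of_triple hr hq hbD hA' hB' hrA hqB hb hbA hrq hrb hbq.symm (.inr hqb)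

protected theorem false (h : MinCounterexample G D A B) : False := by
  obtain ⟨q, hq, x, hx, y, hy, hxD, hyD, hxy, hqx, hqy⟩ := h.exists_two_adj_left
  have hBq : ∀ b ∈ B, b ∈ D → b ≠ q → b ∈ A ∧ G.Adj q b := fun b hb hbD hbq =>
    h.mem_left_and_adj_of_right hq hx hxD hy hyD hxy hqx hqy hb hbD hbq
  refine h.false_of_right_subset_pair hq hx hxD hy hyD hxy hqx hqy ?_
  intro s hs t ht hsD htD hsq htq
  by_contra hst
  exact h.false_of_two_right hq hBq hs hsD hsq ht htD htq hst

end MinCounterexample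

theorem Rooted.hasSpan_three (h : Rooted G D A B 4) : HasSpan (pathOrders G D A B) 3 := by
  induction hn : D.card using Nat.strong_induction_on generalizing D A B with
  | _ n ih =>
    subst hn
    by_contra hcon
    exact MinCounterexample.false ⟨h, fun K A' B' hlt _ hK => ih _ hlt hK rfl, hcon⟩

end

/-! ### Graphs with a triangle -/

section

open Finset

variable {V : Type*} {G : SimpleGraph V}

theorem CutsOff.disjoint {D W F : Finset V} (h : CutsOff G D W F) : Disjoint F W :=
  disjoint_left.2 fun _ hF hW => h.notMem hW hF

theorem hasConsecCycles_of_hasSpan {D W : Finset V} {P Q : Set V} {t j c : ℕ}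
    (hs : HasSpan (pathOrders G D (nbrs G P) (nbrs G Q)) t) (htj : 4 ≤ t + j) (hj : 1 ≤ j)
    (hc : 2 ≤ c) (hDW : Disjoint D W)
    (hW : ∀ p ∈ P, ∀ q ∈ Q, ∀ i ≤ j, PathIn G W p q (c + i)) : HasConsecCycles G 5 := by
  classical
  have key : ∀ n ∈ pathOrders G D (nbrs G P) (nbrs G Q), ∀ i ≤ j,
      HasCycleLength G (n + (c + i)) := by
    rintro n ⟨u, ⟨p, hp, hup⟩, v, ⟨q, hq, hvq⟩, hpath⟩ i hi
    have := hpath.pos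
    exact (hpath.append (hW p hp q hq i hi).symm hvq hDW subset_union_left
      subset_union_right).hasCycleLength (by omega) hup.symm
  obtain ⟨a, b, hab, ha, hb, h⟩ := hs
  refine ⟨a + c, fun i hi => ?_⟩
  rcases Nat.eq_zero_or_pos i with rfl | hi0
  · exact key a ha 0 (by omega)
  rcases Nat.lt_or_ge (a + i - 1) b with hlt | hge
  · rcases h (a + i - 1) (by omega) hlt with h1 | h1
    · convert key _ h1 1 hj using 1; omega
    · convert key _ h1 0 (by omega) using 1; omega
  · convert key b hb (a + i - b) (by omega) using 1; omega

/-- The hypotheses of the main theorem other than nonbipartiteness. -/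
structure ThreeConnMinDegFive (G : SimpleGraph V) : Prop where
  kConnected : KConnected G 3
  five_le_ncard : ∀ v, 5 ≤ (G.neighborSet v).ncard
  seven_le_card : 7 ≤ Nat.card V

namespace ThreeConnMinDegFive

variable {D F P Q W : Finset V} {v : V}

theorem finite (h : ThreeConnMinDegFive G) : Finite V :=
  Nat.finite_of_card_ne_zero (by have := h.seven_le_card; omega)

theorem exists_adj (h : ThreeConnMinDegFive G) (hF : F.Nonempty) (hFQ : Disjoint F Q)
    (hQ : Q.card ≤ 2) (hvF : v ∉ F) (hvQ : v ∉ Q) :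
    ∃ u ∈ F, ∃ w, w ∉ F ∧ w ∉ Q ∧ G.Adj u w := by
  obtain ⟨u, hu⟩ := hF
  have := h.finite
  have := Fintype.ofFinite V
  classical
  have hQc : ConnOn G Qᶜ := by
    rw [ConnOn, coe_compl]
    exact h.kConnected.2 Q Q.finite_toSet (by rw [Set.ncard_coe_finset]; omega)
  obtain ⟨x, _, y, hy, hxF, hyF, hxy⟩ := hQc.exists_adj (S := F)
    (mem_compl.2 (disjoint_left.1 hFQ hu)) (mem_compl.2 hvQ) hu hvF
  exact ⟨x, hxF, y, hyF, mem_compl.1 hy, hxy⟩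

variable [Fintype V]

theorem five_le_degOn_univ (h : ThreeConnMinDegFive G) (v : V) : 5 ≤ degOn G univ v := by
  classical
  refine (h.five_le_ncard v).trans_eq ?_
  rw [degOn, ← Set.ncard_coe_finset]
  congr 1
  ext
  simp

theorem exists_adj_of_cutsOff (h : ThreeConnMinDegFive G) (hF : CutsOff G univ (W ∪ Q) F)
    (hQ : Q.card ≤ 2) (hW : 3 ≤ W.card) : ∃ u ∈ F, ∃ w ∈ W, w ∉ Q ∧ G.Adj u w := by
  obtain ⟨w, hw, hwQ⟩ := exists_mem_notMem_of_card_lt_card (show Q.card < W.card by omega)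
  obtain ⟨u, hu, x, hxF, hxQ, hux⟩ := h.exists_adj hF.nonempty
    (disjoint_left.2 fun y hy hyQ => hF.notMem (.inr hyQ) hy) hQ (hF.notMem (.inl hw)) hwQ
  obtain hx | hx | hx := hF.adj hu (mem_univ x) hux
  exacts [(hxF hx).elim, ⟨u, hu, x, hx, hxQ, hux⟩, (hxQ hx).elim]

theorem exists_cutsOff (h : ThreeConnMinDegFive G) (hW : W.card ≤ 6) :
    ∃ D, CutsOff G univ W D ∧ ConnOn G D := by
  have h7 := h.seven_le_card
  rw [Nat.card_eq_fintype_card, ← card_univ] at h7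
  obtain ⟨v, hv, hvW⟩ := exists_mem_notMem_of_card_lt_card (show W.card < univ.card by omega)
  obtain ⟨D, hD, hDc, -⟩ := CutsOff.exists_connOn_of_mem hv (mt mem_coe.1 hvW)
  exact ⟨D, hD, hDc⟩

theorem exists_mem_nbrs (h : ThreeConnMinDegFive G) (hD : CutsOff G univ W D) (hW : 3 ≤ W.card)
    (hPQ : ∀ u ∈ D, ∀ w ∈ W, G.Adj u w → w ∈ P ∨ w ∈ Q) (hQ : Q.card ≤ 2) (hQW : Q ⊆ W) :
    ∃ u ∈ nbrs G P, u ∈ D := by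
  have hWQ : (W ∪ Q : Set V) = W := Set.union_eq_self_of_subset_right (coe_subset.2 hQW)
  obtain ⟨u, hu, w, hw, hwQ, huw⟩ := h.exists_adj_of_cutsOff (Q := Q) (hWQ ▸ hD) hQ hW
  exact ⟨u, mem_nbrs.2 ⟨w, (hPQ u hu w hw huw).resolve_right hwQ, huw⟩, hu⟩

theorem meetsCutOffs (h : ThreeConnMinDegFive G) (hD : CutsOff G univ W D) (hW : 3 ≤ W.card)
    (hPQ : ∀ u ∈ D, ∀ w ∈ W, G.Adj u w → w ∈ P ∨ w ∈ Q) :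
    MeetsCutOffs G D (nbrs G P ∪ nbrs G Q) := by
  intro e F hF
  have hF' : CutsOff G univ (W ∪ ({e} : Finset V)) F := by
    refine ⟨hF.nonempty, fun u hu => ⟨mem_univ u, ?_, fun v _ huv => ?_⟩⟩
    · exact fun huW => huW.elim (hD.2 u (hF.subset hu)).2.1
        fun hue => (hF.2 u hu).2.1 (by simpa using hue)
    · obtain hv | hv := hD.adj (hF.subset hu) (mem_univ v) huv
      · exact (hF.adj hu hv huv).imp_right fun hve => .inr (by simpa using hve)
      · exact .inr (.inl hv)
  obtain ⟨u, hu, w, hw, -, huw⟩ := h.exists_adj_of_cutsOff hF' (by simp) hW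
  exact ⟨u, hu, (hPQ u (hF.subset hu) w hw huw).imp (fun hP => mem_nbrs.2 ⟨w, hP, huw⟩)
    fun hQ => mem_nbrs.2 ⟨w, hQ, huw⟩⟩

theorem five_le_degOn_add (h : ThreeConnMinDegFive G) (hD : CutsOff G univ W D) (hv : v ∈ D) :
    5 ≤ degOn G D v + degOn G W v :=
  (h.five_le_degOn_univ v).trans (degOn_le_add fun _ hw ha => hD.adj hv hw ha)

end ThreeConnMinDegFive

end

section

open Finset

variable {V : Type*} {G : SimpleGraph V} {D X : Finset V} {d e v w x y : V} {n : ℕ}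

theorem pathIn_of_isClique (hX : G.IsClique X) (hx : x ∈ X) (hw : w ∈ X) (hxw : x ≠ w)
    (h2 : 2 ≤ n) (hn : n ≤ X.card) : PathIn G X x w n := by
  classical
  induction n, h2 using Nat.le_induction generalizing X x with
  | base => exact .cons hx (hX hx hw hxw) (.single (mem_erase.2 ⟨hxw.symm, hw⟩))
  | succ n h2 ih =>
    obtain ⟨y, hy, hyQ⟩ := exists_mem_notMem_of_card_lt_card
      (show ({x, w} : Finset V).card < X.card from card_le_two.trans_lt (by omega))
    rw [mem_insert, mem_singleton, not_or] at hyQ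
    refine .cons hx (hX hx hy (Ne.symm hyQ.1)) (ih (hX.subset (by simp)) ?_ ?_ hyQ.2 ?_)
    · exact mem_erase.2 ⟨hyQ.1, hy⟩
    · exact mem_erase.2 ⟨hxw.symm, hw⟩
    · rw [card_erase_of_mem hx]
      omega

theorem degOn_le_card_mul_ite (X : Finset V) (v : V) [Decidable (v ∈ nbrs G X)] :
    degOn G X v ≤ X.card * if v ∈ nbrs G X then 1 else 0 := by
  split_ifs with hv
  · simpa using degOn_le_card fun _ hw _ => hw
  · rw [degOn_eq_zero fun w hw ha => hv ⟨w, hw, ha⟩]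
    exact Nat.zero_le _

theorem degOn_lt_card_of_not_adj (hw : w ∈ X) (hvw : ¬ G.Adj v w) : degOn G X v < X.card := by
  classical
  refine (degOn_le_card fun x hx hvx => mem_erase.2 ⟨?_, hx⟩).trans_lt (card_erase_lt_of_mem hw)
  rintro rfl
  exact hvw hvx

theorem ThreeConnMinDegFive.hasSpan_one_of_card_eq_three [Fintype V] [DecidableEq V]
    (hG : ThreeConnMinDegFive G) (hD : CutsOff G univ X D) (hDc : ConnOn G D) (hX : X.card = 3)
    (hx : x ∈ X) :
    HasSpan (pathOrders G D (nbrs G ({x} : Finset V)) (nbrs G (X.erase x))) 1 := by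
  have hcard := card_erase_of_mem hx
  have hPQ : ∀ u ∈ D, ∀ w ∈ X, G.Adj u w → w ∈ ({x} : Finset V) ∨ w ∈ X.erase x := by grind
  refine (RootedExcept.of_meetsCutOffs x hDc ?_ ?_ (fun v hv => ?_)
    (hG.meetsCutOffs hD hX.ge hPQ)).hasSpan_one
  · exact hG.exists_mem_nbrs hD hX.ge hPQ (by omega) (erase_subset x X)
  · exact hG.exists_mem_nbrs hD hX.ge (fun u hu w hw huw => (hPQ u hu w hw huw).symm) (by simp)
      (singleton_subset_iff.2 hx)
  · have hdeg := hG.five_le_degOn_add hD hv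
    have hle : degOn G X v ≤ degOn G {x} v + degOn G (X.erase x) v := degOn_le_add (hPQ v hv)
    classical
    have hx := degOn_le_card_mul_ite (G := G) {x} v
    have hX := degOn_le_card_mul_ite (G := G) (X.erase x) v
    rw [card_singleton] at hx
    unfold rootedDeg
    split_ifs at * <;> omega

/-- A book: a clique `X` together with two distinct vertices `d` and `e`, adjacent or not, that
are joined to all of `X`. -/
structure Book (G : SimpleGraph V) (X : Finset V) (d e : V) : Prop where
  ne : d ≠ e
  isClique : G.IsClique X
  adj_left : ∀ x ∈ X, G.Adj x d
  adj_right : ∀ x ∈ X, G.Adj x e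

namespace Book

theorem symm (h : Book G X d e) : Book G X e d :=
  ⟨h.ne.symm, h.isClique, h.adj_right, h.adj_left⟩

theorem left_notMem (h : Book G X d e) : d ∉ X := fun hd => (h.adj_left d hd).ne rfl

theorem mono (h : Book G X d e) {Y : Finset V} (hY : Y ⊆ X) : Book G Y d e :=
  ⟨h.ne, h.isClique.subset hY, fun x hx => h.adj_left x (hY hx),
    fun x hx => h.adj_right x (hY hx)⟩

theorem insert [DecidableEq V] (h : Book G X d e) (hv : ∀ x ∈ X ∪ {d, e}, G.Adj v x) :
    Book G (insert v X) d e := by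
  refine ⟨h.ne, ?_, ?_, ?_⟩
  · rw [coe_insert]
    exact h.isClique.insert fun x hx _ => hv x (mem_union_left _ hx)
  · have := h.adj_left
    grind
  · have := h.adj_right
    grind

theorem isClique_insert_left [DecidableEq V] (h : Book G X d e) :
    G.IsClique (Insert.insert d X : Finset V) := by
  rw [coe_insert]
  exact h.isClique.insert fun x hx _ => (h.adj_left x hx).symm

theorem card_eq [DecidableEq V] (h : Book G X d e) : (X ∪ {d, e}).card = X.card + 2 := by
  rw [card_union_of_disjoint, card_pair h.ne]
  simpa using ⟨h.left_notMem, h.symm.left_notMem⟩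

theorem pathIn_left [DecidableEq V] (h : Book G X d e) (hx : x ∈ X) (hX : 2 ≤ X.card) (h2 : 2 ≤ n)
    (hn : n ≤ X.card + 2) : PathIn G (X ∪ {d, e}) d x n := by
  have hdx : d ≠ x := (h.adj_left x hx).ne'
  rcases hn.lt_or_eq with hlt | rfl
  · refine (pathIn_of_isClique h.isClique_insert_left (mem_insert_self d X) (mem_insert_of_mem hx)
      hdx h2 ?_).mono (by grind)
    rw [card_insert_of_notMem h.left_notMem]
    omega
  obtain ⟨q, hq, hqx⟩ := exists_mem_ne (by omega : 1 < X.card) x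
  have he := h.symm.left_notMem
  have hd := h.left_notMem
  have hne := h.ne
  have hpath : PathIn G (Insert.insert e (X.erase q)) e x X.card := by
    refine pathIn_of_isClique (h.mono (erase_subset q X)).symm.isClique_insert_left
      (mem_insert_self _ _) (by grind) (h.adj_right x hx).ne' hX ?_
    rw [card_insert_of_notMem (by grind), card_erase_of_mem hq]
    omega
  refine .cons (by simp) (h.adj_left q hq).symm (.cons (by grind) (h.adj_right q hq) ?_)
  exact hpath.mono (by grind)

theorem pathIn_clique [DecidableEq V] (h : Book G X d e) (hx : x ∈ X) (hw : w ∈ X) (hxw : x ≠ w)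
    (hX : 3 ≤ X.card) (h2 : 2 ≤ n) (hn : n ≤ X.card + 2) : PathIn G (X ∪ {d, e}) x w n := by
  rcases le_or_gt n X.card with hnX | hnX
  · exact (pathIn_of_isClique h.isClique hx hw hxw h2 hnX).mono subset_union_left
  obtain ⟨m, rfl⟩ : ∃ m, n = m + 1 := ⟨n - 1, by omega⟩
  have hcard := card_erase_of_mem hx
  have hdx := (h.adj_left x hx).ne
  have hex := (h.adj_right x hx).ne
  refine .cons (by simp [hx]) (h.adj_left x hx) (((h.mono (erase_subset x X)).pathIn_left
    (mem_erase.2 ⟨hxw.symm, hw⟩) (by omega) (by omega) (by omega)).mono ?_)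
  grind

theorem pathIn_side [DecidableEq V] (h : Book G X d e) (hx : x ∈ X) (hy : y ∈ ({d, e} : Finset V))
    (hX : 2 ≤ X.card) (h2 : 2 ≤ n) (hn : n ≤ X.card + 2) : PathIn G (X ∪ {d, e}) x y n := by
  obtain rfl | hy := mem_insert.1 hy
  · exact (h.pathIn_left hx hX h2 hn).symm
  · obtain rfl := mem_singleton.1 hy
    rw [pair_comm]
    exact (h.symm.pathIn_left hx hX h2 hn).symm

theorem hasConsecCycles_of_four (h : Book G X d e) (hG : ThreeConnMinDegFive G)
    (hX : X.card = 4) : HasConsecCycles G 5 := by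
  classical
  have := hG.finite
  have := Fintype.ofFinite V
  have hcard := h.card_eq
  obtain ⟨D, hD, hDc⟩ := hG.exists_cutsOff (W := X ∪ {d, e}) (by omega)
  obtain ⟨u, ⟨x, hx, hux⟩, hu⟩ := hG.exists_mem_nbrs (P := X) (Q := {d, e}) hD (by omega)
    (fun _ _ w hw _ => mem_union.1 hw) card_le_two subset_union_right
  obtain ⟨v, ⟨w, hw, hvw⟩, hv⟩ := hG.exists_mem_nbrs (P := (X ∪ {d, e}).erase x) (Q := {x}) hD
    (by omega) (fun _ _ w hw _ => by grind) (by simp)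
    (singleton_subset_iff.2 (mem_union_left _ hx))
  obtain ⟨m, hm⟩ := hDc.exists_pathIn hu hv
  have hspan : HasSpan (pathOrders G D (nbrs G {x}) (nbrs G {w})) 0 :=
    (HasSpan.singleton m).mono <| Set.singleton_subset_iff.2
      ⟨u, mem_nbrs_singleton.2 hux, v, mem_nbrs_singleton.2 hvw, hm⟩
  refine hasConsecCycles_of_hasSpan (j := 4) hspan le_rfl (by omega) le_rfl hD.disjoint ?_
  rintro _ rfl _ rfl i hi
  obtain ⟨hwx, hw⟩ := mem_erase.1 hw
  rcases mem_union.1 hw with hw | hw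
  · exact h.pathIn_clique hx hw hwx.symm (by omega) (by omega) (by omega)
  · exact h.pathIn_side hx hw (by omega) (by omega) (by omega)

theorem six_le_rootedDeg_add_card [Fintype V] [DecidableEq V] (h : Book G X d e)
    (hG : ThreeConnMinDegFive G) (hX2 : 2 ≤ X.card) (hX3 : X.card ≤ 3)
    (hD : CutsOff G univ (X ∪ {d, e} : Finset V) D) (hv : v ∈ D) (hw : w ∈ X ∪ {d, e})
    (hvw : ¬ G.Adj v w) :
    6 ≤ rootedDeg G D (nbrs G X) (nbrs G ({d, e} : Finset V)) v + X.card := by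
  have hdeg := hG.five_le_degOn_add hD hv
  have hlt := degOn_lt_card_of_not_adj hw hvw
  have hle : degOn G (X ∪ {d, e}) v ≤ degOn G X v + degOn G {d, e} v :=
    degOn_le_add fun w hw _ => mem_union.1 hw
  classical
  have hX := degOn_le_card_mul_ite (G := G) X v
  have hde := degOn_le_card_mul_ite (G := G) {d, e} v
  rw [card_pair h.ne] at hde
  rw [h.card_eq] at hlt
  unfold rootedDeg
  split_ifs at * <;> omega

theorem hasConsecCycles_of_three (h : Book G X d e) (hG : ThreeConnMinDegFive G)
    (hX : X.card = 3) : HasConsecCycles G 5 := by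
  classical
  have := hG.finite
  have := Fintype.ofFinite V
  by_cases! hall : ∃ v ∉ X ∪ {d, e}, ∀ x ∈ X ∪ {d, e}, G.Adj v x
  · obtain ⟨v, hv, hvX⟩ := hall
    refine (h.insert hvX).hasConsecCycles_of_four hG ?_
    rw [card_insert_of_notMem fun hvX => hv (mem_union_left _ hvX), hX]
  have hcard := h.card_eq
  obtain ⟨D, hD, hDc⟩ := hG.exists_cutsOff (W := X ∪ {d, e}) (by omega)
  have hXde : ∀ u ∈ D, ∀ w ∈ X ∪ {d, e}, G.Adj u w → w ∈ X ∨ w ∈ ({d, e} : Finset V) :=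
    fun _ _ w hw _ => mem_union.1 hw
  by_cases! hY : ∃ u ∈ nbrs G ({d, e} : Finset V), u ∈ D
  · have hR : RootedExcept G D (nbrs G X) (nbrs G ({d, e} : Finset V)) d := by
      refine .of_meetsCutOffs d hDc (hG.exists_mem_nbrs hD (by omega) hXde card_le_two
        subset_union_right) hY (fun v hv => ?_) (hG.meetsCutOffs hD (by omega) hXde)
      obtain ⟨w, hw, hvw⟩ := hall v fun hh => hD.notMem hh hv
      have := h.six_le_rootedDeg_add_card hG (by omega) (by omega) hD hv hw hvw
      omega
    exact hasConsecCycles_of_hasSpan (j := 3) hR.hasSpan_one le_rfl (by omega) le_rfl hD.disjoint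
      fun x hx y hy i hi => h.pathIn_side hx hy (by omega) (by omega) (by omega)
  · have hDX : CutsOff G univ X D := by
      refine ⟨hD.nonempty, fun u hu => ⟨mem_univ u, fun huX => hD.notMem (mem_union_left _ huX) hu,
        fun v hv huv => (hD.adj hu hv huv).imp_right fun hvW => ?_⟩⟩
      exact (hXde u hu v hvW huv).resolve_right fun hvde => hY u ⟨v, hvde, huv⟩ hu
    obtain ⟨b, hb⟩ := card_pos.1 (by omega : 0 < X.card)
    refine hasConsecCycles_of_hasSpan (j := 3) (hG.hasSpan_one_of_card_eq_three hDX hDc hX hb)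
      le_rfl (by omega) le_rfl hD.disjoint fun x hx y hy i hi => ?_
    obtain rfl := mem_singleton.1 hx
    obtain ⟨hyx, hy⟩ := mem_erase.1 hy
    exact h.pathIn_clique hb hy hyx.symm (by omega) (by omega) (by omega)

theorem hasConsecCycles_of_two (h : Book G X d e) (hG : ThreeConnMinDegFive G)
    (hX : X.card = 2) : HasConsecCycles G 5 := by
  classical
  have := hG.finite
  have := Fintype.ofFinite V
  by_cases! hall : ∃ v ∉ X ∪ {d, e}, ∀ x ∈ X ∪ {d, e}, G.Adj v x
  · obtain ⟨v, hv, hvX⟩ := hall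
    refine (h.insert hvX).hasConsecCycles_of_three hG ?_
    rw [card_insert_of_notMem fun hvX => hv (mem_union_left _ hvX), hX]
  have hcard := h.card_eq
  obtain ⟨D, hD, hDc⟩ := hG.exists_cutsOff (W := X ∪ {d, e}) (by omega)
  have hXde : ∀ u ∈ D, ∀ w ∈ X ∪ {d, e}, G.Adj u w → w ∈ X ∨ w ∈ ({d, e} : Finset V) :=
    fun _ _ w hw _ => mem_union.1 hw
  have hdeg : ∀ v ∈ D, 4 ≤ rootedDeg G D (nbrs G X) (nbrs G ({d, e} : Finset V)) v := by
    intro v hv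
    obtain ⟨w, hw, hvw⟩ := hall v fun hh => hD.notMem hh hv
    have := h.six_le_rootedDeg_add_card hG (by omega) (by omega) hD hv hw hvw
    omega
  have hR : Rooted G D (nbrs G X) (nbrs G ({d, e} : Finset V)) 3 :=
    ⟨hDc, hG.exists_mem_nbrs hD (by omega) hXde card_le_two subset_union_right,
      hG.exists_mem_nbrs hD (by omega) (fun u hu w hw huw => (hXde u hu w hw huw).symm) (by omega)
        subset_union_left,
      fun v hv => ⟨Nat.le_of_succ_le (hdeg v hv), fun _ => hdeg v hv⟩,
      hG.meetsCutOffs hD (by omega) hXde⟩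
  have hD3 : 3 ≤ D.card := by
    obtain ⟨v, hv⟩ := hD.nonempty
    have := hdeg v hv
    have := rootedDeg_le (G := G) (D := D) (A := nbrs G X) (B := nbrs G ({d, e} : Finset V))
      (v := v)
    have := degOn_lt_card (G := G) hv
    omega
  exact hasConsecCycles_of_hasSpan (j := 2) (hR.hasSpan_two hD3) le_rfl (by omega) le_rfl
    hD.disjoint fun x hx y hy i hi => h.pathIn_side hx hy (by omega) (by omega) (by omega)

end Book

namespace ThreeConnMinDegFive

variable {a b c : V}

theorem rooted_of_triangle [Fintype V] [DecidableEq V] (hG : ThreeConnMinDegFive G)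
    (hbook : ∀ X d e, X.card = 2 → ¬ Book G X d e) (hab : G.Adj a b) (hac : G.Adj a c)
    (hbc : G.Adj b c) (hD : CutsOff G univ ({a, b, c} : Finset V) D) (hDc : ConnOn G D) :
    Rooted G D (nbrs G ({a} : Finset V)) (nbrs G ({b, c} : Finset V)) 4 := by
  have hcard : ({a, b, c} : Finset V).card = 3 :=
    card_eq_three.2 ⟨a, b, c, hab.ne, hac.ne, hbc.ne, rfl⟩
  have hPQ : ∀ u ∈ D, ∀ w ∈ ({a, b, c} : Finset V), G.Adj u w →
      w ∈ ({a} : Finset V) ∨ w ∈ ({b, c} : Finset V) := by grind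
  have hdeg : ∀ v ∈ D,
      5 ≤ rootedDeg G D (nbrs G ({a} : Finset V)) (nbrs G ({b, c} : Finset V)) v := by
    intro v hv
    have hva : a ≠ v := fun hav => hD.notMem (x := a) (by simp) (hav ▸ hv)
    have hdeg := hG.five_le_degOn_add hD hv
    have hle : degOn G {a, b, c} v ≤ degOn G {a} v + degOn G {b, c} v := degOn_le_add (hPQ v hv)
    have hnot : ¬ (G.Adj v b ∧ G.Adj v c) := fun ⟨hvb, hvc⟩ =>
      hbook {b, c} a v (card_pair hbc.ne) ⟨hva, by simpa using fun _ => hbc,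
        by simp [hab.symm, hac.symm], by simp [hvb.symm, hvc.symm]⟩
    classical
    have h1 := degOn_le_ite (G := G) (D := {a}) (v := v) (by simp)
    have h2 := degOn_le_ite (G := G) (D := {b, c}) (v := v) (by grind)
    unfold rootedDeg
    omega
  exact ⟨hDc, hG.exists_mem_nbrs hD hcard.ge hPQ card_le_two (by simp),
    hG.exists_mem_nbrs hD hcard.ge (fun u hu w hw huw => (hPQ u hu w hw huw).symm) (by simp)
      (by simp),
    fun v hv => ⟨Nat.le_of_succ_le (hdeg v hv), fun _ => hdeg v hv⟩,
    hG.meetsCutOffs hD hcard.ge hPQ⟩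

theorem hasConsecCycles_of_triangle (hG : ThreeConnMinDegFive G) (hab : G.Adj a b)
    (hac : G.Adj a c) (hbc : G.Adj b c) : HasConsecCycles G 5 := by
  classical
  have := hG.finite
  have := Fintype.ofFinite V
  by_cases! hbook : ∃ X d e, X.card = 2 ∧ Book G X d e
  · obtain ⟨X, d, e, hX, h⟩ := hbook
    exact h.hasConsecCycles_of_two hG hX
  have hcard : ({a, b, c} : Finset V).card = 3 :=
    card_eq_three.2 ⟨a, b, c, hab.ne, hac.ne, hbc.ne, rfl⟩
  have hclique : G.IsClique ({a, b, c} : Finset V) := by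
    simp [hab, hac, hbc, SimpleGraph.isClique_insert]
  obtain ⟨D, hD, hDc⟩ := hG.exists_cutsOff (W := {a, b, c}) (by omega)
  refine hasConsecCycles_of_hasSpan (j := 1)
    (hG.rooted_of_triangle hbook hab hac hbc hD hDc).hasSpan_three le_rfl le_rfl le_rfl hD.disjoint
    fun x hx y hy i hi => ?_
  obtain rfl := mem_singleton.1 hx
  refine pathIn_of_isClique hclique (by simp) (mem_insert_of_mem hy) ?_ (by omega) (by omega)
  rintro rfl
  grind [hab.ne, hac.ne]

end ThreeConnMinDegFive

end

/-! ### Triangle-free graphs -/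

section

variable {V : Type*} {G : SimpleGraph V} {c : ℕ → V} {l : ℕ}

/-- `c 0, …, c (l - 1)` is a cycle of `G`, in this cyclic order; the sequence `c` is extended
periodically, so that indices never have to be reduced. -/
structure CycleSeq (G : SimpleGraph V) (c : ℕ → V) (l : ℕ) : Prop where
  periodic : Function.Periodic c l
  injOn : Set.InjOn c (Set.Iio l)
  adj : ∀ i, G.Adj (c i) (c (i + 1))

/-- `G` has an odd cycle inside `E`, encoded as a path with an odd number of vertices and
adjacent ends. -/
def OddCycleIn (G : SimpleGraph V) (E : Finset V) : Prop :=
  ∃ u v n, PathIn G E u v n ∧ Odd n ∧ G.Adj v u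

theorem periodic_and_adj_of_closed_segment {f : ℕ → V} {i m : ℕ} (hm : 0 < m)
    (hf : f (i + m) = f i) (ha : ∀ x < m, G.Adj (f (i + x)) (f (i + x + 1))) :
    Function.Periodic (fun x => f (i + x % m)) m ∧
      ∀ x, G.Adj (f (i + x % m)) (f (i + (x + 1) % m)) := by
  refine ⟨fun x => by simp only [Nat.add_mod_right], fun x => ?_⟩
  have hlt := Nat.mod_lt x hm
  have hadj := ha _ hlt
  rw [← Nat.mod_add_mod]
  obtain h | h : x % m + 1 < m ∨ x % m + 1 = m := by omega
  · rwa [Nat.mod_eq_of_lt h]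
  · rw [h, Nat.mod_self, Nat.add_zero, ← hf]
    rwa [add_assoc, h] at hadj

theorem OddCycleIn.exists_cycleSeq {E : Finset V} (h : OddCycleIn G E) :
    ∃ c l, CycleSeq G c l ∧ Odd l ∧ ∀ i, c i ∈ E := by
  obtain ⟨u, v, n, ⟨p, hp, rfl, hE⟩, hn, ha⟩ := h
  have hlen : (p.concat ha).length = p.length + 1 := p.length_concat ha
  have hvert : ∀ i < p.length + 1, (p.concat ha).getVert i = p.getVert i := fun i hi => by
    rw [Walk.concat_eq_append, Walk.getVert_append]
    split_ifs
    · rfl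
    · obtain rfl : i = p.length := by omega
      simp
  obtain ⟨hper, hadj⟩ := periodic_and_adj_of_closed_segment (G := G) (f := (p.concat ha).getVert)
    (i := 0) (m := p.length + 1) (by omega)
    (by rw [zero_add, ← hlen, Walk.getVert_length, Walk.getVert_zero])
    fun x hx => by simpa using (p.concat ha).adj_getVert_succ (hlen ▸ hx)
  refine ⟨_, _, ⟨hper, fun i hi j hj hij => ?_, hadj⟩, hn, fun i => ?_⟩
  · rw [Set.mem_Iio] at hi hj
    simp only [zero_add, Nat.mod_eq_of_lt hi, Nat.mod_eq_of_lt hj, hvert _ hi, hvert _ hj] at hij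
    exact hp.getVert_injOn (Nat.le_of_lt_succ hi) (Nat.le_of_lt_succ hj) hij
  · simp only [zero_add, hvert _ (Nat.mod_lt i (Nat.succ_pos p.length))]
    exact hE _ (p.getVert_mem_support _)

theorem exists_cycleSeq_of_not_colorable (h : ¬ G.Colorable 2) : ∃ c l, CycleSeq G c l ∧ Odd l := by
  have hex : ∃ n, Odd n ∧ ∃ f : ℕ → V, Function.Periodic f n ∧ ∀ i, G.Adj (f i) (f (i + 1)) := by
    rw [two_colorable_iff_forall_loop_even] at h
    push Not at h
    obtain ⟨u, w, hw⟩ := h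
    rw [Nat.not_even_iff_odd] at hw
    obtain ⟨hper, hadj⟩ := periodic_and_adj_of_closed_segment (G := G) (f := w.getVert) (i := 0)
      hw.pos (by simp) fun x hx => by simpa using w.adj_getVert_succ hx
    exact ⟨_, hw, _, hper, hadj⟩
  classical
  obtain ⟨hodd, f, hper, ha⟩ := Nat.find_spec hex
  have hmin := fun m hm => Nat.find_min hex (m := m) hm
  generalize Nat.find hex = n at *
  -- A repeated vertex splits a closed walk into two, one of which is odd.
  have hne : ∀ i j, i < j → j < n → f i ≠ f j := by
    intro i j hij hj he
    rcases Nat.even_or_odd (j - i) with hpar | hpar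
    · obtain ⟨hper', hadj'⟩ := periodic_and_adj_of_closed_segment (G := G) (f := f) (i := j)
        (m := n - (j - i)) (by omega)
        (by rw [← he, show j + (n - (j - i)) = i + n by omega]; exact hper i) fun x _ => ha _
      exact hmin _ (by omega) ⟨Nat.Odd.sub_even (by omega) hodd hpar, _, hper', hadj'⟩
    · obtain ⟨hper', hadj'⟩ := periodic_and_adj_of_closed_segment (G := G) (f := f) (i := i)
        (m := j - i) (by omega) (by rw [he, Nat.add_sub_cancel' hij.le]) fun x _ => ha _
      exact hmin _ (by omega) ⟨hpar, _, hper', hadj'⟩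
  refine ⟨f, n, ⟨hper, fun i hi j hj hij => ?_, ha⟩, hodd⟩
  by_contra h
  rcases Nat.lt_or_gt_of_ne h with h | h
  · exact hne i j h hj hij
  · exact hne j i h hi hij.symm

namespace CycleSeq

theorem eq_iff_modEq (h : CycleSeq G c l) (hl : 0 < l) {i j : ℕ} :
    c i = c j ↔ i ≡ j [MOD l] := by
  rw [← h.periodic.map_mod_nat i, ← h.periodic.map_mod_nat j]
  exact h.injOn.eq_iff (Nat.mod_lt _ hl) (Nat.mod_lt _ hl)

theorem shift (h : CycleSeq G c l) (hl : 0 < l) (m : ℕ) : CycleSeq G (fun i => c (m + i)) l :=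
  ⟨h.periodic.const_add m, fun _ hi _ hj hij =>
    (((h.eq_iff_modEq hl).1 hij).add_left_cancel' m).eq_of_lt_of_lt hi hj,
    fun i => h.adj (m + i)⟩

theorem add_eq_add_iff (h : CycleSeq G c l) {i k m : ℕ} (hk : k < l) (hm : m < l) :
    c (i + k) = c (i + m) ↔ k = m :=
  (h.shift (by omega) i).injOn.eq_iff hk hm

theorem add_ne (h : CycleSeq G c l) {i k : ℕ} (hk : 0 < k) (hkl : k < l) : c (i + k) ≠ c i :=
  fun he => hk.ne' ((h.add_eq_add_iff hkl (by omega)).1 he)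

theorem exists_eq_add (h : CycleSeq G c l) (hl : 0 < l) (i j : ℕ) : ∃ k < l, c j = c (i + k) := by
  refine ⟨(j + (l - 1) * i) % l, Nat.mod_lt _ hl, (h.eq_iff_modEq hl).2 ?_⟩
  have hmod : i + (j + (l - 1) * i) % l ≡ j + i * l [MOD l] := by
    convert (Nat.mod_modEq (j + (l - 1) * i) l).add_left i using 1
    obtain ⟨l, rfl⟩ : ∃ m, l = m + 1 := ⟨l - 1, by omega⟩
    simp only [Nat.add_sub_cancel]
    ring
  exact (hmod.trans (by simp [Nat.ModEq])).symm

theorem pathIn_arc [DecidableEq V] (h : CycleSeq G c l) {k : ℕ} (hk : k < l) (a : ℕ) :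
    PathIn G ((Finset.Icc a (a + k)).image c) (c a) (c (a + k)) (k + 1) := by
  induction k generalizing a with
  | zero => exact .single (by simp)
  | succ k ih =>
    have harc := ih (by omega) (a + 1)
    rw [show a + 1 + k = a + (k + 1) by omega] at harc
    refine harc.cons_of_notMem (fun hmem => ?_) (Finset.mem_image_of_mem _ (by simp))
      (Finset.image_subset_image (Finset.Icc_subset_Icc (by omega) le_rfl)) (h.adj a)
    obtain ⟨j, hj, hj'⟩ := Finset.mem_image.1 hmem
    rw [Finset.mem_Icc] at hj
    obtain ⟨d, rfl⟩ := Nat.exists_eq_add_of_le (Nat.le_of_succ_le hj.1)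
    exact h.add_ne (by omega) (by omega) hj'

theorem notMem_image_Icc [DecidableEq V] (h : CycleSeq G c l) {a b i : ℕ} (hb : b < l) (hi : i < l)
    (hiab : i < a ∨ b < i) : c i ∉ (Finset.Icc a b).image c := by
  intro hmem
  obtain ⟨j, hj, hij⟩ := Finset.mem_image.1 hmem
  rw [Finset.mem_Icc] at hj
  have := h.injOn (x₁ := j) (x₂ := i) (Set.mem_Iio.2 (by omega)) hi hij
  omega

theorem adj_zero_pred (h : CycleSeq G c l) (hl : 0 < l) : G.Adj (c (l - 1)) (c 0) := by
  have hadj := h.adj (l - 1)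
  rwa [Nat.sub_add_cancel hl, h.periodic.eq] at hadj

theorem oddCycleIn (h : CycleSeq G c l) (hl : Odd l) {E : Finset V}
    (hE : ∀ i < l, c i ∈ E) : OddCycleIn G E := by
  classical
  have harc := h.pathIn_arc (k := l - 1) (Nat.sub_one_lt hl.pos.ne') 0
  rw [Nat.sub_add_cancel hl.pos, zero_add] at harc
  refine ⟨_, _, _, harc.mono ?_, hl, h.adj_zero_pred hl.pos⟩
  simp only [Finset.image_subset_iff, Finset.mem_Icc]
  exact fun i hi => hE i (by have := hl.pos; omega)

section Ear

variable [DecidableEq V] {P : Finset V} {u : V} {k m : ℕ}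

/-- Of the two arcs of an odd cycle between `c 0` and `c k`, one closes a path through `P` between
these vertices to an odd cycle, which misses the inner vertices of the other arc. -/
theorem exists_oddCycleIn_of_ear (h : CycleSeq G c l) (hl : Odd l) (hk : 2 ≤ k) (hkl : k + 2 ≤ l)
    (hP : PathIn G (insert (c 0) P) (c 0) u m) (hPc : ∀ i, c i ∉ P) (ha : G.Adj u (c k)) :
    ∃ E, OddCycleIn G E ∧ (∀ x ∈ E, x ∈ P ∨ ∃ i, x = c i) ∧
      ((∀ i, 0 < i → i < k → c i ∉ E) ∨ ∀ i, k < i → i < l → c i ∉ E) := by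
  have hdisj : ∀ {a b}, 1 ≤ a → b < l →
      Disjoint (insert (c 0) P) ((Finset.Icc a b).image c) := fun ha hb => by
    rw [Finset.disjoint_insert_left, Finset.disjoint_left]
    refine ⟨h.notMem_image_Icc hb (by omega) (.inl ha), fun x hx hx' => ?_⟩
    obtain ⟨j, -, rfl⟩ := Finset.mem_image.1 hx'
    exact hPc j hx
  have hnot : ∀ {a b i}, 0 < i → i < l → b < l → (i < a ∨ b < i) →
      c i ∉ insert (c 0) P ∪ (Finset.Icc a b).image c := fun hi hil hb hiab => by
    rw [Finset.mem_union, Finset.mem_insert, not_or, not_or]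
    exact ⟨⟨by simpa using h.add_ne (i := 0) hi hil, hPc _⟩, h.notMem_image_Icc hb hil hiab⟩
  have hsub : ∀ a b, ∀ x ∈ insert (c 0) P ∪ (Finset.Icc a b).image c, x ∈ P ∨ ∃ i, x = c i := by
    intro a b x hx
    simp only [Finset.mem_union, Finset.mem_insert, Finset.mem_image] at hx
    grind
  rcases Nat.even_or_odd (m + k) with hpar | hpar
  · have harc := h.pathIn_arc (k := l - 1 - k) (by omega) k
    rw [show k + (l - 1 - k) = l - 1 by omega] at harc
    exact ⟨_, ⟨_, _, _, hP.append harc ha (hdisj (by omega) (by omega)) Finset.subset_union_left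
      Finset.subset_union_right, by grind, h.adj_zero_pred hl.pos⟩, hsub _ _,
      .inl fun i hi hik => hnot hi (by omega) (by omega) (.inl hik)⟩
  · have harc := h.pathIn_arc (k := k - 1) (by omega) 1
    rw [show 1 + (k - 1) = k by omega, show k - 1 + 1 = k by omega] at harc
    exact ⟨_, ⟨_, _, _, hP.append harc.symm ha (hdisj le_rfl (by omega)) Finset.subset_union_left
      Finset.subset_union_right, hpar, (h.adj 0).symm⟩, hsub _ _,
      .inr fun i hi hil => hnot (by omega) hil (by omega) (.inr hi)⟩

end Ear

end CycleSeq

end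

section

open Finset

variable {V : Type*} {G : SimpleGraph V} {c : ℕ → V} {l : ℕ} {D : Finset V}

theorem ConnOn.union_of_forall_adj [DecidableEq V] {S : Finset V} (hD : ConnOn G D)
    (hS : ∀ s ∈ S, ∃ d ∈ D, G.Adj s d) : ConnOn G (D ∪ S) := by
  induction S using Finset.induction_on with
  | empty => simpa
  | insert a S _ ih =>
    obtain ⟨d, hd, had⟩ := hS a (mem_insert_self _ _)
    rw [union_insert]
    exact (ih fun s hs => hS s (mem_insert_of_mem hs)).insert (mem_union_left _ hd) had

namespace CycleSeq

theorem five_le (h : CycleSeq G c l) (hl : Odd l) (hG : G.CliqueFree 3) : 5 ≤ l := by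
  classical
  by_contra hl5
  obtain rfl | rfl : l = 1 ∨ l = 3 := by grind
  · exact (h.adj 0).ne h.periodic.eq.symm
  · exact hG _ (is3Clique_triple_iff.2 ⟨h.adj 0, h.periodic.eq ▸ (h.adj 2).symm, h.adj 1⟩)

theorem card_image_Icc [DecidableEq V] (h : CycleSeq G c l) {a b : ℕ} (hb : b < l) :
    ((Icc a b).image c).card = b + 1 - a := by
  rw [card_image_of_injOn (h.injOn.mono fun i hi => (mem_Icc.1 hi).2.trans_lt hb), Nat.card_Icc]

variable {F : Finset V}

theorem exists_add_adj (h : CycleSeq G c l) (hG : ThreeConnMinDegFive G) (hl : 3 ≤ l)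
    (hF : F.Nonempty) (hFc : ∀ i, c i ∉ F)
    (hadj : ∀ u ∈ F, ∀ w, w ∉ F → G.Adj u w → ∃ i, w = c i) (s a b : ℕ) :
    ∃ k < l, c (s + k) ≠ c a ∧ c (s + k) ≠ c b ∧ ∃ u ∈ F, G.Adj u (c (s + k)) := by
  classical
  have hcard : ({c a, c b} : Finset V).card < ((range l).image c).card := by
    rw [card_image_of_injOn (by simpa using h.injOn), card_range]
    exact card_le_two.trans_lt hl
  obtain ⟨x, hx, hxab⟩ := exists_mem_notMem_of_card_lt_card hcard
  obtain ⟨i, -, rfl⟩ := mem_image.1 hx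
  obtain ⟨u, hu, w, hw, hwab, huw⟩ := hG.exists_adj hF (by simp [hFc]) card_le_two (hFc i) hxab
  obtain ⟨j, rfl⟩ := hadj u hu w hw huw
  obtain ⟨k, hk, hjk⟩ := h.exists_eq_add (by omega) s j
  rw [hjk] at hwab huw
  exact ⟨k, hk, by grind, by grind, u, hu, huw⟩

theorem exists_adj_add_adj (h : CycleSeq G c l) (hG : ThreeConnMinDegFive G) (hl : 5 ≤ l)
    (hF : F.Nonempty) (hFc : ∀ i, c i ∉ F)
    (hadj : ∀ u ∈ F, ∀ w, w ∉ F → G.Adj u w → ∃ i, w = c i) :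
    ∃ i k, 2 ≤ k ∧ k + 2 ≤ l ∧ (∃ u ∈ F, G.Adj u (c i)) ∧ ∃ u ∈ F, G.Adj u (c (i + k)) := by
  have hatt := h.exists_add_adj hG (by omega) hF hFc hadj
  obtain ⟨i, -, -, -, hi⟩ := hatt 0 0 0
  rw [zero_add] at hi
  obtain ⟨k, hkl, hk0, hk1, hk⟩ := hatt i i (i + 1)
  obtain hk2 | rfl : k + 2 ≤ l ∨ l = k + 1 := by omega
  · exact ⟨i, k, by grind, hk2, hi, hk⟩
  obtain ⟨m, hml, hm0, hmk, hm⟩ := hatt i i (i + k)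
  by_cases hm1 : m = 1
  · refine ⟨i + 1, k - 1, by omega, by omega, hm1 ▸ hm, ?_⟩
    rwa [add_assoc, Nat.add_sub_cancel' (by omega)]
  · exact ⟨i, m, by grind, by grind, hi, hm⟩

end CycleSeq

/-- `c` is an odd cycle of the triangle-free graph `G` and `D` is a connected set disjoint from it,
where the pair is chosen to make `D` as large as possible. -/
structure ExtremalCycle (G : SimpleGraph V) (c : ℕ → V) (l : ℕ) (D : Finset V) : Prop where
  threeConn : ThreeConnMinDegFive G
  cliqueFree : G.CliqueFree 3
  cycleSeq : CycleSeq G c l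
  odd : Odd l
  conn : ConnOn G D
  notMem : ∀ i, c i ∉ D
  card_le : ∀ E D', OddCycleIn G E → ConnOn G D' → Disjoint D' E → D'.card ≤ D.card

namespace ExtremalCycle

variable {P : Finset V} {d u v w : V} {i k m p : ℕ}

theorem five_le (h : ExtremalCycle G c l D) : 5 ≤ l := h.cycleSeq.five_le h.odd h.cliqueFree

theorem shift (h : ExtremalCycle G c l D) (m : ℕ) :
    ExtremalCycle G (fun i => c (m + i)) l D where
  __ := h
  cycleSeq := h.cycleSeq.shift h.odd.pos m
  notMem _ := h.notMem _

theorem mem_of_adj {E : Finset V} (h : ExtremalCycle G c l D) (hE : OddCycleIn G E)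
    (hDE : Disjoint D E) (hvE : v ∉ E) (hd : d ∈ D) (hdv : G.Adj d v) : v ∈ D := by
  classical
  by_contra hv
  have hcard := h.card_le E (insert v D) hE (h.conn.insert hd hdv.symm)
    (disjoint_insert_left.2 ⟨hvE, hDE⟩)
  rw [card_insert_of_notMem hv] at hcard
  omega

theorem exists_eq_of_adj (h : ExtremalCycle G c l D) (hd : d ∈ D) (hv : v ∉ D)
    (hdv : G.Adj d v) : ∃ i, v = c i := by
  classical
  by_contra! hvc
  refine hv (h.mem_of_adj (E := (range l).image c) (h.cycleSeq.oddCycleIn h.odd fun i hi =>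
    mem_image_of_mem _ (mem_range.2 hi)) ?_ ?_ hd hdv)
  · exact (disjoint_left.2 (forall_mem_image.2 fun i _ => h.notMem i)).symm
  · simpa using fun i _ => (hvc i).symm

theorem false_of_ear [DecidableEq V] {a b : ℕ} (h : ExtremalCycle G c l D)
    (hP : PathIn G (insert (c i) P) (c i) u m) (hPc : ∀ j, c j ∉ P) (hPD : Disjoint D P)
    (hu : G.Adj u (c (i + k))) (ha : 0 < a) (hak : a < k) (haD : ∃ d ∈ D, G.Adj d (c (i + a)))
    (hkb : k < b) (hbl : b < l) (hbD : ∃ d ∈ D, G.Adj d (c (i + b))) : False := by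
  obtain ⟨E, hE, hEP, hmiss⟩ := (h.shift i).cycleSeq.exists_oddCycleIn_of_ear h.odd (k := k)
    (by omega) (by omega) hP (fun _ => hPc _) hu
  have hDE : Disjoint D E := disjoint_left.2 fun x hx hxE => by
    obtain hxP | ⟨j, rfl⟩ := hEP x hxE
    · exact disjoint_left.1 hPD hx hxP
    · exact h.notMem _ hx
  rcases hmiss with hmiss | hmiss
  · obtain ⟨d, hd, hda⟩ := haD
    exact h.notMem _ (h.mem_of_adj hE hDE (hmiss a ha hak) hd hda)
  · obtain ⟨d, hd, hdb⟩ := hbD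
    exact h.notMem _ (h.mem_of_adj hE hDE (hmiss b hkb hbl) hd hdb)

theorem exists_connOn_of_gap (h : ExtremalCycle G c l D) (hp : 2 ≤ p) (hpl : p < l)
    (hgap : ∀ i, 0 < i → i < p → ∀ d ∈ D, ¬ G.Adj d (c i)) :
    ∃ K, ConnOn G K ∧ Disjoint D K ∧ c 1 ∈ K ∧ (∀ j, c j ∈ K → ∃ i, 0 < i ∧ i < p ∧ c j = c i) ∧
      ∃ u ∈ K, ∃ k, p < k ∧ k < l ∧ G.Adj u (c k) := by
  classical
  have := h.threeConn.finite
  have := Fintype.ofFinite V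
  have hone : c 1 ∉ {x | x ∈ D ∨ ∃ i, p ≤ i ∧ i ≤ l ∧ x = c i} := by
    rintro (hx | ⟨i, hpi, hil, hx⟩)
    · exact h.notMem 1 hx
    · have := (h.cycleSeq.add_eq_add_iff (i := 1) (k := 0) (m := i - 1) h.odd.pos (by omega)).1
        (by rwa [Nat.add_sub_cancel' (by omega)])
      omega
  obtain ⟨K, hK, hKc, h1K⟩ := CutsOff.exists_connOn_of_mem (G := G) (mem_univ (c 1)) hone
  have hDK : Disjoint D K := disjoint_left.2 fun x hx => hK.notMem (.inl hx)
  have hcK : ∀ i, p ≤ i → i ≤ l → c i ∉ K := fun i hpi hil => hK.notMem (.inr ⟨i, hpi, hil, rfl⟩)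
  have h0K : c 0 ∉ K := h.cycleSeq.periodic.eq ▸ hcK l hpl.le le_rfl
  have hmem : ∀ j, c j ∈ K → ∃ i, 0 < i ∧ i < p ∧ c j = c i := fun j hj => by
    obtain ⟨i, hil, hji⟩ := h.cycleSeq.exists_eq_add h.odd.pos 0 j
    rw [zero_add] at hji
    rw [hji] at hj
    exact ⟨i, Nat.pos_of_ne_zero (by grind), by grind, hji⟩
  obtain ⟨d, hd⟩ := h.conn.nonempty
  obtain ⟨u, hu, w, hwK, hw, huw⟩ := h.threeConn.exists_adj (Q := {c 0, c p}) ⟨_, h1K⟩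
    (by simp [h0K, hcK p le_rfl hpl.le]) card_le_two (disjoint_left.1 hDK hd)
    (by grind [h.notMem 0, h.notMem p])
  obtain hwD | ⟨k, hpk, hkl, rfl⟩ := (hK.adj hu (mem_univ w) huw).resolve_left hwK
  · obtain ⟨j, rfl⟩ := h.exists_eq_of_adj hwD (disjoint_right.1 hDK hu) huw.symm
    obtain ⟨i, hi, hip, hji⟩ := hmem j hu
    exact (hgap i hi hip w hwD (hji ▸ huw.symm)).elim
  · have := h.cycleSeq.periodic.eq
    exact ⟨K, hKc, hDK, h1K, hmem, u, hu, k, by grind, by grind, huw⟩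

theorem false_of_gap (h : ExtremalCycle G c l D) (hp : 2 ≤ p) (hpl : p < l)
    (h0D : ∃ d ∈ D, G.Adj d (c 0)) (hpD : ∃ d ∈ D, G.Adj d (c p))
    (hgap : ∀ i, 0 < i → i < p → ∀ d ∈ D, ¬ G.Adj d (c i)) : False := by
  classical
  obtain ⟨K, hKc, hDK, h1K, hmem, u, hu, k, hpk, hkl, huk⟩ := h.exists_connOn_of_gap hp hpl hgap
  set I := (Icc 1 (p - 1)).image c
  obtain ⟨x, hx, -, b, rfl, m, hm⟩ := hKc.exists_pathIn_of_meets (P := I) (B := {u})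
    ⟨c 1, mem_image_of_mem c (mem_Icc.2 ⟨le_rfl, by omega⟩), h1K⟩ ⟨u, rfl, hu⟩
  obtain ⟨i, hi, rfl⟩ := mem_image.1 hx
  rw [mem_Icc] at hi
  refine h.false_of_ear (i := i) (k := k - i) (a := p - i) (b := l - i) hm (fun j hj => ?_)
    (hDK.mono_right sdiff_subset) ?_ (by omega) (by omega) ?_ (by omega) (by omega) ?_
  · rw [mem_sdiff] at hj
    obtain ⟨j', hj', hj'p, hjj'⟩ := hmem j hj.1
    exact hj.2 (hjj' ▸ mem_image_of_mem c (mem_Icc.2 ⟨hj', by omega⟩))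
  · rwa [Nat.add_sub_cancel' (by omega)]
  · rwa [Nat.add_sub_cancel' (by omega)]
  · rwa [Nat.add_sub_cancel' (by omega), h.cycleSeq.periodic.eq]

theorem exists_adj (h : ExtremalCycle G c l D) (t : ℕ) : ∃ d ∈ D, G.Adj d (c t) := by
  classical
  by_contra ht
  have hl := h.five_le
  have hatt := h.cycleSeq.exists_add_adj h.threeConn (by omega) h.conn.nonempty h.notMem
    (fun d hd w hw hdw => h.exists_eq_of_adj hd hw hdw) t
  obtain ⟨x, hxl, -, -, hx⟩ := hatt t t
  obtain ⟨y, hyl, hyx, -, hy⟩ := hatt (t + x) t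
  set S := {k ∈ range l | ∃ d ∈ D, G.Adj d (c (t + k))}
  have hxS : x ∈ S := mem_filter.2 ⟨mem_range.2 hxl, hx⟩
  have hyS : y ∈ S := mem_filter.2 ⟨mem_range.2 hyl, hy⟩
  obtain ⟨a, haS, hamin⟩ := S.exists_min_image id ⟨x, hxS⟩
  obtain ⟨b, hbS, hbmax⟩ := S.exists_max_image id ⟨x, hxS⟩
  have hab : a < b := by grind
  obtain ⟨-, haD⟩ := mem_filter.1 haS
  obtain ⟨hbl, hbD⟩ := mem_filter.1 hbS
  rw [mem_range] at hbl
  have ha : a ≠ 0 := by rintro rfl; exact ht haD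
  refine (h.shift (t + b)).false_of_gap (p := a + l - b) (by omega) (by omega) hbD ?_
    fun i hi hip d hd hdi => ?_
  · rwa [show t + b + (a + l - b) = t + a + l by omega, h.cycleSeq.periodic]
  · obtain hil | hil := lt_or_ge (b + i) l
    · have := hbmax (b + i) (mem_filter.2 ⟨mem_range.2 hil, d, hd, by rwa [← add_assoc]⟩)
      simp only [id] at this
      omega
    · have := hamin (b + i - l) (mem_filter.2 ⟨mem_range.2 (by omega), d, hd, by
        rwa [← h.cycleSeq.periodic, show t + (b + i - l) + l = t + b + i by omega]⟩)
      simp only [id] at this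
      omega

theorem not_adj_of_pathIn [DecidableEq V] (h : ExtremalCycle G c l D) (hk : 2 ≤ k)
    (hkl : k + 2 ≤ l) (hP : PathIn G (insert (c i) P) (c i) u m) (hPc : ∀ j, c j ∉ P)
    (hPD : Disjoint D P) : ¬ G.Adj u (c (i + k)) := fun hu =>
  h.false_of_ear hP hPc hPD hu one_pos (by omega) (h.exists_adj _) (Nat.lt_succ_self k) (by omega)
    (h.exists_adj _)

theorem mem_or_exists_eq (h : ExtremalCycle G c l D) (v : V) : v ∈ D ∨ ∃ i, v = c i := by
  classical
  have := h.threeConn.finite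
  have := Fintype.ofFinite V
  by_contra hv
  obtain ⟨K, hK, hKc, -⟩ := CutsOff.exists_connOn_of_mem (G := G)
    (Q := {x | x ∈ D ∨ ∃ i, x = c i}) (mem_univ v) hv
  have hcK : ∀ i, c i ∉ K := fun i => hK.notMem (.inr ⟨i, rfl⟩)
  have hDK : Disjoint D K := disjoint_left.2 fun x hx => hK.notMem (.inl hx)
  have hadj : ∀ u ∈ K, ∀ w, w ∉ K → G.Adj u w → ∃ i, w = c i := fun u hu w hw huw =>
    ((hK.adj hu (mem_univ w) huw).resolve_left hw).resolve_left fun hwD => by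
      obtain ⟨i, rfl⟩ := h.exists_eq_of_adj hwD (disjoint_right.1 hDK hu) huw.symm
      exact hcK i hu
  obtain ⟨i, k, hk, hkl, ⟨u, hu, hui⟩, w, hw, hwk⟩ :=
    h.cycleSeq.exists_adj_add_adj h.threeConn h.five_le hKc.nonempty hcK hadj
  obtain ⟨m, hm⟩ := hKc.exists_pathIn hu hw
  exact h.not_adj_of_pathIn hk hkl (hm.cons_of_notMem (hcK i) (mem_insert_self _ _)
    (subset_insert _ _) hui.symm) hcK hDK hwk

theorem three_le_degOn (h : ExtremalCycle G c l D) (i : ℕ) : 3 ≤ degOn G D (c i) := by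
  classical
  have := h.threeConn.finite
  have := Fintype.ofFinite V
  have hl := h.five_le
  have hfive := h.threeConn.five_le_degOn_univ (c i)
  have hle : degOn G univ (c i) ≤ degOn G D (c i) + degOn G {c (i + 1), c (i + (l - 1))} (c i) := by
    refine degOn_le_add fun w _ hiw => (h.mem_or_exists_eq w).imp_right ?_
    rintro ⟨j, rfl⟩
    obtain ⟨k, hkl, hjk⟩ := h.cycleSeq.exists_eq_add h.odd.pos i j
    rw [hjk] at hiw ⊢
    have hk0 : k ≠ 0 := by rintro rfl; exact hiw.ne rfl
    by_contra hk
    have hk1 : k ≠ 1 := by rintro rfl; simp at hk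
    have hk2 : k ≠ l - 1 := by rintro rfl; simp at hk
    exact h.not_adj_of_pathIn (P := ∅) (by omega) (by omega) (.single (by simp)) (by simp)
      (by simp) hiw
  have htwo : degOn G {c (i + 1), c (i + (l - 1))} (c i) ≤ 2 :=
    (degOn_le_card fun _ hw _ => hw).trans card_le_two
  omega

theorem le_add_two_of_odd [DecidableEq V] (h : ExtremalCycle G c l D) (hw : w ∈ D)
    (hDw : ConnOn G (D \ {w})) (hkl : k < l) (hk : Odd k) (hw0 : G.Adj w (c 0))
    (hwk : G.Adj w (c k)) : l ≤ k + 2 := by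
  classical
  have harc := h.cycleSeq.pathIn_arc hkl 0
  rw [zero_add] at harc
  have hnot : ∀ {a b}, w ∉ (Icc a b).image c := fun hw' => by
    obtain ⟨j, -, rfl⟩ := mem_image.1 hw'
    exact h.notMem j hw
  have hE : OddCycleIn G (insert w ((Icc 0 k).image c)) :=
    ⟨_, _, _, harc.cons_of_notMem hnot (mem_insert_self _ _) (subset_insert _ _) hw0, by grind,
      hwk.symm⟩
  have hdisj : ∀ {a b}, Disjoint (D \ {w}) ((Icc a b).image c) := fun {a b} =>
    (disjoint_left.2 (forall_mem_image.2 fun i _ hi => h.notMem i (sdiff_subset hi))).symm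
  have harcs : Disjoint ((Icc (k + 1) (l - 1)).image c) ((Icc 0 k).image c) :=
    disjoint_left.2 (forall_mem_image.2 fun i hi => by
      rw [mem_Icc] at hi
      exact h.cycleSeq.notMem_image_Icc hkl (by omega) (.inr hi.1))
  have hmax := h.card_le _ (D \ {w} ∪ (Icc (k + 1) (l - 1)).image c) hE
    (hDw.union_of_forall_adj fun s hs => ?_)
    (disjoint_union_left.2 ⟨disjoint_insert_right.2 ⟨by simp, hdisj⟩,
      disjoint_insert_right.2 ⟨hnot, harcs⟩⟩)
  · rw [card_union_of_disjoint hdisj, card_sdiff_of_subset (by simpa), card_singleton,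
      h.cycleSeq.card_image_Icc (by omega)] at hmax
    have := card_pos.2 ⟨w, hw⟩
    omega
  · obtain ⟨j, -, rfl⟩ := mem_image.1 hs
    obtain ⟨d, hd, hjd, hdw⟩ := exists_adj_ne_of_two_le_degOn
      (Nat.le_of_succ_le (h.three_le_degOn j)) w
    exact ⟨d, by simp [hd, hdw], hjd⟩

theorem eq_two_or_add_two_eq [DecidableEq V] (h : ExtremalCycle G c l D) (hw : w ∈ D)
    (hDw : ConnOn G (D \ {w})) (hk : 0 < k) (hkl : k < l) (hwi : G.Adj w (c i))
    (hwk : G.Adj w (c (i + k))) : k = 2 ∨ k + 2 = l := by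
  have hl := h.odd
  rcases Nat.even_or_odd k with hpar | hpar
  · have hper : c (i + k + (l - k)) = c i := by
      rw [show i + k + (l - k) = i + l by omega, h.cycleSeq.periodic]
    have := (h.shift (i + k)).le_add_two_of_odd hw hDw (k := l - k) (by omega)
      (Nat.Odd.sub_even hkl.le hl hpar) hwk (hper ▸ hwi)
    grind
  · have := (h.shift i).le_add_two_of_odd hw hDw hkl hpar hwi hwk
    grind

end ExtremalCycle

end

section

open Finset

variable {V : Type*} {G : SimpleGraph V} {c : ℕ → V} {l : ℕ} {D : Finset V}

namespace CycleSeq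

variable {W : Finset V} {i j k s : ℕ} {w : V}

theorem pathIn (h : CycleSeq G c l) (hW : ∀ i, c i ∈ W) (hk : k < l) (hj : c j = c (i + k)) :
    PathIn G W (c i) (c j) (k + 1) := by
  classical
  exact hj ▸ (h.pathIn_arc hk i).mono fun _ hx => by
    obtain ⟨m, -, rfl⟩ := mem_image.1 hx
    exact hW m

/-- The point opposite to `c (i + 1)` is at distances `s` and `s + 1` from `c i`, and `s - 1` and
`s + 2` from `c (i + 2)`, in the two directions around the cycle. -/
theorem pathIn_of_adj_of_adj [DecidableEq V] (h : CycleSeq G c (2 * s + 1)) (hs : 2 ≤ s)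
    (hW : ∀ i, c i ∈ W) (hw : w ∉ W) (hi : G.Adj w (c i)) (hi2 : G.Adj w (c (i + 2))) :
    ∀ j ≤ 3, PathIn G (insert w W) w (c (i + 1 + s)) (s + 1 + j) := by
  have hcons : ∀ {m n}, G.Adj w (c m) → PathIn G W (c m) (c (i + 1 + s)) n →
      PathIn G (insert w W) w (c (i + 1 + s)) (n + 1) := fun hm hn =>
    hn.cons_of_notMem hw (mem_insert_self _ _) (subset_insert _ _) hm
  intro j hj
  obtain rfl | rfl | rfl | rfl : j = 0 ∨ j = 1 ∨ j = 2 ∨ j = 3 := by omega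
  · have := hcons hi2 (h.pathIn hW (k := s - 1) (by omega) (by congr 1; omega))
    rwa [Nat.sub_add_cancel (by omega)] at this
  · exact hcons hi (h.pathIn hW (k := s) (by omega)
      (by rw [← h.periodic]; congr 1; omega)).symm
  · exact hcons hi (h.pathIn hW (k := s + 1) (by omega) (by congr 1; omega))
  · exact hcons hi2 (h.pathIn hW (k := s + 2) (by omega)
      (by rw [← h.periodic]; congr 1; omega)).symm

end CycleSeq

namespace ExtremalCycle

variable {w : V} {i j s : ℕ}

theorem exists_adj_add_two [DecidableEq V] (h : ExtremalCycle G c l D) (hw : w ∈ D)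
    (hDw : ConnOn G (D \ {w})) (hi : G.Adj w (c i)) (hj : G.Adj w (c j)) (hij : c j ≠ c i) :
    ∃ i, G.Adj w (c i) ∧ G.Adj w (c (i + 2)) := by
  obtain ⟨k, hkl, hjk⟩ := h.cycleSeq.exists_eq_add h.odd.pos i j
  rw [hjk] at hj hij
  have hk : 0 < k := Nat.pos_of_ne_zero (by rintro rfl; exact hij rfl)
  obtain rfl | hkl := h.eq_two_or_add_two_eq hw hDw hk hkl hi hj
  · exact ⟨i, hi, hj⟩
  · refine ⟨i + k, hj, ?_⟩
    rwa [add_assoc, hkl, h.cycleSeq.periodic]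

theorem eq_or_eq_of_adj [DecidableEq V] (h : ExtremalCycle G c l D) (hw : w ∈ D)
    (hDw : ConnOn G (D \ {w})) (hi : G.Adj w (c i)) (hi2 : G.Adj w (c (i + 2)))
    (hj : G.Adj w (c j)) : c j = c i ∨ c j = c (i + 2) := by
  obtain ⟨k, hkl, hjk⟩ := h.cycleSeq.exists_eq_add h.odd.pos i j
  rw [hjk] at hj ⊢
  obtain rfl | hk := Nat.eq_zero_or_pos k
  · exact .inl rfl
  obtain rfl | hkl' := h.eq_two_or_add_two_eq hw hDw hk hkl hi hj
  · exact .inr rfl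
  have hl := h.five_le
  have hodd := h.odd
  have := h.eq_two_or_add_two_eq hw hDw (k := k - 2) (by omega) (by omega) hi2
    (by rwa [show i + 2 + (k - 2) = i + k by omega])
  grind

theorem four_le_degOn_or [DecidableEq V] (h : ExtremalCycle G c l D) (hw : w ∈ D)
    (hDw : ConnOn G (D \ {w})) :
    4 ≤ degOn G D w ∨ 3 ≤ degOn G D w ∧ ∃ i, G.Adj w (c i) ∧ G.Adj w (c (i + 2)) := by
  have := h.threeConn.finite
  have := Fintype.ofFinite V
  have hfive := h.threeConn.five_le_degOn_univ w
  have hle : degOn G univ w ≤ degOn G D w + degOn G Dᶜ w :=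
    degOn_le_add fun v _ _ => by simp [em]
  have hex : ∀ v ∈ Dᶜ, ∃ i, v = c i := fun v hv =>
    (h.mem_or_exists_eq v).resolve_left (mem_compl.1 hv)
  rw [or_iff_not_imp_left]
  intro hlt
  have htwo : 2 ≤ degOn G Dᶜ w := by omega
  obtain ⟨x, hx, hwx⟩ := exists_adj_of_one_le_degOn (Nat.le_of_succ_le htwo)
  obtain ⟨y, hy, hwy, hyx⟩ := exists_adj_ne_of_two_le_degOn htwo x
  obtain ⟨i, rfl⟩ := hex x hx
  obtain ⟨j, rfl⟩ := hex y hy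
  obtain ⟨i, hi, hi2⟩ := h.exists_adj_add_two hw hDw hwx hwy hyx
  have hcard : degOn G Dᶜ w ≤ ({c i, c (i + 2)} : Finset V).card := degOn_le_card fun v hv hwv => by
    obtain ⟨j, rfl⟩ := hex v hv
    simpa using h.eq_or_eq_of_adj hw hDw hi hi2 hwv
  have := hcard.trans card_le_two
  exact ⟨by omega, i, hi, hi2⟩

theorem three_le_degOn_of_connOn [DecidableEq V] (h : ExtremalCycle G c l D) (hw : w ∈ D)
    (hDw : ConnOn G (D \ {w})) : 3 ≤ degOn G D w :=
  (h.four_le_degOn_or hw hDw).elim Nat.le_of_succ_le And.left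

theorem hasConsecCycles_of_hasSpan_one [DecidableEq V] (h : ExtremalCycle G c (2 * s + 1) D)
    (hw : w ∈ D) (hi : G.Adj w (c i)) (hi2 : G.Adj w (c (i + 2)))
    (hs : HasSpan (pathOrders G (D \ {w}) (nbrs G {w}) (nbrs G {c (i + 1 + s)})) 1) :
    HasConsecCycles G 5 := by
  have := h.threeConn.finite
  have := Fintype.ofFinite V
  have hl := h.five_le
  refine hasConsecCycles_of_hasSpan (j := 3) (c := s + 1) (W := insert w Dᶜ) hs (by omega)
    (by omega) (by omega) ?_ ?_
  · exact disjoint_insert_right.2 ⟨by simp, disjoint_compl_right.mono_left sdiff_subset⟩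
  · rintro _ rfl _ rfl
    exact h.cycleSeq.pathIn_of_adj_of_adj (by omega) (fun i => mem_compl.2 (h.notMem i))
      (by simpa) hi hi2

theorem hasConsecCycles_of_hasSpan_three (h : ExtremalCycle G c (2 * s + 1) D)
    (hs : HasSpan (pathOrders G D (nbrs G {c i}) (nbrs G {c (i + s)})) 3) :
    HasConsecCycles G 5 := by
  classical
  have := h.threeConn.finite
  have := Fintype.ofFinite V
  have hl := h.five_le
  have hW : ∀ i, c i ∈ Dᶜ := fun i => mem_compl.2 (h.notMem i)
  refine hasConsecCycles_of_hasSpan (j := 1) (c := s + 1) (W := Dᶜ) hs le_rfl le_rfl (by omega)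
    disjoint_compl_right ?_
  rintro _ rfl _ rfl j hj
  obtain rfl | rfl : j = 0 ∨ j = 1 := by omega
  · exact h.cycleSeq.pathIn hW (by omega) rfl
  · exact (h.cycleSeq.pathIn hW (k := s + 1) (by omega)
      (by rw [← h.cycleSeq.periodic]; congr 1; omega)).symm

end ExtremalCycle

end

section

open Finset

variable {V : Type*} [DecidableEq V] {G : SimpleGraph V} {D F : Finset V} {A T : Set V}
  {b d e v w x : V}

/-- `D` is connected and remains so when any one vertex is removed. -/
structure NonseparableOn (G : SimpleGraph V) (D : Finset V) : Prop where
  conn : ConnOn G D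
  conn_sdiff : ∀ e ∈ D, ConnOn G (D \ {e})

namespace NonseparableOn

theorem meetsCutOffs (h : NonseparableOn G D) (hA : ∀ e, ∃ a ∈ A, a ∈ D ∧ a ≠ e) :
    MeetsCutOffs G D A := by
  intro e F hF
  obtain ⟨a, haA, haD, hae⟩ := hA e
  refine ⟨a, by_contra fun haF => ?_, haA⟩
  have heD := (hF.exists_adj_cutVertex h.conn haD haF).1
  obtain ⟨u, hu⟩ := hF.nonempty
  obtain ⟨x, -, y, hy, hxF, hyF, hxy⟩ := (h.conn_sdiff e heD).exists_adj (S := F) (u := u) (v := a)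
    (by grind [hF.subset hu, hF.notMem (Set.mem_singleton e)]) (by grind) hu haF
  exact (hF.adj hxF (sdiff_subset hy) hxy).elim hyF fun hye =>
    (mem_sdiff.1 hy).2 (mem_singleton.2 hye)

theorem meetsCutOffs_nbrs (h : NonseparableOn G D) (hw : w ∈ D) :
    MeetsCutOffs G (D \ {w}) (nbrs G {w}) := by
  intro e F hF
  obtain ⟨u, hu⟩ := hF.nonempty
  have heF : e ∉ F := hF.notMem rfl
  have hwF : w ∉ F := fun hwF => by simpa using hF.subset hwF
  have hconn : ∃ E ⊆ D, ConnOn G E ∧ u ∈ E ∧ w ∈ E ∧ (e ∈ E → e = w) := by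
    have huD := sdiff_subset (hF.subset hu)
    by_cases he : e ∈ D ∧ e ≠ w
    · exact ⟨D \ {e}, sdiff_subset, h.conn_sdiff e he.1, by grind, by grind, by simp⟩
    · exact ⟨D, Subset.rfl, h.conn, huD, hw, by grind⟩
  obtain ⟨E, hED, hE, huE, hwE, heE⟩ := hconn
  obtain ⟨x, -, y, hy, hxF, hyF, hxy⟩ := hE.exists_adj (S := F) huE hwE hu hwF
  obtain rfl : y = w := by
    by_contra hyw
    have := hF.adj hxF (mem_sdiff.2 ⟨hED hy, by simpa⟩) hxy
    grind
  exact ⟨x, hxF, mem_nbrs_singleton.2 hxy⟩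

theorem rootedExcept (h : NonseparableOn G D) (hw : w ∈ D) (hdw : 2 ≤ degOn G D w)
    (hdeg : ∀ v ∈ D, v ≠ b → 3 ≤ degOn G D v) (hT : ∃ t ∈ T, t ∈ D \ {w}) :
    RootedExcept G (D \ {w}) (nbrs G {w}) T b := by
  obtain ⟨x, hx, hwx⟩ := exists_adj_of_one_le_degOn (Nat.le_of_succ_le hdw)
  obtain ⟨y, hy, hwy, hyx⟩ := exists_adj_ne_of_two_le_degOn hdw x
  have hmem : ∀ z ∈ D, G.Adj w z → z ∈ D \ {w} := fun z hz hwz => by simp [hz, hwz.ne']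
  have hnbrs : ∀ {z}, G.Adj w z → z ∈ nbrs G {w} := fun hwz => mem_nbrs_singleton.2 hwz.symm
  refine ⟨h.conn_sdiff w hw, ⟨x, hnbrs hwx, hmem x hx hwx⟩, hT, ⟨x, hmem x hx hwx, y,
    hmem y hy hwy, hyx.symm, .inl (hnbrs hwx), .inl (hnbrs hwy)⟩, fun v hv hvb => ?_,
    fun e F hF _ => (h.meetsCutOffs_nbrs hw).mono Set.subset_union_left e F hF⟩
  classical
  have hthree := hdeg v (sdiff_subset hv) hvb
  have hadd : degOn G D v ≤ degOn G (D \ {w}) v + degOn G {w} v :=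
    degOn_le_add fun z hz _ => by grind
  have hone : degOn G {w} v ≤ if v ∈ nbrs G {w} then 1 else 0 := by
    simpa using degOn_le_ite (G := G) (D := {w}) (v := v) (by simp)
  unfold rootedDeg
  split_ifs at * <;> omega

end NonseparableOn

theorem exists_cutsOff_of_not_connOn (hx : x ∈ D) (hxe : x ≠ e) (hD : ¬ ConnOn G (D \ {e})) :
    ∃ F, CutsOff G D {e} F ∧ x ∉ F := by
  contrapose! hD
  refine ConnOn.of_forall_closed (e := x) (by simp [hx, hxe]) fun S _ hxS hS => ?_
  by_contra hDS
  refine absurd (hD ((D \ {e}) \ S) ⟨sdiff_nonempty.2 hDS, fun u hu => ?_⟩) (by simp [hxS])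
  obtain ⟨huD, huS⟩ := mem_sdiff.1 hu
  refine ⟨sdiff_subset huD, by simpa using (mem_sdiff.1 huD).2, fun v hv huv => ?_⟩
  by_contra hvF
  exact huS (hS v (by grind) u huD huv.symm)

theorem exists_minimal_cutsOff (he : e ∈ D) (hx : x ∈ D) (hxe : x ≠ e)
    (hD : ¬ ConnOn G (D \ {e})) : ∃ b ∈ D, ∃ F, CutsOff G D {b} F ∧ (∃ x ∈ D, x ≠ b ∧ x ∉ F) ∧
      ∀ e ∈ D, ∀ K ⊆ F, CutsOff G D {e} K → (∃ x ∈ D, x ≠ e ∧ x ∉ K) → F = K := by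
  obtain ⟨F₀, hF₀, hxF₀⟩ := exists_cutsOff_of_not_connOn hx hxe hD
  obtain ⟨F, ⟨b, hb, hF, hxF⟩, hmin⟩ := exists_minimal_of_wellFoundedLT
    (fun F => ∃ b ∈ D, CutsOff G D {b} F ∧ ∃ x ∈ D, x ≠ b ∧ x ∉ F)
    ⟨F₀, e, he, hF₀, x, hx, hxe, hxF₀⟩
  exact ⟨b, hb, F, hF, hxF, fun e he K hKF hK hxK =>
    (hmin ⟨e, he, hK, hxK⟩ hKF).antisymm hKF⟩

/-- `insert b F` is an end block of `D` with cut vertex `b`: the only vertex of `D` outside `F` with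
a neighbour in `F` is `b`, and `F` contains no cut vertex of `D`. -/
structure EndBlock (G : SimpleGraph V) (D : Finset V) (b : V) (F : Finset V) : Prop where
  mem : b ∈ D
  cutsOff : CutsOff G D {b} F
  exists_notMem : ∃ x ∈ D, x ≠ b ∧ x ∉ F
  conn_sdiff : ∀ v ∈ F, ConnOn G (D \ {v})
  nonseparable : NonseparableOn G (insert b F)

theorem ConnOn.exists_endBlock (hD : ConnOn G D) (he : e ∈ D) (hx : x ∈ D) (hxe : x ≠ e)
    (hDe : ¬ ConnOn G (D \ {e})) : ∃ b F, EndBlock G D b F := by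
  obtain ⟨b, hb, F, hF, ⟨x, hx, hxb, hxF⟩, hmin⟩ := exists_minimal_cutsOff he hx hxe hDe
  have hbF : b ∉ F := hF.notMem rfl
  have hFc : ConnOn G F := by
    obtain ⟨u, hu⟩ := hF.nonempty
    obtain ⟨K, hKF, hK, hKc, -⟩ := hF.exists_connOn_subset hu
    rwa [hmin b hb K hKF hK ⟨x, hx, hxb, fun hxK => hxF (hKF hxK)⟩]
  have hno : ∀ v ∈ F, ∀ K ⊆ F, ¬ CutsOff G D {v} K := fun v hv K hKF hK =>
    hK.notMem rfl (hmin v (hF.subset hv) K hKF hK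
      ⟨b, hb, by grind, fun hbK => hbF (hKF hbK)⟩ ▸ hv)
  obtain ⟨-, u, hu, hub⟩ := hF.exists_adj_cutVertex hD hx hxF
  refine ⟨b, F, hb, hF, ⟨x, hx, hxb, hxF⟩, fun v hv => ?_, hFc.insert hu hub.symm, fun e he => ?_⟩
  · by_contra hDv
    obtain ⟨K, hK, hbK⟩ := exists_cutsOff_of_not_connOn hb (by grind) hDv
    refine hno v hv K (fun y hy => ?_) hK
    by_contra hyF
    obtain ⟨p, -, q, hq, hpK, hqK, hpq⟩ := (hF.connOn_sdiff hD hb).exists_adj (S := K)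
      (mem_sdiff.2 ⟨hK.subset hy, hyF⟩) (mem_sdiff.2 ⟨hb, hbF⟩) hy hbK
    have := hK.adj hpK (sdiff_subset hq) hpq
    grind
  · obtain rfl | heF := mem_insert.1 he
    · rwa [sdiff_singleton_eq_erase, erase_insert hbF]
    by_contra hBe
    obtain ⟨K, hK, hbK⟩ := exists_cutsOff_of_not_connOn (mem_insert_self b F) (by grind) hBe
    have hKF : K ⊆ F := fun y hy => (mem_insert.1 (hK.subset hy)).resolve_left (by grind)
    refine hno e heF K hKF ⟨hK.nonempty, fun u hu => ⟨hF.subset (hKF hu), (hK.2 u hu).2.1,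
      fun v hv huv => hK.adj hu ?_ huv⟩⟩
    have := hF.adj (hKF hu) hv huv
    grind

namespace EndBlock

theorem notMem (h : EndBlock G D b F) : b ∉ F := h.cutsOff.notMem rfl

theorem insert_subset (h : EndBlock G D b F) : insert b F ⊆ D :=
  Finset.insert_subset h.mem h.cutsOff.subset

theorem insert_sdiff (h : EndBlock G D b F) : insert b F \ {b} = F := by
  rw [sdiff_singleton_eq_erase, erase_insert h.notMem]

theorem connOn (h : EndBlock G D b F) : ConnOn G F :=
  h.insert_sdiff ▸ h.nonseparable.conn_sdiff b (mem_insert_self b F)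

theorem mem_insert_of_adj (h : EndBlock G D b F) (hv : v ∈ F) (hx : x ∈ D) (hvx : G.Adj v x) :
    x ∈ insert b F :=
  mem_insert.2 (h.cutsOff.adj hv hx hvx).symm

theorem cutsOff_sdiff (h : EndBlock G D b F) : CutsOff G D {b} (D \ insert b F) := by
  obtain ⟨x, hx, hxb, hxF⟩ := h.exists_notMem
  refine ⟨⟨x, by grind⟩, fun u hu => ⟨sdiff_subset hu, by grind, fun v hv huv => ?_⟩⟩
  have := fun hvF => h.mem_insert_of_adj hvF (sdiff_subset hu) huv.symm
  grind

theorem hasSpan_three (h : EndBlock G D b F) (hD : ConnOn G D) (hG : G.CliqueFree 3)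
    (hdeg : ∀ v ∈ F, 4 ≤ degOn G D v) (hA : ∃ a ∈ A, a ∈ F) (hT : ∃ t ∈ T, t ∈ D \ F) :
    HasSpan (pathOrders G D A T) 3 := by
  classical
  have hr : Rooted G F A (nbrs G {b}) 4 := by
    obtain ⟨-, a, haF, hab⟩ := h.cutsOff.exists_adj_cutVertex hD h.mem h.notMem
    have hmeets := h.nonseparable.meetsCutOffs_nbrs (mem_insert_self b F)
    rw [h.insert_sdiff] at hmeets
    refine ⟨h.connOn, hA, ⟨a, mem_nbrs_singleton.2 hab, haF⟩, .of_cliqueFree hG fun v hv => ?_,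
      hmeets.mono Set.subset_union_right⟩
    have hfour := hdeg v hv
    have hle := h.cutsOff.degOn_le hv
    unfold rootedDeg
    split_ifs at * <;> omega
  exact hasSpan_pathOrders_of_connOn hr.hasSpan_three (h.cutsOff.connOn_sdiff hD h.mem)
    (mem_sdiff.2 ⟨h.mem, h.notMem⟩) hT disjoint_sdiff h.cutsOff.subset sdiff_subset

theorem hasSpan_one (h : EndBlock G D b F) (hD : ConnOn G D) (hdeg : ∀ v ∈ F, 3 ≤ degOn G D v)
    (hw : w ∈ F) (hd : d ∈ D) (hdw : d ≠ w) (hdT : d ∈ T) :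
    HasSpan (pathOrders G (D \ {w}) (nbrs G {w}) T) 1 := by
  have hdegB : ∀ v ∈ F, 3 ≤ degOn G (insert b F) v := fun v hv =>
    (hdeg v hv).trans (degOn_mono fun x hx => h.mem_insert_of_adj hv hx)
  have hbw : b ≠ w := fun hbw => h.notMem (hbw ▸ hw)
  have hspan : ∀ {S : Set V}, (∃ s ∈ S, s ∈ insert b F \ {w}) →
      HasSpan (pathOrders G (insert b F \ {w}) (nbrs G {w}) S) 1 := fun hS =>
    (h.nonseparable.rootedExcept (b := b) (mem_insert_of_mem hw) (Nat.le_of_succ_le (hdegB w hw))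
      (fun v hv hvb => hdegB v (mem_of_mem_insert_of_ne hv hvb)) hS).hasSpan_one
  have hBD : insert b F \ {w} ⊆ D \ {w} := sdiff_subset_sdiff h.insert_subset Subset.rfl
  by_cases hdB : d ∈ insert b F
  · exact (hspan ⟨d, hdT, by simp [hdw, mem_insert.1 hdB]⟩).mono (pathOrders_mono hBD)
  obtain ⟨K, hK, hKc, hdK⟩ := CutsOff.exists_connOn_of_mem (G := G) hd (mt mem_coe.1 hdB)
  have hBK : Disjoint (insert b F) K := disjoint_left.2 fun x hx => hK.notMem (mem_coe.2 hx)
  obtain ⟨u, hu, v, -, hvB, huv⟩ :=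
    hK.exists_adj hD h.mem (hK.notMem (mem_coe.2 (mem_insert_self b F)))
  obtain rfl : v = b := (mem_insert.1 (mem_coe.1 hvB)).resolve_right fun hvF =>
    disjoint_right.1 hBK hu (h.mem_insert_of_adj hvF (hK.subset hu) huv.symm)
  refine hasSpan_pathOrders_of_connOn
    (hspan ⟨v, mem_nbrs_singleton.2 huv.symm, by simp [hbw]⟩) hKc hu ⟨d, hdT, hdK⟩
    (hBK.mono_left sdiff_subset) hBD fun x hx => mem_sdiff.2 ⟨hK.subset hx, ?_⟩
  rintro hxw
  exact disjoint_right.1 hBK hx (mem_insert_of_mem (mem_singleton.1 hxw ▸ hw))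

end EndBlock

end

section

open Finset

variable {V : Type*} {G : SimpleGraph V} {c : ℕ → V} {l : ℕ} {D E F : Finset V} {b : V}

theorem exists_antipodal {P R : ℕ → Prop} {s : ℕ} (hP : Function.Periodic P (2 * s + 1))
    (hPR : ∀ i, P i ∨ R i) (hP₀ : ∃ i, P i) (hR₀ : ∃ i, R i) :
    ∃ i, P i ∧ R (i + s) ∨ R i ∧ P (i + s) := by
  by_contra! hno
  obtain ⟨i, hi⟩ := hP₀
  obtain ⟨j, hj⟩ := hR₀
  have hstep : ∀ k, P (i + k * s) := fun k => by
    induction k with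
    | zero => simpa
    | succ k ih =>
      rw [add_one_mul, ← add_assoc]
      exact (hPR _).resolve_right ((hno _).1 ih)
  have hmul : ∀ n m, P (n + m * (2 * s + 1)) ↔ P n := fun n m => (hP.nat_mul m n).to_iff
  -- As `2 * s ≡ -1` modulo `2 * s + 1`, steps of length `s` lead from `i` to `j + s`.
  have hij := hstep (1 + 2 * (i + 2 * s * j))
  rw [← hmul _ j, show i + (1 + 2 * (i + 2 * s * j)) * s + j * (2 * s + 1) =
    j + s + (i + 2 * s * j) * (2 * s + 1) by ring, hmul] at hij
  exact (hno j).2 hj hij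

namespace ExtremalCycle

theorem hasConsecCycles_of_nonseparable [DecidableEq V] (h : ExtremalCycle G c l D)
    (hD : NonseparableOn G D) : HasConsecCycles G 5 := by
  obtain ⟨s, rfl⟩ := h.odd
  have hnbrs : ∀ i e, ∃ a ∈ nbrs G {c i}, a ∈ D ∧ a ≠ e := fun i e => by
    obtain ⟨a, ha, hca, hae⟩ :=
      exists_adj_ne_of_two_le_degOn (Nat.le_of_succ_le (h.three_le_degOn i)) e
    exact ⟨a, mem_nbrs_singleton.2 hca.symm, ha, hae⟩
  by_cases! hfour : ∀ v ∈ D, 4 ≤ degOn G D v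
  · have hr : Rooted G D (nbrs G {c 0}) (nbrs G {c (0 + s)}) 4 := by
      obtain ⟨a, ha, haD, -⟩ := hnbrs 0 (c 0)
      obtain ⟨b, hb, hbD, -⟩ := hnbrs (0 + s) (c 0)
      refine ⟨h.conn, ⟨a, ha, haD⟩, ⟨b, hb, hbD⟩, .of_cliqueFree h.cliqueFree fun v hv => ?_,
        (hD.meetsCutOffs (hnbrs 0)).mono Set.subset_union_left⟩
      have := hfour v hv
      unfold rootedDeg
      omega
    exact h.hasConsecCycles_of_hasSpan_three hr.hasSpan_three
  · obtain ⟨w, hw, hlt⟩ := hfour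
    obtain ⟨hw3, i, hi, hi2⟩ :=
      (h.four_le_degOn_or hw (hD.conn_sdiff w hw)).resolve_left hlt.not_ge
    obtain ⟨d, hd, hdD, hdw⟩ := hnbrs (i + 1 + s) w
    exact h.hasConsecCycles_of_hasSpan_one hw hi hi2 (hD.rootedExcept (b := w) hw
      (Nat.le_of_succ_le hw3) (fun v hv _ => h.three_le_degOn_of_connOn hv (hD.conn_sdiff v hv))
      ⟨d, hd, by simp [hdD, hdw]⟩).hasSpan_one

theorem exists_adj_of_cutsOff (h : ExtremalCycle G c l D) (hb : b ∈ D) (hE : CutsOff G D {b} E) :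
    ∃ i, ∃ u ∈ E, G.Adj u (c i) := by
  obtain ⟨u, hu, v, hvE, hvb, huv⟩ := h.threeConn.exists_adj (Q := {b}) (v := c 0) hE.nonempty
    (by simpa using hE.notMem rfl) (by simp) (fun h0 => h.notMem 0 (hE.subset h0))
    (fun h0 => h.notMem 0 (mem_singleton.1 h0 ▸ hb))
  obtain ⟨i, rfl⟩ := h.exists_eq_of_adj (hE.subset hu)
    (fun hvD => (hE.adj hu hvD huv).elim hvE (hvb <| mem_singleton.2 ·)) huv
  exact ⟨i, u, hu, huv⟩

theorem hasConsecCycles_of_endBlock_of_four_le [DecidableEq V] (h : ExtremalCycle G c l D)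
    (he : EndBlock G D b F) (hdeg : ∀ v ∈ F, 4 ≤ degOn G D v) : HasConsecCycles G 5 := by
  obtain ⟨s, rfl⟩ := h.odd
  have hper := h.cycleSeq.periodic.comp fun v => ∃ d ∈ F, G.Adj d v
  have hsplit : ∀ i, (∃ d ∈ F, G.Adj d (c i)) ∨ ∃ d ∈ D \ F, G.Adj d (c i) := fun i => by
    obtain ⟨d, hd, hdi⟩ := h.exists_adj i
    by_cases hdF : d ∈ F
    · exact .inl ⟨d, hdF, hdi⟩
    · exact .inr ⟨d, mem_sdiff.2 ⟨hd, hdF⟩, hdi⟩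
  have hcompl : ∃ i, ∃ d ∈ D \ F, G.Adj d (c i) := by
    obtain ⟨i, d, hd, hdi⟩ := h.exists_adj_of_cutsOff he.mem he.cutsOff_sdiff
    exact ⟨i, d, sdiff_subset_sdiff Subset.rfl (subset_insert b F) hd, hdi⟩
  obtain ⟨i, hi⟩ := exists_antipodal hper hsplit (h.exists_adj_of_cutsOff he.mem he.cutsOff) hcompl
  have hspan : ∀ {j k}, (∃ d ∈ F, G.Adj d (c j)) → (∃ d ∈ D \ F, G.Adj d (c k)) →
      HasSpan (pathOrders G D (nbrs G {c j}) (nbrs G {c k})) 3 := fun ⟨d, hd, hdj⟩ ⟨x, hx, hxk⟩ =>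
    he.hasSpan_three h.conn h.cliqueFree hdeg ⟨d, mem_nbrs_singleton.2 hdj, hd⟩
      ⟨x, mem_nbrs_singleton.2 hxk, hx⟩
  obtain ⟨hF, hDF⟩ | ⟨hDF, hF⟩ := hi
  · exact h.hasConsecCycles_of_hasSpan_three (hspan hF hDF)
  · exact h.hasConsecCycles_of_hasSpan_three (pathOrders_comm ▸ hspan hF hDF)

theorem hasConsecCycles_of_endBlock [DecidableEq V] (h : ExtremalCycle G c l D)
    (he : EndBlock G D b F) : HasConsecCycles G 5 := by
  by_cases! hfour : ∀ v ∈ F, 4 ≤ degOn G D v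
  · exact h.hasConsecCycles_of_endBlock_of_four_le he hfour
  obtain ⟨w, hw, hlt⟩ := hfour
  obtain ⟨s, rfl⟩ := h.odd
  obtain ⟨-, i, hi, hi2⟩ :=
    (h.four_le_degOn_or (he.cutsOff.subset hw) (he.conn_sdiff w hw)).resolve_left hlt.not_ge
  obtain ⟨d, hd, hcd, hdw⟩ :=
    exists_adj_ne_of_two_le_degOn (Nat.le_of_succ_le (h.three_le_degOn (i + 1 + s))) w
  exact h.hasConsecCycles_of_hasSpan_one (he.cutsOff.subset hw) hi hi2 (he.hasSpan_one h.conn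
    (fun v hv => h.three_le_degOn_of_connOn (he.cutsOff.subset hv) (he.conn_sdiff v hv))
    hw hd hdw (mem_nbrs_singleton.2 hcd.symm))

protected theorem hasConsecCycles (h : ExtremalCycle G c l D) : HasConsecCycles G 5 := by
  classical
  by_cases! hcut : ∃ e ∈ D, ¬ ConnOn G (D \ {e})
  · obtain ⟨e, he, hDe⟩ := hcut
    obtain ⟨x, hx, -, hxe⟩ :=
      exists_adj_ne_of_two_le_degOn (Nat.le_of_succ_le (h.three_le_degOn 0)) e
    obtain ⟨b, F, hF⟩ := h.conn.exists_endBlock he hx hxe hDe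
    exact h.hasConsecCycles_of_endBlock hF
  · exact h.hasConsecCycles_of_nonseparable ⟨h.conn, hcut⟩

end ExtremalCycle

theorem CycleSeq.exists_oddCycleIn_notMem (h : CycleSeq G c l) (hl : Odd l) (h5 : 5 ≤ l)
    (hG : ThreeConnMinDegFive G) : ∃ E, OddCycleIn G E ∧ ∃ z, z ∉ E := by
  classical
  have := hG.finite
  have := Fintype.ofFinite V
  by_cases! hz : ∃ z, z ∉ (range l).image c
  · exact ⟨_, h.oddCycleIn hl fun i hi => mem_image_of_mem c (mem_range.2 hi), hz⟩
  have hchord : ∃ k, 2 ≤ k ∧ k + 2 ≤ l ∧ G.Adj (c 0) (c k) := by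
    by_contra! hno
    have hle : degOn G univ (c 0) ≤ ({c 1, c (l - 1)} : Finset V).card :=
      degOn_le_card fun v _ hv => by
        obtain ⟨k, hk, rfl⟩ := mem_image.1 (hz v)
        rw [mem_range] at hk
        have hk0 : k ≠ 0 := by rintro rfl; exact hv.ne rfl
        obtain rfl | rfl : k = 1 ∨ k = l - 1 := by
          by_contra! hk1
          exact hno k (by omega) (by omega) hv
        all_goals simp
    have := hG.five_le_degOn_univ (c 0)
    have := hle.trans card_le_two
    omega
  obtain ⟨k, hk, hkl, hadj⟩ := hchord
  obtain ⟨E, hE, -, hlt | hgt⟩ :=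
    h.exists_oddCycleIn_of_ear hl (P := ∅) hk hkl (.single (by simp)) (by simp) hadj
  · exact ⟨E, hE, c 1, hlt 1 one_pos hk⟩
  · exact ⟨E, hE, c (k + 1), hgt (k + 1) k.lt_succ_self hkl⟩

theorem exists_extremalCycle (hG : ThreeConnMinDegFive G) (hfree : G.CliqueFree 3)
    (hnb : ¬ G.Colorable 2) : ∃ c l D, ExtremalCycle G c l D := by
  have := hG.finite
  obtain ⟨c, l, hc, hl⟩ := exists_cycleSeq_of_not_colorable hnb
  obtain ⟨E, hE, z, hz⟩ := hc.exists_oddCycleIn_notMem hl (hc.five_le hl hfree) hG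
  obtain ⟨D, ⟨hD, E, hE, hDE⟩, hmax⟩ := Set.exists_max_image
    {D : Finset V | ConnOn G D ∧ ∃ E, OddCycleIn G E ∧ Disjoint D E} card (Set.toFinite _)
    ⟨{z}, .singleton z, E, hE, by simpa⟩
  obtain ⟨c, l, hc, hl, hcE⟩ := hE.exists_cycleSeq
  exact ⟨c, l, D, hG, hfree, hc, hl, hD, fun i hi => disjoint_left.1 hDE hi (hcE i),
    fun E' D' hE' hD' hDE' => hmax D' ⟨hD', E', hE', hDE'⟩⟩

theorem ThreeConnMinDegFive.hasConsecCycles (hG : ThreeConnMinDegFive G) (hnb : ¬ G.Colorable 2) :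
    HasConsecCycles G 5 := by
  classical
  by_cases hfree : G.CliqueFree 3
  · obtain ⟨c, l, D, h⟩ := exists_extremalCycle hG hfree hnb
    exact h.hasConsecCycles
  · simp only [CliqueFree, not_forall, not_not] at hfree
    obtain ⟨X, hX⟩ := hfree
    obtain ⟨x, y, z, hxy, hxz, hyz, -⟩ := is3Clique_iff.1 hX
    exact hasConsecCycles_of_triangle hG hxy hxz hyz

end

end ConsecCycles

/-- Every 3-connected nonbipartite graph of minimum degree at least 5 and order at
least 7 contains 5 cycles of consecutive lengths. -/
theorem consec_cycles_5 {V : Type*} [Fintype V] (G : SimpleGraph V)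
    (h3 : KConnected G 3) (hnb : ¬ G.Colorable 2)
    (hdeg : ∀ v, 5 ≤ (G.neighborSet v).ncard) (hcard : 7 ≤ Nat.card V) :
    HasConsecCycles G 5 :=
  ConsecCycles.ThreeConnMinDegFive.hasConsecCycles ⟨h3, hdeg, hcard⟩ hnb
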